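/- arXiv:2007.14944 — 4 statements merged into one kernel-verified Lean document; each statement's English description precedes it below -/
import Mathlib

section
/- If G is a finite bipartite simple graph, then the list chromatic index of G equals its chromatic index: χ'_ℓ(G) = χ'(G). -/
/-- An `L`-edge-colouring of a simple graph `G`. -/
def IsLEdgeColouring {V : Type} (G : SimpleGraph V) (L : Sym2 V → Finset ℕ)
    (γ : Sym2 V → ℕ) : Prop :=
  (∀ e ∈ G.edgeSet, γ e ∈ L e) ∧
  ∀ e ∈ G.edgeSet, ∀ f ∈ G.edgeSet, e ≠ f → (∃ v, v ∈ e ∧ v ∈ f) → γ e ≠ γ f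

/-- The chromatic index `χ'(G)`: the least `k` such that `G` has a proper edge
colouring using `k` colours. -/
noncomputable def chromIndex {V : Type} (G : SimpleGraph V) : ℕ :=
  sInf {k : ℕ | ∃ γ : Sym2 V → ℕ, (∀ e ∈ G.edgeSet, γ e < k) ∧
    ∀ e ∈ G.edgeSet, ∀ f ∈ G.edgeSet, e ≠ f → (∃ v, v ∈ e ∧ v ∈ f) → γ e ≠ γ f}

/-- The list chromatic index `χ'_ℓ(G)`: the least `k` such that `G` has an
`L`-edge-colouring whenever all lists have size at least `k`. -/
noncomputable def listChromIndex {V : Type} (G : SimpleGraph V) : ℕ :=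
  sInf {k : ℕ | ∀ L : Sym2 V → Finset ℕ,
    (∀ e ∈ G.edgeSet, k ≤ (L e).card) → ∃ γ, IsLEdgeColouring G L γ}

/-!
In a bipartite graph with parts `A` and `B`, a proper edge colouring `c` with `k` colours orients
the line graph: around vertices in `A` arcs go to larger colours, around vertices in `B` to smaller
ones. Each edge `e` has fewer than `k` out-neighbours, since their colours are distinct and differ
from `c e`. Arcs of each kind form a strict partial order, and a union of two strict partial orders
has a kernel on every finite set of vertices. Hence edges can be coloured greedily from lists of
size `k`: give a colour `i` to a kernel of the set of edges whose lists contain `i`, and remove `i`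
from the other lists; an edge which loses `i` also loses an out-neighbour. Infinite graphs follow by
compactness.
-/

open Finset

section Kernel

variable {α : Type*} {r : α → α → Prop} {S T K : Finset α}

/-- A kernel of the digraph with arc relation `r` on the finite vertex set `T`: an independent set
such that every other vertex of `T` has an arc into it. -/
structure IsKernel (r : α → α → Prop) (T K : Finset α) : Prop where
  subset : K ⊆ T
  independent : ∀ x ∈ K, ∀ y ∈ K, ¬r x y
  absorbing : ∀ x ∈ T, x ∉ K → ∃ y ∈ K, r x y

theorem exists_rel_maximal_of_rel [IsStrictOrder α r] {x y : α} (hy : y ∈ T) (hxy : r x y) :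
    ∃ z ∈ T, (∀ w ∈ T, ¬r z w) ∧ r x z := by
  let := partialOrderOfSO r
  obtain ⟨z, hyz, hz⟩ := T.exists_le_maximal hy
  exact ⟨z, hz.prop, fun w hw ↦ hz.not_gt hw, lt_of_lt_of_le (b := y) hxy hyz⟩

-- A finite case of a theorem of Sands, Sauer and Woodrow. The `r₁`-maximal elements form a kernel
-- unless one of them, `x`, has an `r₂`-arc `y → x`; then every kernel of `T \ {y}` absorbs `y`: if
-- it does not contain `x`, it absorbs `x` along `r₂`, and `r₂` is transitive.
theorem exists_isKernel_or (r₁ r₂ : α → α → Prop) [IsStrictOrder α r₁] [IsStrictOrder α r₂]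
    (T : Finset α) : ∃ K, IsKernel (fun x y ↦ r₁ x y ∨ r₂ x y) T K := by
  classical
  induction T using Finset.strongInduction with
  | H T ih =>
    by_cases h : ∃ x ∈ T, ∃ y ∈ T, (∀ z ∈ T, ¬r₁ x z) ∧ r₂ y x
    · obtain ⟨x, hx, y, hy, hmax, hyx⟩ := h
      have hxy : x ≠ y := fun hxy ↦ irrefl y (hxy ▸ hyx)
      obtain ⟨K, hKT, hindep, habs⟩ := ih (T.erase y) (erase_ssubset hy)
      refine ⟨K, hKT.trans (erase_subset _ _), hindep, fun z hz hzK ↦ ?_⟩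
      obtain rfl | hzy := eq_or_ne z y
      · by_cases hxK : x ∈ K
        · exact ⟨x, hxK, .inr hyx⟩
        · obtain ⟨w, hw, hxw⟩ := habs x (mem_erase.2 ⟨hxy, hx⟩) hxK
          have hxw₂ : r₂ x w := hxw.resolve_left (hmax w (mem_of_mem_erase (hKT hw)))
          exact ⟨w, hw, .inr (_root_.trans hyx hxw₂)⟩
      · exact habs z (mem_erase.2 ⟨hzy, hz⟩) hzK
    · push Not at h
      refine ⟨{x ∈ T | ∀ z ∈ T, ¬r₁ x z}, filter_subset _ _, ?_, ?_⟩
      · simp only [mem_filter]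
        rintro x ⟨hx, hxmax⟩ y ⟨hy, hymax⟩ (hxy | hxy)
        · exact hxmax y hy hxy
        · exact h y hy x hx hymax hxy
      · intro x hx hxK
        simp only [mem_filter, hx, true_and, not_forall, not_not] at hxK
        obtain ⟨y, hy, hxy⟩ := hxK
        obtain ⟨z, hz, hzmax, hxz⟩ := exists_rel_maximal_of_rel hy hxy
        exact ⟨z, mem_filter.2 ⟨hz, hzmax⟩, .inl hxz⟩

variable {β : Type*}

theorem IsKernel.card_filter_sdiff_lt_card_erase [DecidableEq α] [DecidableEq β] [DecidableRel r]
    {L : α → Finset β} {c : β} {x : α} (hK : IsKernel r {y ∈ S | c ∈ L y} K)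
    (hx : x ∈ S \ K) (hdeg : #{y ∈ S | r x y} < #(L x)) :
    #{y ∈ S \ K | r x y} < #((L x).erase c) := by
  rw [mem_sdiff] at hx
  have hsub : {y ∈ S \ K | r x y} ⊆ {y ∈ S | r x y} := filter_subset_filter _ sdiff_subset
  by_cases hc : c ∈ L x
  · obtain ⟨y, hy, hxy⟩ := hK.absorbing x (mem_filter.2 ⟨hx.1, hc⟩) hx.2
    have hyS : y ∈ S := (mem_filter.1 (hK.subset hy)).1
    have hlt : #{y ∈ S \ K | r x y} < #{y ∈ S | r x y} :=
      card_lt_card <| (ssubset_iff_of_subset hsub).2 ⟨y, by simp [hyS, hxy], by simp [hy]⟩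
    rw [card_erase_of_mem hc]
    lia
  · rw [erase_eq_of_notMem hc]
    exact (card_le_card hsub).trans_lt hdeg

theorem exists_list_coloring_finset_of_exists_isKernel [Nonempty β] [DecidableRel r] (S : Finset α)
    (L : α → Finset β) (hker : ∀ T ⊆ S, ∃ K, IsKernel r T K)
    (hdeg : ∀ x ∈ S, #{y ∈ S | r x y} < #(L x)) :
    ∃ γ : α → β, (∀ x ∈ S, γ x ∈ L x) ∧ ∀ x ∈ S, ∀ y ∈ S, r x y → γ x ≠ γ y := by
  classical
  induction S using Finset.strongInduction generalizing L with
  | H S ih =>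
    obtain rfl | ⟨x₀, hx₀⟩ := S.eq_empty_or_nonempty
    · simp
    obtain ⟨c, hc⟩ : (L x₀).Nonempty := card_pos.1 (Nat.zero_lt_of_lt (hdeg x₀ hx₀))
    obtain ⟨K, hK⟩ := hker {x ∈ S | c ∈ L x} (filter_subset _ _)
    have hKS : K ⊆ S := hK.subset.trans (filter_subset _ _)
    have hKne : K.Nonempty := by
      by_cases h : x₀ ∈ K
      · exact ⟨x₀, h⟩
      · obtain ⟨y, hy, -⟩ := hK.absorbing x₀ (mem_filter.2 ⟨hx₀, hc⟩) h
        exact ⟨y, hy⟩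
    obtain ⟨γ, hγL, hγ⟩ := ih (S \ K) (sdiff_ssubset hKS hKne) (fun x ↦ (L x).erase c)
      (fun T hT ↦ hker T (hT.trans sdiff_subset))
      fun x hx ↦ hK.card_filter_sdiff_lt_card_erase hx (hdeg x (mem_sdiff.1 hx).1)
    have hγc : ∀ x ∈ S, x ∉ K → γ x ≠ c ∧ γ x ∈ L x := fun x hx hxK ↦
      mem_erase.1 (hγL x (mem_sdiff.2 ⟨hx, hxK⟩))
    refine ⟨fun x ↦ if x ∈ K then c else γ x, fun x hx ↦ ?_, fun x hx y hy hxy ↦ ?_⟩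
    · dsimp only
      split_ifs with hxK
      · exact (mem_filter.1 (hK.subset hxK)).2
      · exact (hγc x hx hxK).2
    · dsimp only
      split_ifs with hxK hyK hyK
      · exact absurd hxy (hK.independent x hxK y hyK)
      · exact (hγc y hy hyK).1.symm
      · exact (hγc x hx hxK).1
      · exact hγ x (mem_sdiff.2 ⟨hx, hxK⟩) y (mem_sdiff.2 ⟨hy, hyK⟩) hxy

theorem exists_list_coloring_of_exists_isKernel (L : α → Finset β) (hker : ∀ T, ∃ K, IsKernel r T K)
    (hdeg : ∀ x, {y | r x y}.encard < #(L x)) :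
    ∃ γ : α → β, (∀ x, γ x ∈ L x) ∧ ∀ x y, r x y → γ x ≠ γ y := by
  classical
  obtain hβ | hβ := isEmpty_or_nonempty β
  · have : IsEmpty α := ⟨fun x ↦ by simpa [(L x).eq_empty_of_isEmpty] using hdeg x⟩
    exact ⟨isEmptyElim, isEmptyElim, isEmptyElim⟩
  have hfin : ∀ s : Finset α, ∃ γ : (x : s) → L x, ∀ x y : s, r x y → (γ x : β) ≠ γ y := by
    intro s
    have hdegs : ∀ x ∈ s, #{y ∈ s | r x y} < #(L x) := fun x _ ↦ by
      rw [← Nat.cast_lt (α := ℕ∞), ← Set.encard_coe_eq_coe_finsetCard]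
      exact (Set.encard_le_encard fun y hy ↦ (mem_filter.1 hy).2).trans_lt (hdeg x)
    obtain ⟨γ, hγL, hγ⟩ :=
      exists_list_coloring_finset_of_exists_isKernel s L (fun T _ ↦ hker T) hdegs
    exact ⟨fun x ↦ ⟨γ x, hγL x x.2⟩, fun x y ↦ hγ x x.2 y y.2⟩
  choose g hg using hfin
  obtain ⟨χ, hχ⟩ := Finset.rado_selection_subtype (β := fun x ↦ L x) g
  refine ⟨fun x ↦ χ x, fun x ↦ (χ x).2, fun x y hxy ↦ ?_⟩
  obtain ⟨t, hst, ht⟩ := hχ {x, y}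
  have hχt : ∀ z (hz : z ∈ ({x, y} : Finset α)), (χ z : β) = g t ⟨z, hst hz⟩ := fun z hz ↦
    congrArg Subtype.val (ht ⟨z, hz⟩)
  dsimp only
  rw [hχt x (by simp), hχt y (by simp)]
  exact hg t _ _ hxy

end Kernel

section BipartiteMultigraph

variable {E A B β κ : Type*}

/-- A proper edge colouring of the bipartite multigraph with edge set `E` in which the edge `e`
joins `a e : A` to `b e : B`. -/
def IsProperEdgeColoring (a : E → A) (b : E → B) (γ : E → β) : Prop :=
  ∀ ⦃e f⦄, e ≠ f → a e = a f ∨ b e = b f → γ e ≠ γ f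

/-- The order by colour among the edges with a common endpoint under `a`; edges with different
endpoints are incomparable. -/
def FiberLT [LT κ] (a : E → A) (c : E → κ) (e f : E) : Prop :=
  a e = a f ∧ c e < c f

instance [Preorder κ] (a : E → A) (c : E → κ) : IsStrictOrder E (FiberLT a c) where
  irrefl _ h := lt_irrefl _ h.2
  trans _ _ _ h h' := ⟨h.1.trans h'.1, h.2.trans h'.2⟩

/-- Galvin's orientation of the line graph of a bipartite multigraph with edge colouring `c`: arcs
go from smaller to larger colours around vertices in `A`, and from larger to smaller colours around
vertices in `B`. -/
def GalvinArc [LT κ] (a : E → A) (b : E → B) (c : E → κ) (e f : E) : Prop :=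
  FiberLT a c e f ∨ FiberLT b c f e

variable {a : E → A} {b : E → B}

theorem IsProperEdgeColoring.injOn_galvinArc [Preorder κ] {c : E → κ}
    (hc : IsProperEdgeColoring a b c) (e : E) : Set.InjOn c {f | GalvinArc a b c e f} := by
  intro f hf g hg hfg
  by_contra hne
  suffices a f = a g ∨ b f = b g from hc hne this hfg
  rcases hf with ⟨haf, hef⟩ | ⟨hbf, hfe⟩ <;> rcases hg with ⟨hag, heg⟩ | ⟨hbg, hge⟩
  · exact .inl (haf.symm.trans hag)
  · exact absurd (hfg ▸ hef) hge.not_gt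
  · exact absurd (hfg ▸ hfe) heg.not_gt
  · exact .inr (hbf.trans hbg.symm)

theorem IsProperEdgeColoring.encard_galvinArc_lt {k : ℕ} {c : E → Fin k}
    (hc : IsProperEdgeColoring a b c) (e : E) : {f | GalvinArc a b c e f}.encard < k := by
  have hce : c e ∉ c '' {f | GalvinArc a b c e f} := by
    rintro ⟨f, ⟨-, h⟩ | ⟨-, h⟩, hfe⟩
    exacts [h.ne' hfe, h.ne hfe]
  calc {f | GalvinArc a b c e f}.encard
      = (c '' {f | GalvinArc a b c e f}).encard := (hc.injOn_galvinArc e).encard_image.symm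
    _ < (Set.univ : Set (Fin k)).encard :=
        (Set.toFinite _).encard_lt_encard (Set.ssubset_univ_iff.2 fun h ↦ hce (h ▸ trivial))
    _ = k := by simp

theorem IsProperEdgeColoring.exists_list_coloring {k : ℕ} {c : E → Fin k}
    (hc : IsProperEdgeColoring a b c) (L : E → Finset β) (hL : ∀ e, k ≤ #(L e)) :
    ∃ γ : E → β, (∀ e, γ e ∈ L e) ∧ IsProperEdgeColoring a b γ := by
  obtain ⟨γ, hγL, hγ⟩ := exists_list_coloring_of_exists_isKernel (r := GalvinArc a b c) L
    (exists_isKernel_or (FiberLT a c) (Function.swap (FiberLT b c)))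
    fun e ↦ (hc.encard_galvinArc_lt e).trans_le (Nat.cast_le.2 (hL e))
  refine ⟨γ, hγL, fun e f hne hef ↦ ?_⟩
  have harc : GalvinArc a b c e f ∨ GalvinArc a b c f e := by
    have hcne : c e ≠ c f := hc hne hef
    grind [GalvinArc, FiberLT]
  exact harc.elim (hγ e f) fun h ↦ (hγ f e h).symm

end BipartiteMultigraph

section SimpleGraph

variable {V : Type*} {G : SimpleGraph V}

theorem existsUnique_mem_edge_color_eq (C : G.Coloring (Fin 2)) {e : Sym2 V}
    (he : e ∈ G.edgeSet) (i : Fin 2) : ∃! v, v ∈ e ∧ C v = i := by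
  induction e using Sym2.ind with
  | _ u v =>
    have huv : C u ≠ C v := C.valid he
    by_cases hu : C u = i
    · exact ⟨u, by grind⟩
    · exact ⟨v, by grind⟩

theorem exists_endpoints_of_colorable_two (hG : G.Colorable 2) :
    ∃ a b : G.edgeSet → V, ∀ e f : G.edgeSet,
      (∃ v, v ∈ e.1 ∧ v ∈ f.1) ↔ a e = a f ∨ b e = b f := by
  obtain ⟨C⟩ := hG
  choose p hp hpuniq using fun (i : Fin 2) (e : G.edgeSet) ↦
    existsUnique_mem_edge_color_eq C e.2 i
  refine ⟨p 0, p 1, fun e f ↦ ?_⟩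
  rw [← Fin.exists_fin_two (p := fun i ↦ p i e = p i f)]
  constructor
  · rintro ⟨v, hve, hvf⟩
    exact ⟨C v, (hpuniq _ e v ⟨hve, rfl⟩).symm.trans (hpuniq _ f v ⟨hvf, rfl⟩)⟩
  · rintro ⟨i, hi⟩
    exact ⟨p i e, (hp i e).1, hi ▸ (hp i f).1⟩

end SimpleGraph

theorem exists_isLEdgeColouring_of_colorable_two {V : Type} {G : SimpleGraph V}
    (hG : G.Colorable 2) {k : ℕ} {c : Sym2 V → ℕ} (hck : ∀ e ∈ G.edgeSet, c e < k)
    (hc : ∀ e ∈ G.edgeSet, ∀ f ∈ G.edgeSet, e ≠ f → (∃ v, v ∈ e ∧ v ∈ f) → c e ≠ c f)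
    {L : Sym2 V → Finset ℕ} (hL : ∀ e ∈ G.edgeSet, k ≤ #(L e)) :
    ∃ γ, IsLEdgeColouring G L γ := by
  obtain ⟨a, b, hab⟩ := exists_endpoints_of_colorable_two hG
  have hc' : IsProperEdgeColoring a b fun e ↦ (⟨c e, hck e e.2⟩ : Fin k) := fun e f hne hef h ↦
    hc e e.2 f f.2 (Subtype.coe_ne_coe.2 hne) ((hab e f).2 hef) (Fin.mk.inj h)
  obtain ⟨γ, hγL, hγ⟩ := hc'.exists_list_coloring (fun e ↦ L e) fun e ↦ hL e e.2
  have hext : ∀ e (he : e ∈ G.edgeSet), Function.extend Subtype.val γ 0 e = γ ⟨e, he⟩ :=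
    fun e he ↦ Subtype.val_injective.extend_apply γ 0 ⟨e, he⟩
  refine ⟨Function.extend Subtype.val γ 0, fun e he ↦ ?_, fun e he f hf hne hef ↦ ?_⟩
  · rw [hext e he]
    exact hγL ⟨e, he⟩
  · rw [hext e he, hext f hf]
    exact hγ (Subtype.coe_ne_coe.1 hne) ((hab ⟨e, he⟩ ⟨f, hf⟩).1 hef)

/-- If no finite number of colours suffices, then both sides are `sInf ∅ = 0`. -/
theorem stmt_16_general (V : Type) (G : SimpleGraph V) (hG : G.Colorable 2) :
    listChromIndex G = chromIndex G := by
  unfold listChromIndex chromIndex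
  congr 1
  ext k
  constructor
  · intro hlist
    obtain ⟨γ, hγ, hproper⟩ := hlist (fun _ ↦ range k) fun _ _ ↦ (card_range k).ge
    exact ⟨γ, fun e he ↦ mem_range.1 (hγ e he), hproper⟩
  · rintro ⟨c, hck, hc⟩ L hL
    exact exists_isLEdgeColouring_of_colorable_two hG hck hc hL

theorem stmt_16 :
    ∀ (V : Type) [Fintype V] (G : SimpleGraph V),
      -- G is bipartite
      G.Colorable 2 →
      listChromIndex G = chromIndex G :=
  fun V _ ↦ stmt_16_general V
end

section
/- For every ε > 0 there exists Δ₀ such that: if G is a finite simple graph with maximum degree Δ(G) ≥ Δ₀, then the list chromatic index of G satisfies χ'_ℓ(G) ≤ (1+ε)·Δ(G). -/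
/-!
Kahn's theorem, by the semi-random method. The invariant is that all lists have size `l` and that
every colour degree, the number of edges at a vertex `v` having a colour `c` in their list, is at
most `r * l` with `r < 1`. In one round every pair of an edge and a colour in its list is activated
with probability `θ / l`. An edge is coloured `c` if it is active in `c` and no adjacent edge is,
and it loses `c` from its list if an adjacent edge is active in `c`. Dummy edges make the loss
probabilities independent of the edge and the colour. Lists then shrink by a factor of about
`1 - 2 * θ * r` but colour degrees by one of about `1 - θ - θ * r`, as edges also get coloured;
hence `r` drops by a constant. All quantities are concentrated, and since the events at distant
vertices are independent, the Lovász local lemma makes them simultaneously close to their means.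
After boundedly many rounds `r ≤ 1 / 32`, and then uniformly random colours from the lists succeed
with positive probability, again by the local lemma.
-/

open Finset Filter MeasureTheory ProbabilityTheory Function
open scoped unitInterval

namespace ListEdgeColouring

section LocalLemma

variable {Ω J : Type*} [MeasurableSpace Ω] {μ : Measure Ω} {A : J → Set Ω} {Γ : J → Finset J}
  {p : ℝ} {d : ℕ}

/-- `Γ` is a dependency graph for the events `A`: each `A j` is independent of the event that all
`A k`, `k ∈ T`, fail, whenever `T` is a finite set of indices outside `Γ j`. -/
def IsDependencyGraph (μ : Measure Ω) (A : J → Set Ω) (Γ : J → Finset J) : Prop :=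
  ∀ (j : J) (T : Finset J), Disjoint T (Γ j) → IndepSet (A j) (⋂ k ∈ T, (A k)ᶜ) μ

theorem measureReal_le_sum_inter_add_measureReal_inter_compl [IsFiniteMeasure μ] (B : Set Ω)
    (T : Finset J) :
    μ.real B ≤ ∑ k ∈ T, μ.real (A k ∩ B) + μ.real (B ∩ ⋂ k ∈ T, (A k)ᶜ) := by
  have hcover : B ⊆ (⋃ k ∈ T, A k ∩ B) ∪ (B ∩ ⋂ k ∈ T, (A k)ᶜ) := by
    intro ω hω
    by_cases h : ∃ k ∈ T, ω ∈ A k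
    · obtain ⟨k, hk, hωk⟩ := h
      exact Or.inl (Set.mem_biUnion hk ⟨hωk, hω⟩)
    · push Not at h
      exact Or.inr ⟨hω, Set.mem_iInter₂.2 h⟩
  calc μ.real B ≤ μ.real (⋃ k ∈ T, A k ∩ B) + μ.real (B ∩ ⋂ k ∈ T, (A k)ᶜ) :=
        (measureReal_mono hcover).trans (measureReal_union_le _ _)
    _ ≤ _ := by gcongr; exact measureReal_biUnion_finset_le _ _

theorem IsDependencyGraph.measureReal_inter_le [IsFiniteMeasure μ]
    (hΓ : IsDependencyGraph μ A Γ) (hp : ∀ j, μ.real (A j) ≤ p) (hd : ∀ j, #(Γ j) ≤ d)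
    (hpd : 4 * p * d ≤ 1) (T : Finset J) (j : J) :
    μ.real (A j ∩ ⋂ k ∈ T, (A k)ᶜ) ≤ 2 * p * μ.real (⋂ k ∈ T, (A k)ᶜ) := by
  classical
  induction T using Finset.strongInduction generalizing j with
  | H T ih =>
  have hp0 : 0 ≤ p := measureReal_nonneg.trans (hp j)
  set N := T ∩ Γ j
  set B : Set Ω := ⋂ k ∈ T \ Γ j, (A k)ᶜ
  have hTB : ⋂ k ∈ T, (A k)ᶜ = B ∩ ⋂ k ∈ N, (A k)ᶜ := by
    conv_lhs => rw [← sdiff_union_inter T (Γ j), set_biInter_inter]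
  have hnear : ∑ k ∈ N, μ.real (A k ∩ B) ≤ 1 / 2 * μ.real B := by
    calc ∑ k ∈ N, μ.real (A k ∩ B) ≤ ∑ k ∈ N, 2 * p * μ.real B := by
          refine sum_le_sum fun k hk ↦ ih _ ?_ k
          exact ssubset_iff_of_subset sdiff_subset |>.2 ⟨k, by simp_all [N]⟩
      _ = #N * (2 * p * μ.real B) := by rw [sum_const, nsmul_eq_mul]
      _ ≤ d * (2 * p * μ.real B) := by
          gcongr
          exact (card_le_card inter_subset_right).trans (hd j)
      _ = 1 / 2 * (4 * p * d) * μ.real B := by ring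
      _ ≤ 1 / 2 * μ.real B := by gcongr; linarith
  have hhalf : μ.real B ≤ 2 * μ.real (⋂ k ∈ T, (A k)ᶜ) := by
    have := measureReal_le_sum_inter_add_measureReal_inter_compl (μ := μ) (A := A) B N
    rw [← hTB] at this
    linarith
  calc μ.real (A j ∩ ⋂ k ∈ T, (A k)ᶜ) ≤ μ.real (A j ∩ B) := by
        rw [hTB]
        exact measureReal_mono (by gcongr; exact Set.inter_subset_left)
    _ = μ.real (A j) * μ.real B := by
        simp only [measureReal_def, ← ENNReal.toReal_mul]
        exact congrArg _ (hΓ j _ sdiff_disjoint).measure_inter_eq_mul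
    _ ≤ p * (2 * μ.real (⋂ k ∈ T, (A k)ᶜ)) := by gcongr; exact hp j
    _ = _ := by ring

/-- The symmetric Lovász local lemma. -/
theorem IsDependencyGraph.measureReal_iInter_compl_pos [Finite J] [IsProbabilityMeasure μ]
    (hΓ : IsDependencyGraph μ A Γ) (hA : ∀ j, MeasurableSet (A j)) (hp : ∀ j, μ.real (A j) ≤ p)
    (hd : ∀ j, #(Γ j) ≤ d) (hd1 : 1 ≤ d) (hpd : 4 * p * d ≤ 1) :
    0 < μ.real (⋂ j, (A j)ᶜ) := by
  classical
  have := Fintype.ofFinite J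
  suffices h : ∀ T : Finset J, 0 < μ.real (⋂ k ∈ T, (A k)ᶜ) by simpa using h univ
  intro T
  induction T using Finset.induction_on with
  | empty => simp
  | insert j T _ ih =>
    have hp2 : 2 * p ≤ 1 / 2 := by
      have : (1 : ℝ) ≤ d := by exact_mod_cast hd1
      have : 0 ≤ p := measureReal_nonneg.trans (hp j)
      nlinarith
    have hle := hΓ.measureReal_inter_le hp hd hpd T j
    have hsplit := measureReal_inter_add_sdiff (μ := μ) (s := ⋂ k ∈ T, (A k)ᶜ) (hA j)
    rw [Set.inter_comm] at hsplit
    rw [set_biInter_insert, Set.inter_comm, ← Set.sdiff_eq]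
    nlinarith

end LocalLemma

section Product

theorem dependsOn_mem_biInter_compl {ι J : Type*} [DecidableEq ι] {α : ι → Type*}
    {A : J → Set (∀ i, α i)} {S : J → Finset ι}
    (hS : ∀ j, DependsOn (· ∈ A j) (S j : Set ι)) (T : Finset J) :
    DependsOn (· ∈ ⋂ k ∈ T, (A k)ᶜ) (T.biUnion S : Set ι) := by
  intro x y hxy
  simp only [Set.mem_iInter, Set.mem_compl_iff]
  refine propext (forall₂_congr fun k hk ↦ not_congr (iff_of_eq (hS k fun i hi ↦ hxy i ?_)))
  exact mem_coe.2 (mem_biUnion.2 ⟨k, hk, hi⟩)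

variable {ι : Type*} [Fintype ι] {α : ι → Type*} [∀ i, MeasurableSpace (α i)]
  [∀ i, Countable (α i)] [∀ i, MeasurableSingletonClass (α i)]
  (μ : ∀ i, Measure (α i)) [∀ i, IsProbabilityMeasure (μ i)]

theorem indepFun_pi_of_dependsOn {β γ : Type*} [MeasurableSpace β] [MeasurableSpace γ] [Nonempty β]
    [Nonempty γ] {f : (∀ i, α i) → β} {g : (∀ i, α i) → γ} {S T : Finset ι} (hST : Disjoint S T)
    (hf : DependsOn f (S : Set ι)) (hg : DependsOn g (T : Set ι)) :
    IndepFun f g (Measure.pi μ) := by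
  obtain ⟨f', rfl⟩ := dependsOn_iff_exists_comp.1 hf
  obtain ⟨g', rfl⟩ := dependsOn_iff_exists_comp.1 hg
  have hindep : IndepFun (fun (ω : ∀ i, α i) (i : S) ↦ ω i) (fun ω (i : T) ↦ ω i)
      (Measure.pi μ) :=
    (iIndepFun_pi (X := fun _ a ↦ a) fun _ ↦ aemeasurable_id).indepFun_finset S T hST
      fun i ↦ measurable_pi_apply i
  exact hindep.comp (.of_discrete : Measurable f') (.of_discrete : Measurable g')

theorem indepSet_pi_of_dependsOn {A B : Set (∀ i, α i)} {S T : Finset ι} (hST : Disjoint S T)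
    (hA : DependsOn (· ∈ A) (S : Set ι)) (hB : DependsOn (· ∈ B) (T : Set ι)) :
    IndepSet A B (Measure.pi μ) := by
  simpa [Set.preimage] using (indepFun_iff_indepSet_preimage .of_discrete .of_discrete).1
    (indepFun_pi_of_dependsOn μ hST hA hB) {True} {True} trivial trivial

theorem integral_prod_eq_prod_integral_of_dependsOn {J : Type*}
    {f : J → (∀ i, α i) → ℝ} {S : J → Finset ι} {T : Finset J}
    (hS : (T : Set J).PairwiseDisjoint S) (hf : ∀ j, DependsOn (f j) (S j : Set ι)) :
    ∫ ω, ∏ j ∈ T, f j ω ∂Measure.pi μ = ∏ j ∈ T, ∫ ω, f j ω ∂Measure.pi μ := by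
  classical
  induction T using Finset.induction_on with
  | empty => simp
  | insert j T hj ih =>
    rw [coe_insert] at hS
    have hprod : DependsOn (fun ω ↦ ∏ k ∈ T, f k ω) (T.biUnion S : Set ι) := fun x y hxy ↦
      prod_congr rfl fun k hk ↦ hf k fun i hi ↦ hxy i (mem_coe.2 (mem_biUnion.2 ⟨k, hk, hi⟩))
    have hdisj : Disjoint (S j) (T.biUnion S) := by
      rw [disjoint_biUnion_right]
      intro k hk
      exact hS (by simp) (by simp [hk]) (ne_of_mem_of_not_mem hk hj).symm
    simp only [prod_insert hj]
    rw [(indepFun_pi_of_dependsOn μ hdisj (hf j) hprod).integral_fun_mul_eq_mul_integral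
      Measurable.of_discrete.aestronglyMeasurable Measurable.of_discrete.aestronglyMeasurable,
      ih (hS.subset (by simp))]

/-- The variable version of the Lovász local lemma. -/
theorem exists_forall_notMem_of_dependsOn {J : Type*} [Fintype J] [DecidableEq ι]
    {A : J → Set (∀ i, α i)} {S : J → Finset ι} {p : ℝ} {d : ℕ}
    (hS : ∀ j, DependsOn (· ∈ A j) (S j : Set ι)) (hp : ∀ j, (Measure.pi μ).real (A j) ≤ p)
    (hd : ∀ j, #{k | ¬ Disjoint (S k) (S j)} ≤ d) (hd1 : 1 ≤ d) (hpd : 4 * p * d ≤ 1) :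
    ∃ ω, ∀ j, ω ∉ A j := by
  have hΓ : IsDependencyGraph (Measure.pi μ) A fun j ↦ {k | ¬ Disjoint (S k) (S j)} := by
    intro j T hT
    refine indepSet_pi_of_dependsOn μ ?_ (hS j) (dependsOn_mem_biInter_compl hS T)
    rw [disjoint_biUnion_right]
    intro k hk
    by_contra hkj
    exact disjoint_left.1 hT hk (by simpa [disjoint_comm] using hkj)
  have hpos := hΓ.measureReal_iInter_compl_pos (fun _ ↦ .of_discrete) hp hd hd1 hpd
  obtain ⟨ω, hω⟩ := nonempty_of_measureReal_ne_zero hpos.ne'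
  exact ⟨ω, fun j ↦ Set.mem_iInter.1 hω j⟩

end Product

section RandomBits

theorem measurePreserving_update {ι : Type*} [Fintype ι] [DecidableEq ι] {α : ι → Type*}
    [∀ i, MeasurableSpace (α i)] (μ : ∀ i, Measure (α i)) [∀ i, IsProbabilityMeasure (μ i)]
    (i : ι) :
    MeasurePreserving (fun x : (∀ j, α j) × α i ↦ update x.1 i x.2)
      ((Measure.pi μ).prod (μ i)) (Measure.pi μ) := by
  have hmeas : Measurable fun x : (∀ j, α j) × α i ↦ update x.1 i x.2 := measurable_update'
  refine ⟨hmeas, (Measure.pi_eq fun s hs ↦ ?_).symm⟩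
  have hbox : (fun x : (∀ j, α j) × α i ↦ update x.1 i x.2) ⁻¹' Set.univ.pi s =
      Set.univ.pi (update s i Set.univ) ×ˢ s i := by
    ext ⟨ω, a⟩
    simp only [Set.mem_preimage, Set.mem_univ_pi, Set.mem_prod]
    constructor
    · intro h
      refine ⟨fun j ↦ ?_, by simpa using h i⟩
      rcases eq_or_ne j i with rfl | hj
      · simp
      · simpa [hj] using h j
    · rintro ⟨h, ha⟩ j
      rcases eq_or_ne j i with rfl | hj
      · simpa using ha
      · simpa [hj] using h j
  rw [Measure.map_apply hmeas (.univ_pi hs), hbox, Measure.prod_prod, Measure.pi_pi,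
    ← mul_prod_erase univ (fun j ↦ μ j (s j)) (mem_univ i),
    ← mul_prod_erase univ (fun j ↦ μ j (update s i Set.univ j)) (mem_univ i)]
  simp only [update_self, measure_univ, one_mul]
  rw [mul_comm]
  congr 1
  exact prod_congr rfl fun j hj ↦ by rw [update_of_ne (ne_of_mem_erase hj)]

variable {ι : Type*} {p : ι → I}

/-- The law of independent bits, the `i`-th of which is `true` with probability `p i`. -/
noncomputable def randomBits [Fintype ι] (p : ι → I) : Measure (ι → Bool) :=
  Measure.pi fun i ↦ bernoulliMeasure true false (p i)

instance [Fintype ι] : IsProbabilityMeasure (randomBits p) :=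
  inferInstanceAs (IsProbabilityMeasure (Measure.pi _))

/-- The conditional expectation of `f` given all bits except the `i`-th. -/
def averageAt [DecidableEq ι] (p : ι → I) (i : ι) (f : (ι → Bool) → ℝ) (ω : ι → Bool) : ℝ :=
  p i * f (update ω i true) + (1 - p i) * f (update ω i false)

theorem integral_averageAt [Fintype ι] [DecidableEq ι] (i : ι) (f : (ι → Bool) → ℝ) :
    ∫ ω, averageAt p i f ω ∂randomBits p = ∫ ω, f ω ∂randomBits p := by
  have h := measurePreserving_update (fun i ↦ bernoulliMeasure true false (p i)) i
  calc ∫ ω, averageAt p i f ω ∂randomBits p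
      = ∫ ω, ∫ a, f (update ω i a) ∂bernoulliMeasure true false (p i) ∂randomBits p := by
        simp only [integral_bernoulliMeasure, smul_eq_mul, averageAt]
    _ = ∫ x, f (update x.1 i x.2) ∂(randomBits p).prod (bernoulliMeasure true false (p i)) :=
        (integral_prod (fun x ↦ f (update x.1 i x.2)) .of_finite).symm
    _ = ∫ ω, f ω ∂randomBits p := by
        rw [randomBits, ← h.map_eq, integral_map h.measurable.aemeasurable
          Measurable.of_discrete.aestronglyMeasurable, h.map_eq]

theorem integral_randomBits_eval [Fintype ι] (i : ι) (g : Bool → ℝ) :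
    ∫ ω, g (ω i) ∂randomBits p = p i * g true + (1 - p i) * g false := by
  classical
  rw [← integral_averageAt i]
  simp [averageAt]

theorem integral_prod_randomBits_eval [Fintype ι] (T : Finset ι) (g : ι → Bool → ℝ) :
    ∫ ω, ∏ i ∈ T, g i (ω i) ∂randomBits p =
      ∏ i ∈ T, (p i * g i true + (1 - p i) * g i false) := by
  simp only [← integral_randomBits_eval]
  refine integral_prod_eq_prod_integral_of_dependsOn _ (S := fun i ↦ {i}) ?_ ?_
  · exact fun i _ j _ hij ↦ disjoint_singleton.2 hij
  · exact fun i x y hxy ↦ congrArg (g i) (hxy i (by simp))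

/-- A bit of mean `p` contributes only `p x²` to the exponent: this beats the `x²` of Hoeffding's
lemma when `p` is small. -/
theorem mul_exp_add_le_exp (p : I) {x : ℝ} (hx : |x| ≤ 1) :
    p * Real.exp x + (1 - p) ≤ Real.exp (p * x + x ^ 2 * p) := by
  have hexp : Real.exp x ≤ 1 + x + x ^ 2 := by
    have := (abs_le.1 (Real.abs_exp_sub_one_sub_id_le hx)).2
    linarith
  calc p * Real.exp x + (1 - p) ≤ p * (1 + x + x ^ 2) + (1 - p) := by gcongr; exact p.2.1
    _ = (p * x + x ^ 2 * p) + 1 := by ring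
    _ ≤ _ := Real.add_one_le_exp _

variable [DecidableEq ι] {f : (ι → Bool) → ℝ} {c : ι → ℝ}

theorem averageAt_exp_le {t : ℝ} {i : ι} (ω : ι → Bool)
    (hf : |f (update ω i true) - f (update ω i false)| ≤ c i) (ht : |t| * c i ≤ 1) :
    averageAt p i (fun ω ↦ Real.exp (t * f ω)) ω ≤
      Real.exp (t ^ 2 * (c i ^ 2 * p i)) * Real.exp (t * averageAt p i f ω) := by
  set a := f (update ω i true)
  set b := f (update ω i false)
  have hx : |t * (a - b)| ≤ |t| * c i := by rw [abs_mul]; gcongr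
  have hsq : (t * (a - b)) ^ 2 ≤ (|t| * c i) ^ 2 := sq_le_sq' (abs_le.1 hx).1 (abs_le.1 hx).2
  calc averageAt p i (fun ω ↦ Real.exp (t * f ω)) ω
      = Real.exp (t * b) * (p i * Real.exp (t * (a - b)) + (1 - p i)) := by
        rw [averageAt, show t * f (update ω i true) = t * b + t * (a - b) by ring, Real.exp_add]
        ring
    _ ≤ Real.exp (t * b) * Real.exp (p i * (t * (a - b)) + (|t| * c i) ^ 2 * p i) := by
        gcongr
        refine (mul_exp_add_le_exp (p i) (hx.trans ht)).trans (Real.exp_le_exp.2 ?_)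
        gcongr
        exact (p i).2.1
    _ = _ := by
        rw [← Real.exp_add, ← Real.exp_add, averageAt, mul_pow, sq_abs]
        simp only [a, b]
        ring_nf

theorem dependsOn_averageAt {S : Finset ι} {i : ι} (hf : DependsOn f (insert i S : Finset ι)) :
    DependsOn (averageAt p i f) (S : Set ι) := by
  have h (a : Bool) {x y : ι → Bool} (hxy : ∀ j ∈ S, x j = y j) :
      f (update x i a) = f (update y i a) := by
    refine hf fun j hj ↦ ?_
    rcases eq_or_ne j i with rfl | hji
    · simp
    · simpa [hji] using hxy j (by simpa [hji] using hj)
  intro x y hxy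
  simp only [averageAt, h _ hxy]

theorem abs_averageAt_update_sub_le (i j : ι)
    (hf : ∀ ω i, |f (update ω i true) - f (update ω i false)| ≤ c i) (ω : ι → Bool) :
    |averageAt p i f (update ω j true) - averageAt p i f (update ω j false)| ≤ c j := by
  rcases eq_or_ne j i with rfl | hji
  · simpa [averageAt] using (abs_nonneg _).trans (hf ω j)
  · simp only [averageAt, update_comm hji]
    have h1 := abs_le.1 (hf (update ω i true) j)
    have h2 := abs_le.1 (hf (update ω i false) j)
    have hp0 := (p i).2.1
    have hp1 := (p i).2.2
    rw [abs_le]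
    constructor <;> nlinarith

/-- A bounded-differences inequality sensitive to the variances of the bits. -/
theorem mgf_randomBits_le [Fintype ι] {t : ℝ}
    (hf : ∀ ω i, |f (update ω i true) - f (update ω i false)| ≤ c i) (ht : ∀ i, |t| * c i ≤ 1) :
    mgf f (randomBits p) t ≤
      Real.exp (t * ∫ ω, f ω ∂randomBits p + t ^ 2 * ∑ i, c i ^ 2 * p i) := by
  suffices h : ∀ (S : Finset ι) (f : (ι → Bool) → ℝ), DependsOn f (S : Set ι) →
      (∀ ω i, |f (update ω i true) - f (update ω i false)| ≤ c i) →
      mgf f (randomBits p) t ≤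
        Real.exp (t * ∫ ω, f ω ∂randomBits p + t ^ 2 * ∑ i ∈ S, c i ^ 2 * p i) from
    h univ f (fun x y hxy ↦ congrArg f (funext fun i ↦ hxy i (by simp))) hf
  intro S
  induction S using Finset.induction_on with
  | empty =>
    intro f hS _
    have hconst : f = fun _ ↦ f default := funext fun ω ↦ hS (by simp)
    rw [hconst]
    simp [mgf]
  | insert i S hi ih =>
    intro f hS hf
    calc mgf f (randomBits p) t
        = ∫ ω, averageAt p i (fun ω ↦ Real.exp (t * f ω)) ω ∂randomBits p :=
          (integral_averageAt i _).symm
      _ ≤ ∫ ω, Real.exp (t ^ 2 * (c i ^ 2 * p i)) * Real.exp (t * averageAt p i f ω)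
            ∂randomBits p :=
          integral_mono .of_finite .of_finite fun ω ↦ averageAt_exp_le ω (hf ω i) (ht i)
      _ = Real.exp (t ^ 2 * (c i ^ 2 * p i)) * mgf (averageAt p i f) (randomBits p) t := by
          rw [integral_const_mul, mgf]
      _ ≤ Real.exp (t ^ 2 * (c i ^ 2 * p i)) * Real.exp (t * ∫ ω, f ω ∂randomBits p +
            t ^ 2 * ∑ j ∈ S, c j ^ 2 * p j) := by
          gcongr
          rw [← integral_averageAt i f]
          exact ih _ (dependsOn_averageAt hS) fun ω j ↦ abs_averageAt_update_sub_le i j hf ω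
      _ = _ := by
          rw [← Real.exp_add, sum_insert hi]
          ring_nf

end RandomBits

section Chernoff

variable {Ω : Type*} [MeasurableSpace Ω] {μ : Measure Ω} [IsProbabilityMeasure μ] {X : Ω → ℝ}
  {m K r s : ℝ}

theorem measureReal_ge_le_of_mgf_le (hint : ∀ t, Integrable (fun ω ↦ Real.exp (t * X ω)) μ)
    (hK : 0 < K) (hmgf : ∀ t, |t| ≤ r → mgf X μ t ≤ Real.exp (t * m + t ^ 2 * K))
    (hs : 0 ≤ s) (hsr : s ≤ 2 * K * r) :
    μ.real {ω | m + s ≤ X ω} ≤ Real.exp (-(s ^ 2 / (4 * K))) := by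
  have ht : 0 ≤ s / (2 * K) := by positivity
  have htr : |s / (2 * K)| ≤ r := by
    rw [abs_of_nonneg ht, div_le_iff₀ (by positivity)]
    linarith
  calc μ.real {ω | m + s ≤ X ω}
      ≤ Real.exp (-(s / (2 * K)) * (m + s)) * mgf X μ (s / (2 * K)) :=
        measure_ge_le_exp_mul_mgf _ ht (hint _)
    _ ≤ Real.exp (-(s / (2 * K)) * (m + s)) *
          Real.exp (s / (2 * K) * m + (s / (2 * K)) ^ 2 * K) := by gcongr; exact hmgf _ htr
    _ = Real.exp (-(s ^ 2 / (4 * K))) := by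
        rw [← Real.exp_add]
        congr 1
        field_simp
        ring

theorem measureReal_le_le_of_mgf_le (hint : ∀ t, Integrable (fun ω ↦ Real.exp (t * X ω)) μ)
    (hK : 0 < K) (hmgf : ∀ t, |t| ≤ r → mgf X μ t ≤ Real.exp (t * m + t ^ 2 * K))
    (hs : 0 ≤ s) (hsr : s ≤ 2 * K * r) :
    μ.real {ω | X ω ≤ m - s} ≤ Real.exp (-(s ^ 2 / (4 * K))) := by
  have h := measureReal_ge_le_of_mgf_le (X := -X) (m := -m)
    (fun t ↦ by simpa using hint (-t)) hK
    (fun t ht ↦ by simpa [mgf_neg] using hmgf (-t) (by rwa [abs_neg])) hs hsr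
  convert h using 4 with ω
  rw [Pi.neg_apply]
  constructor <;> intro h <;> linarith

end Chernoff

section SilentCount

variable {ι X : Type*} {p : ι → I} {s : Finset X} {S : X → Finset ι}

/-- The number of sets `S x`, `x ∈ s`, on which all bits of `ω` are `false`. -/
def silentCount (s : Finset X) (S : X → Finset ι) (ω : ι → Bool) : ℕ :=
  #{x ∈ s | ∀ i ∈ S x, ω i = false}

theorem dependsOn_silentCount [DecidableEq ι] :
    DependsOn (silentCount s S) (s.biUnion S : Set ι) := by
  intro ω ω' h
  refine congrArg card (filter_congr fun x hx ↦ forall₂_congr fun i hi ↦ ?_)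
  rw [h i (mem_coe.2 (mem_biUnion.2 ⟨x, hx, hi⟩))]

theorem integral_silentCount [Fintype ι] :
    ∫ ω, (silentCount s S ω : ℝ) ∂randomBits p = ∑ x ∈ s, ∏ i ∈ S x, (1 - p i : ℝ) := by
  have hprod (x : X) : ∫ ω, ∏ i ∈ S x, (if ω i then 0 else 1 : ℝ) ∂randomBits p =
      ∏ i ∈ S x, (1 - p i : ℝ) := by
    rw [integral_prod_randomBits_eval (S x) fun _ a ↦ if a then 0 else 1]
    simp
  have hsum (ω : ι → Bool) : (silentCount s S ω : ℝ) =
      ∑ x ∈ s, ∏ i ∈ S x, (if ω i then 0 else 1 : ℝ) := by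
    rw [silentCount, card_filter]
    push_cast
    refine sum_congr rfl fun x _ ↦ ?_
    simp only [← Bool.not_eq_true, ← ite_not (ω _ = true), prod_ite_zero, prod_const_one]
  simp only [hsum]
  rw [integral_finsetSum _ fun x _ ↦ .of_finite]
  exact sum_congr rfl fun x _ ↦ hprod x

theorem abs_silentCount_update_sub_le [DecidableEq ι] (ω : ι → Bool) (i : ι) :
    |(silentCount s S (update ω i true) : ℝ) - silentCount s S (update ω i false)| ≤
      #{x ∈ s | i ∈ S x} := by
  classical
  have hmono : silentCount s S (update ω i true) ≤ silentCount s S (update ω i false) := by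
    refine card_le_card (monotone_filter_right s fun x _ h j hj ↦ ?_)
    rcases eq_or_ne j i with rfl | hji
    · simp
    · simpa [hji] using h j hj
  have hlip : silentCount s S (update ω i false) ≤
      silentCount s S (update ω i true) + #{x ∈ s | i ∈ S x} := by
    refine (card_le_card fun x hx ↦ ?_).trans (card_union_le _ _)
    simp only [mem_union, mem_filter] at hx ⊢
    by_cases hi : i ∈ S x
    · exact Or.inr ⟨hx.1, hi⟩
    · refine Or.inl ⟨hx.1, fun j hj ↦ ?_⟩
      have hji : j ≠ i := ne_of_mem_of_not_mem hj hi
      simpa [hji] using hx.2 j hj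
  have hmono' : (silentCount s S (update ω i true) : ℝ) ≤ silentCount s S (update ω i false) := by
    exact_mod_cast hmono
  have hlip' : (silentCount s S (update ω i false) : ℝ) ≤
      silentCount s S (update ω i true) + #{x ∈ s | i ∈ S x} := by exact_mod_cast hlip
  rw [abs_le]
  constructor <;> linarith

variable [Fintype ι] [DecidableEq ι] {k M m t : ℝ}

theorem sum_card_sq_mul_le (hk : ∀ i, (#{x ∈ s | i ∈ S x} : ℝ) ≤ k) :
    ∑ i, (#{x ∈ s | i ∈ S x} : ℝ) ^ 2 * p i ≤ k * ∑ x ∈ s, ∑ i ∈ S x, (p i : ℝ) := by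
  have hswap : ∑ x ∈ s, ∑ i ∈ S x, (p i : ℝ) = ∑ i, #{x ∈ s | i ∈ S x} * (p i : ℝ) := by
    rw [sum_comm' (t' := univ) (s' := fun i ↦ {x ∈ s | i ∈ S x}) (by simp)]
    simp
  rw [hswap, mul_sum]
  refine sum_le_sum fun i _ ↦ ?_
  rw [sq, mul_assoc]
  have := (p i).2.1
  gcongr
  exact hk i

theorem mgf_silentCount_le (hk : ∀ i, (#{x ∈ s | i ∈ S x} : ℝ) ≤ k) (hk0 : 0 < k)
    (hM : ∑ x ∈ s, ∑ i ∈ S x, (p i : ℝ) ≤ M) (ht : |t| ≤ 1 / k) :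
    mgf (fun ω ↦ (silentCount s S ω : ℝ)) (randomBits p) t ≤
      Real.exp (t * (∑ x ∈ s, ∏ i ∈ S x, (1 - p i : ℝ)) + t ^ 2 * (k * M)) := by
  refine (mgf_randomBits_le abs_silentCount_update_sub_le fun i ↦ ?_).trans ?_
  · calc |t| * #{x ∈ s | i ∈ S x} ≤ 1 / k * k := by gcongr; exact hk i
      _ = 1 := by field_simp
  · rw [integral_silentCount]
    gcongr
    refine (sum_card_sq_mul_le hk).trans ?_
    gcongr

theorem measureReal_silentCount_ge_le (hk : ∀ i, (#{x ∈ s | i ∈ S x} : ℝ) ≤ k) (hk0 : 0 < k)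
    (hM : ∑ x ∈ s, ∑ i ∈ S x, (p i : ℝ) ≤ M) (hM0 : 0 < M)
    (hm : ∑ x ∈ s, ∏ i ∈ S x, (1 - p i : ℝ) ≤ m) (ht : 0 ≤ t) (htM : t ≤ 2 * M) :
    (randomBits p).real {ω | m + t ≤ silentCount s S ω} ≤ Real.exp (-(t ^ 2 / (4 * (k * M)))) := by
  refine (measureReal_mono fun ω hω ↦ ?_).trans (measureReal_ge_le_of_mgf_le (r := 1 / k)
    (fun _ ↦ .of_finite) (by positivity) (fun t ↦ mgf_silentCount_le hk hk0 hM) ht ?_)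
  · exact (add_le_add_left hm t).trans hω
  · exact htM.trans_eq (by field_simp)

theorem measureReal_silentCount_le_le (hk : ∀ i, (#{x ∈ s | i ∈ S x} : ℝ) ≤ k) (hk0 : 0 < k)
    (hM : ∑ x ∈ s, ∑ i ∈ S x, (p i : ℝ) ≤ M) (hM0 : 0 < M)
    (hm : m ≤ ∑ x ∈ s, ∏ i ∈ S x, (1 - p i : ℝ)) (ht : 0 ≤ t) (htM : t ≤ 2 * M) :
    (randomBits p).real {ω | silentCount s S ω ≤ m - t} ≤ Real.exp (-(t ^ 2 / (4 * (k * M)))) := by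
  refine (measureReal_mono fun ω hω ↦ ?_).trans (measureReal_le_le_of_mgf_le (r := 1 / k)
    (fun _ ↦ .of_finite) (by positivity) (fun t ↦ mgf_silentCount_le hk hk0 hM) ht ?_)
  · exact le_trans hω (sub_le_sub_right hm t)
  · exact htM.trans_eq (by field_simp)

end SilentCount

section ConflictCount

variable {ι : Type*} {X : Finset ι} {K : ι → Finset ι} {p : I}

/-- The number of `true` bits `i ∈ X` in conflict with some `true` bit of `K i`. -/
def conflictCount (X : Finset ι) (K : ι → Finset ι) (ω : ι → Bool) : ℕ :=
  #{i ∈ X | ω i = true ∧ ∃ j ∈ K i, ω j = true}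

theorem dependsOn_conflictCount [DecidableEq ι] :
    DependsOn (conflictCount X K) (X ∪ X.biUnion K : Set ι) := by
  intro ω ω' h
  refine congrArg card (filter_congr fun i hi ↦ ?_)
  rw [h i (Or.inl hi)]
  refine and_congr_right fun _ ↦ exists_congr fun j ↦ and_congr_right fun hj ↦ ?_
  rw [h j (Or.inr (mem_coe.2 (mem_biUnion.2 ⟨i, hi, hj⟩)))]

/-- The exponential moment weight `exp #{i ∈ X | ω i = true}`, restricted to the event that all the
bits of `A` are `true`. -/
noncomputable def activeWeight (A X : Finset ι) (ω : ι → Bool) : ℝ :=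
  if ∀ i ∈ A, ω i = true then Real.exp #{i ∈ X | ω i = true} else 0

theorem activeWeight_nonneg (A X : Finset ι) (ω : ι → Bool) : 0 ≤ activeWeight A X ω := by
  unfold activeWeight
  positivity

theorem activeWeight_le_prod [DecidableEq ι] (A X : Finset ι) (ω : ι → Bool) :
    activeWeight A X ω ≤
      ∏ i ∈ A ∪ X \ A, if ω i = true then Real.exp 1 else if i ∈ A then 0 else 1 := by
  rw [activeWeight]
  split_ifs with h
  · calc Real.exp #{i ∈ X | ω i = true} ≤ Real.exp #{i ∈ A ∪ X | ω i = true} := by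
          gcongr
          exact subset_union_right
      _ = ∏ i ∈ A ∪ X, if ω i = true then Real.exp 1 else 1 := by
          rw [prod_ite, prod_const, prod_const_one, mul_one, Real.exp_one_pow]
      _ = _ := by
          rw [union_sdiff_self_eq_union]
          refine prod_congr rfl fun i _ ↦ ?_
          by_cases hi : i ∈ A
          · simp [h i hi]
          · simp [hi]
  · exact prod_nonneg fun i _ ↦ by positivity

theorem exp_conflictCount_le [DecidableEq ι] (ω : ι → Bool) :
    Real.exp (conflictCount X K ω) ≤ 1 + ∑ i ∈ X, ∑ j ∈ K i, activeWeight {i, j} X ω := by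
  have hnonneg (i j : ι) : 0 ≤ activeWeight {i, j} X ω := activeWeight_nonneg _ _ _
  rcases Finset.eq_empty_or_nonempty {i ∈ X | ω i = true ∧ ∃ j ∈ K i, ω j = true} with h | ⟨i, hi⟩
  · rw [conflictCount, h, card_empty, Nat.cast_zero, Real.exp_zero, le_add_iff_nonneg_right]
    exact sum_nonneg fun i _ ↦ sum_nonneg fun j _ ↦ hnonneg i j
  · obtain ⟨hiX, hωi, j, hj, hωj⟩ := mem_filter.1 hi
    calc Real.exp (conflictCount X K ω) ≤ activeWeight {i, j} X ω := by
          rw [activeWeight, if_pos (by simp [hωi, hωj])]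
          gcongr
          exact card_le_card (monotone_filter_right X fun _ _ h ↦ h.1)
      _ ≤ ∑ j ∈ K i, activeWeight {i, j} X ω := single_le_sum (fun j _ ↦ hnonneg i j) hj
      _ ≤ ∑ i ∈ X, ∑ j ∈ K i, activeWeight {i, j} X ω :=
          single_le_sum (f := fun i ↦ ∑ j ∈ K i, activeWeight {i, j} X ω)
            (fun i _ ↦ sum_nonneg fun j _ ↦ hnonneg i j) hiX
      _ ≤ _ := le_add_of_nonneg_left zero_le_one

variable [Fintype ι]

theorem integral_activeWeight_le (p : ι → I) (A X : Finset ι) :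
    ∫ ω, activeWeight A X ω ∂randomBits p ≤
      (∏ i ∈ A, Real.exp 1 * p i) * Real.exp (2 * ∑ i ∈ X, (p i : ℝ)) := by
  classical
  set g : ι → Bool → ℝ := fun i a ↦ if a = true then Real.exp 1 else if i ∈ A then 0 else 1
  have hg (i : ι) : 0 ≤ p i * g i true + (1 - p i) * g i false := by
    have h0 := (p i).2.1
    have h1 := sub_nonneg.2 (p i).2.2
    have : 0 ≤ g i false := by simp only [g]; positivity
    have : 0 ≤ g i true := by simp only [g]; positivity
    positivity
  have hA : 0 ≤ ∏ i ∈ A, Real.exp 1 * (p i : ℝ) :=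
    prod_nonneg fun i _ ↦ mul_nonneg (Real.exp_pos 1).le (p i).2.1
  calc _ ≤ ∫ ω, ∏ i ∈ A ∪ X \ A, g i (ω i) ∂randomBits p :=
        integral_mono .of_finite .of_finite (activeWeight_le_prod A X)
    _ = (∏ i ∈ A, Real.exp 1 * p i) * ∏ i ∈ X \ A, (p i * g i true + (1 - p i) * g i false) := by
        rw [integral_prod_randomBits_eval, prod_union disjoint_sdiff]
        congr 1
        exact prod_congr rfl fun i hi ↦ by simp [g, hi, mul_comm]
    _ ≤ (∏ i ∈ A, Real.exp 1 * p i) * ∏ i ∈ X \ A, Real.exp (2 * p i) := by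
        gcongr with i hi
        · exact fun i _ ↦ hg i
        · have : Real.exp 1 - 1 ≤ 2 := by linarith [Real.exp_one_lt_three]
          have := mul_le_mul_of_nonneg_left this (p i).2.1
          simp only [g, (mem_sdiff.1 hi).2, if_true, if_false, Bool.false_eq_true]
          linarith [Real.add_one_le_exp (2 * (p i : ℝ))]
    _ ≤ _ := by
        rw [← Real.exp_sum, ← mul_sum]
        gcongr
        · exact fun i _ _ ↦ (p i).2.1
        · exact sdiff_subset

theorem integral_activeWeight_pair_le [DecidableEq ι] {i j : ι} (hij : i ≠ j)
    (hX : 4 * (p : ℝ) * #X ≤ 1) :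
    ∫ ω, activeWeight {i, j} X ω ∂randomBits (fun _ ↦ p) ≤ 18 * (p : ℝ) ^ 2 := by
  have hp : 0 ≤ (p : ℝ) := p.2.1
  have hexp : Real.exp (2 * ∑ _ ∈ X, (p : ℝ)) ≤ 2 := by
    have hhalf : Real.exp (1 / 2) ^ 2 = Real.exp 1 := by rw [← Real.exp_nat_mul]; norm_num
    calc Real.exp (2 * ∑ _ ∈ X, (p : ℝ)) ≤ Real.exp (1 / 2) := by
          rw [sum_const, nsmul_eq_mul]
          gcongr
          linarith
      _ ≤ 2 := by nlinarith [Real.exp_pos (1 / 2), Real.exp_one_lt_three]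
  calc _ ≤ (∏ _ ∈ ({i, j} : Finset ι), Real.exp 1 * (p : ℝ)) *
          Real.exp (2 * ∑ _ ∈ X, (p : ℝ)) :=
        integral_activeWeight_le (fun _ ↦ p) {i, j} X
    _ ≤ (3 * (p : ℝ)) ^ 2 * 2 := by
        rw [prod_const, card_pair hij]
        gcongr
        exact Real.exp_one_lt_three.le
    _ = 18 * (p : ℝ) ^ 2 := by ring

theorem integral_exp_conflictCount_le (hK : ∀ i ∈ X, i ∉ K i) (hX : 4 * (p : ℝ) * #X ≤ 1) :
    ∫ ω, Real.exp (conflictCount X K ω) ∂randomBits (fun _ ↦ p) ≤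
      Real.exp (18 * (p : ℝ) ^ 2 * ∑ i ∈ X, (#(K i) : ℝ)) := by
  classical
  calc ∫ ω, Real.exp (conflictCount X K ω) ∂randomBits (fun _ ↦ p) ≤
        ∫ ω, (1 + ∑ i ∈ X, ∑ j ∈ K i, activeWeight {i, j} X ω) ∂randomBits (fun _ ↦ p) :=
        integral_mono .of_finite .of_finite exp_conflictCount_le
    _ = 1 + ∑ i ∈ X, ∑ j ∈ K i, ∫ ω, activeWeight {i, j} X ω ∂randomBits (fun _ ↦ p) := by
        rw [integral_add .of_finite .of_finite, integral_const, probReal_univ, one_smul,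
          integral_finsetSum _ fun _ _ ↦ .of_finite]
        congr! 2
        exact integral_finsetSum _ fun _ _ ↦ .of_finite
    _ ≤ 1 + ∑ i ∈ X, ∑ j ∈ K i, 18 * (p : ℝ) ^ 2 := by
        gcongr with i hi j hj
        exact integral_activeWeight_pair_le (ne_of_mem_of_not_mem hj (hK i hi)).symm hX
    _ = 18 * (p : ℝ) ^ 2 * (∑ i ∈ X, (#(K i) : ℝ)) + 1 := by
        simp only [sum_const, nsmul_eq_mul, ← sum_mul]
        ring
    _ ≤ _ := Real.add_one_le_exp _

variable {C : Type*} [Finite C] [DecidableEq C] {κ : ι → C}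

/-- If conflicts only occur within the fibres of `κ`, the fibres contribute independently. -/
theorem mgf_conflictCount_le (hκ : ∀ i ∈ X, ∀ j ∈ K i, κ j = κ i) (hK : ∀ i ∈ X, i ∉ K i)
    (hX : ∀ c, 4 * (p : ℝ) * #{i ∈ X | κ i = c} ≤ 1) :
    mgf (fun ω ↦ (conflictCount X K ω : ℝ)) (randomBits fun _ ↦ p) 1 ≤
      Real.exp (18 * (p : ℝ) ^ 2 * ∑ i ∈ X, (#(K i) : ℝ)) := by
  classical
  have := Fintype.ofFinite C
  set Y : C → Finset ι := fun c ↦ {i ∈ X | κ i = c}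
  have hfibre (ω : ι → Bool) : conflictCount X K ω = ∑ c, conflictCount (Y c) K ω := by
    rw [conflictCount, card_eq_sum_card_fiberwise (f := κ) (t := univ) (by simp [Set.MapsTo])]
    simp only [conflictCount, Y, filter_filter, and_comm]
  have hdisj : ((univ : Finset C) : Set C).PairwiseDisjoint fun c ↦ Y c ∪ (Y c).biUnion K := by
    have hmem {c : C} {i : ι} (hi : i ∈ Y c ∪ (Y c).biUnion K) : κ i = c := by
      simp only [Y, mem_union, mem_filter, mem_biUnion] at hi
      obtain ⟨-, h⟩ | ⟨j, ⟨hj, h⟩, hij⟩ := hi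
      · exact h
      · exact (hκ j hj i hij).trans h
    exact fun c _ c' _ hcc' ↦ disjoint_left.2 fun i hi hi' ↦ hcc' ((hmem hi).symm.trans (hmem hi'))
  calc _ = ∫ ω, ∏ c, Real.exp (conflictCount (Y c) K ω) ∂randomBits (fun _ ↦ p) := by
        simp only [mgf, hfibre, one_mul, Nat.cast_sum, Real.exp_sum]
    _ = ∏ c, ∫ ω, Real.exp (conflictCount (Y c) K ω) ∂randomBits (fun _ ↦ p) :=
        integral_prod_eq_prod_integral_of_dependsOn _ hdisj fun c x y hxy ↦ by
          rw [dependsOn_conflictCount (by simpa using hxy)]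
    _ ≤ ∏ c, Real.exp (18 * (p : ℝ) ^ 2 * ∑ i ∈ Y c, (#(K i) : ℝ)) := by
        gcongr with c
        exact integral_exp_conflictCount_le (fun i hi ↦ hK i (mem_filter.1 hi).1) (hX c)
    _ = _ := by
        rw [← Real.exp_sum, ← mul_sum, sum_fiberwise]

theorem measureReal_conflictCount_ge_le {M : ℝ} (hκ : ∀ i ∈ X, ∀ j ∈ K i, κ j = κ i)
    (hK : ∀ i ∈ X, i ∉ K i) (hX : ∀ c, 4 * (p : ℝ) * #{i ∈ X | κ i = c} ≤ 1)
    (hM : 18 * (p : ℝ) ^ 2 * ∑ i ∈ X, (#(K i) : ℝ) ≤ M) :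
    (randomBits fun _ ↦ p).real {ω | 2 * M ≤ conflictCount X K ω} ≤ Real.exp (-M) := by
  calc _ ≤ Real.exp (-1 * (2 * M)) *
        mgf (fun ω ↦ (conflictCount X K ω : ℝ)) (randomBits fun _ ↦ p) 1 :=
        measure_ge_le_exp_mul_mgf _ zero_le_one .of_finite
    _ ≤ Real.exp (-1 * (2 * M)) * Real.exp M := by
        gcongr
        exact (mgf_conflictCount_le hκ hK hX).trans (by gcongr)
    _ = Real.exp (-M) := by
        rw [← Real.exp_add]
        ring_nf

end ConflictCount

section Nibble

variable {V C : Type*} [DecidableEq V] [DecidableEq C] {d : ℕ} {E : Finset (Sym2 V)}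
  {L : Sym2 V → Finset C} {e f : Sym2 V} {c : C} {u v : V}

/-- The edge set `E` has a proper edge colouring from the lists `L`. -/
def IsListColourable (E : Finset (Sym2 V)) (L : Sym2 V → Finset C) : Prop :=
  ∃ γ : Sym2 V → C, (∀ e ∈ E, γ e ∈ L e) ∧
    ∀ e ∈ E, ∀ f ∈ E, e ≠ f → (∃ v, v ∈ e ∧ v ∈ f) → γ e ≠ γ f

/-- The edges at the vertex `v` having `c` in their list. Their number is the colour degree of
`v` in `c`. -/
def colourEdges (E : Finset (Sym2 V)) (L : Sym2 V → Finset C) (v : V) (c : C) : Finset (Sym2 V) :=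
  {e ∈ E | v ∈ e ∧ c ∈ L e}

theorem mem_colourEdges : e ∈ colourEdges E L v c ↔ e ∈ E ∧ v ∈ e ∧ c ∈ L e := mem_filter

/-- The edges other than `e` that meet `e` and have `c` in their list. -/
def conflictEdges (E : Finset (Sym2 V)) (L : Sym2 V → Finset C) (e : Sym2 V) (c : C) :
    Finset (Sym2 V) :=
  (e.toFinset.biUnion fun u ↦ colourEdges E L u c).erase e

theorem mem_conflictEdges :
    f ∈ conflictEdges E L e c ↔ f ≠ e ∧ ∃ u ∈ e, f ∈ colourEdges E L u c := by
  simp [conflictEdges]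

theorem card_toFinset_le_two (e : Sym2 V) : #e.toFinset ≤ 2 := by
  rw [Sym2.card_toFinset]
  split_ifs <;> simp

theorem card_conflictEdges_le {n : ℕ} (hn : ∀ v c, #(colourEdges E L v c) ≤ n) (e : Sym2 V)
    (c : C) : #(conflictEdges E L e c) ≤ 2 * n :=
  calc _ ≤ #(e.toFinset.biUnion fun u ↦ colourEdges E L u c) := card_erase_le
    _ ≤ #e.toFinset * n := card_biUnion_le_card_mul _ _ _ fun u _ ↦ hn u c
    _ ≤ 2 * n := Nat.mul_le_mul_right n (card_toFinset_le_two e)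

/-- The random bits of the nibble, indexed by an edge and a colour. Besides the edges proper there
are `d` dummy edges at each vertex; their bits equalise the probabilities with which the
different colours get blocked. -/
abbrev Bit (V C : Type*) (d : ℕ) : Type _ := (Sym2 V ⊕ V × Fin d) × C

/-- The bits blocking the colour `c` for the edge `e` at its end `u`: those of the other edges
at `u`, padded by dummy edges to a total of `d - 1`. -/
def vertexBlockers (E : Finset (Sym2 V)) (L : Sym2 V → Finset C) (e : Sym2 V) (c : C) (u : V) :
    Finset (Bit V C d) :=
  (((colourEdges E L u c).erase e).disjSum
    (({u} : Finset V) ×ˢ ({j | j < d - #(colourEdges E L u c)} : Finset (Fin d)))) ×ˢ {c}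

/-- The bits blocking the colour `c` for the edge `e`. -/
def edgeBlockers (E : Finset (Sym2 V)) (L : Sym2 V → Finset C) (e : Sym2 V) (c : C) :
    Finset (Bit V C d) :=
  e.toFinset.biUnion (vertexBlockers E L e c)

/-- The bits that can be `true` for the pairs of `e` and a colour in its list. -/
def edgeBits (L : Sym2 V → Finset C) (e : Sym2 V) : Finset (Bit V C d) := {Sum.inl e} ×ˢ L e

/-- If one of these bits is `true`, then either `e` is itself active, or its end other than `v`
blocks `c`; otherwise `e` still contributes to the colour degree of `v` in `c`, unless `v`
blocks `c`. -/
def survivalBlockers (E : Finset (Sym2 V)) (L : Sym2 V → Finset C) (v : V) (c : C) (e : Sym2 V) :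
    Finset (Bit V C d) :=
  edgeBits L e ∪ (e.toFinset.erase v).biUnion (vertexBlockers E L e c)

/-- The bits in conflict with a given bit: those of adjacent edges in the same colour. -/
def conflictBits (E : Finset (Sym2 V)) (L : Sym2 V → Finset C) : Bit V C d → Finset (Bit V C d)
  | (Sum.inl e, c) => (conflictEdges E L e c).image Sum.inl ×ˢ {c}
  | (Sum.inr _, _) => ∅

/-- The bits of the edges at `v` having `c` in their list. -/
def incidentBits (E : Finset (Sym2 V)) (L : Sym2 V → Finset C) (v : V) (c : C) :
    Finset (Bit V C d) :=
  (colourEdges E L v c).biUnion (edgeBits L)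

/-- The edge `e` keeps the colour `c`: it is active in `c` and no adjacent edge is. -/
def KeepsColour (E : Finset (Sym2 V)) (L : Sym2 V → Finset C) (ω : Bit V C d → Bool)
    (e : Sym2 V) (c : C) : Prop :=
  ω (Sum.inl e, c) = true ∧ ∀ f ∈ conflictEdges E L e c, ω (Sum.inl f, c) = false

instance (ω : Bit V C d → Bool) : Decidable (KeepsColour E L ω e c) :=
  inferInstanceAs (Decidable (_ ∧ _))

/-- The edges that remain to be coloured after the nibble with outcome `ω`. -/
def remainingEdges (E : Finset (Sym2 V)) (L : Sym2 V → Finset C) (ω : Bit V C d → Bool) :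
    Finset (Sym2 V) :=
  {e ∈ E | ∀ c ∈ L e, ¬ KeepsColour E L ω e c}

theorem remainingEdges_subset {ω : Bit V C d → Bool} : remainingEdges E L ω ⊆ E :=
  filter_subset _ _

/-- The colours not blocked for `e` in the nibble with outcome `ω`. -/
def remainingList (E : Finset (Sym2 V)) (L : Sym2 V → Finset C) (ω : Bit V C d → Bool)
    (e : Sym2 V) : Finset C :=
  {c ∈ L e | ∀ i ∈ edgeBlockers E L e c, ω i = false}

theorem mem_vertexBlockers_of_mem_colourEdges (hf : f ∈ colourEdges E L u c) (hne : f ≠ e) :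
    ((Sum.inl f, c) : Bit V C d) ∈ vertexBlockers E L e c u := by
  simp [vertexBlockers, hf, hne]

theorem mem_edgeBlockers_of_mem_conflictEdges (hf : f ∈ conflictEdges E L e c) :
    ((Sum.inl f, c) : Bit V C d) ∈ edgeBlockers E L e c := by
  obtain ⟨hne, u, hu, hfu⟩ := mem_conflictEdges.1 hf
  exact mem_biUnion.2 ⟨u, Sym2.mem_toFinset.2 hu, mem_vertexBlockers_of_mem_colourEdges hfu hne⟩

theorem conflictBits_subset_edgeBlockers :
    (conflictBits E L (Sum.inl e, c) : Finset (Bit V C d)) ⊆ edgeBlockers E L e c := by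
  intro i hi
  obtain ⟨hi, hic⟩ := mem_product.1 hi
  obtain ⟨f, hf, hfi⟩ := mem_image.1 hi
  obtain rfl : i = (Sum.inl f, c) := Prod.ext hfi.symm (mem_singleton.1 hic)
  exact mem_edgeBlockers_of_mem_conflictEdges hf

theorem IsListColourable.of_remaining (ω : Bit V C d → Bool)
    (h : IsListColourable (remainingEdges E L ω) (remainingList E L ω)) :
    IsListColourable E L := by
  obtain ⟨γ, hγL, hγ⟩ := h
  have hex (e : Sym2 V) : ∃ c, e ∈ E → c ∈ L e ∧
      (∀ f ∈ conflictEdges E L e c, ω (Sum.inl f, c) = false) ∧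
      (ω (Sum.inl e, c) = true ∨ e ∈ remainingEdges E L ω ∧ c = γ e) := by
    by_cases hkeep : ∃ c ∈ L e, KeepsColour E L ω e c
    · obtain ⟨c, hc, hactive, hquiet⟩ := hkeep
      exact ⟨c, fun _ ↦ ⟨hc, hquiet, Or.inl hactive⟩⟩
    · refine ⟨γ e, fun he ↦ ?_⟩
      have her : e ∈ remainingEdges E L ω := mem_filter.2 ⟨he, by simpa using hkeep⟩
      obtain ⟨hc, hblock⟩ := mem_filter.1 (hγL e her)
      exact ⟨hc, fun f hf ↦ hblock _ (mem_edgeBlockers_of_mem_conflictEdges hf), Or.inr ⟨her, rfl⟩⟩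
  choose γ' hγ' using hex
  have hinactive {e f : Sym2 V} (he : e ∈ E) (hf : f ∈ E) (hne : e ≠ f)
      (hv : ∃ v, v ∈ e ∧ v ∈ f) (heq : γ' e = γ' f) : ¬ ω (Sum.inl e, γ' e) = true := by
    obtain ⟨v, hve, hvf⟩ := hv
    have hconf : e ∈ conflictEdges E L f (γ' f) :=
      mem_conflictEdges.2 ⟨hne, v, hvf, mem_colourEdges.2 ⟨he, hve, heq ▸ (hγ' e he).1⟩⟩
    rw [heq, (hγ' f hf).2.1 e hconf]
    exact Bool.false_ne_true
  refine ⟨γ', fun e he ↦ (hγ' e he).1, fun e he f hf hne hv heq ↦ ?_⟩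
  obtain ⟨her, hce⟩ := (hγ' e he).2.2.resolve_left (hinactive he hf hne hv heq)
  obtain ⟨hfr, hcf⟩ := (hγ' f hf).2.2.resolve_left
    (hinactive hf he hne.symm (hv.imp fun _ ↦ And.symm) heq.symm)
  exact hγ e her f hfr hne hv (hce.symm.trans (heq.trans hcf))

theorem card_colourEdges_remaining_le (ω : Bit V C d → Bool) (v : V) (c : C) :
    #(colourEdges (remainingEdges E L ω) (remainingList E L ω) v c) ≤
      silentCount (colourEdges E L v c) (survivalBlockers E L v c) ω +
        conflictCount (incidentBits E L v c) (conflictBits E L) ω := by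
  set silent : Finset (Sym2 V) :=
    {e ∈ colourEdges E L v c | ∀ i ∈ survivalBlockers E L v c e, ω i = false}
  set conflict : Finset (Bit V C d) :=
    {i ∈ incidentBits E L v c | ω i = true ∧ ∃ j ∈ conflictBits E L i, ω j = true}
  have hsub : (colourEdges (remainingEdges E L ω) (remainingList E L ω) v c).image Sum.inl ⊆
      silent.image Sum.inl ∪ conflict.image Prod.fst := by
    simp only [image_subset_iff, mem_colourEdges, remainingEdges, remainingList, mem_filter]
    rintro e ⟨⟨heE, hkeep⟩, hve, hcL, hunblocked⟩
    have he : e ∈ colourEdges E L v c := mem_colourEdges.2 ⟨heE, hve, hcL⟩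
    by_cases hactive : ∃ c' ∈ L e, ω (Sum.inl e, c') = true
    · obtain ⟨c', hc', hωe⟩ := hactive
      obtain ⟨f, hf, hωf⟩ : ∃ f ∈ conflictEdges E L e c', ω (Sum.inl f, c') = true := by
        simpa [KeepsColour, hωe] using hkeep c' hc'
      refine mem_union_right _ (mem_image.2 ⟨(Sum.inl e, c'), mem_filter.2 ⟨?_, hωe, ?_⟩, rfl⟩)
      · exact mem_biUnion.2 ⟨e, he, by simpa [edgeBits] using hc'⟩
      · exact ⟨(Sum.inl f, c'), by simpa [conflictBits] using hf, hωf⟩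
    · refine mem_union_left _ (mem_image_of_mem _ (mem_filter.2 ⟨he, fun i hi ↦ ?_⟩))
      obtain hi | hi := mem_union.1 hi
      · obtain ⟨hie, hiL⟩ := mem_product.1 hi
        obtain ⟨x, c'⟩ := i
        obtain rfl : x = Sum.inl e := mem_singleton.1 hie
        simpa using fun h ↦ hactive ⟨c', hiL, h⟩
      · exact hunblocked i (biUnion_subset_biUnion_of_subset_left _ (erase_subset _ _) hi)
  calc _ = #((colourEdges (remainingEdges E L ω) (remainingList E L ω) v c).image
        (Sum.inl : _ → Sym2 V ⊕ V × Fin d)) := (card_image_of_injective _ Sum.inl_injective).symm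
    _ ≤ #(silent.image Sum.inl) + #(conflict.image Prod.fst) :=
        (card_le_card hsub).trans (card_union_le _ _)
    _ ≤ #silent + #conflict := Nat.add_le_add card_image_le card_image_le

section Cardinalities

theorem card_vertexBlockers (he : e ∈ colourEdges E L u c) (hd : #(colourEdges E L u c) ≤ d) :
    #(vertexBlockers E L e c u : Finset (Bit V C d)) = d - 1 := by
  have hpos : 0 < #(colourEdges E L u c) := card_pos.2 ⟨e, he⟩
  simp only [vertexBlockers, card_product, card_disjSum, card_singleton, card_erase_of_mem he,
    Fin.card_filter_val_lt]
  omega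

theorem card_edgeBlockers_le (he : e ∈ E) (hc : c ∈ L e)
    (hd : ∀ v c, #(colourEdges E L v c) ≤ d) :
    #(edgeBlockers E L e c : Finset (Bit V C d)) ≤ 2 * (d - 1) := by
  calc _ ≤ #e.toFinset * (d - 1) := card_biUnion_le_card_mul _ _ _ fun u hu ↦
        (card_vertexBlockers (mem_colourEdges.2 ⟨he, Sym2.mem_toFinset.1 hu, hc⟩) (hd u c)).le
    _ ≤ 2 * (d - 1) := Nat.mul_le_mul_right _ (card_toFinset_le_two e)

theorem card_survivalBlockers (hdiag : ¬ e.IsDiag) (he : e ∈ colourEdges E L v c)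
    (hd : ∀ v c, #(colourEdges E L v c) ≤ d) :
    #(survivalBlockers E L v c e : Finset (Bit V C d)) = #(L e) + (d - 1) := by
  obtain ⟨heE, hve, hc⟩ := mem_colourEdges.1 he
  have hcard : #(e.toFinset.erase v) = 1 := by
    rw [card_erase_of_mem (Sym2.mem_toFinset.2 hve), Sym2.card_toFinset_of_not_isDiag e hdiag]
  obtain ⟨w, hw⟩ := card_eq_one.1 hcard
  have hwe : w ∈ e := Sym2.mem_toFinset.1 (mem_of_mem_erase (hw ▸ mem_singleton_self w))
  have hdisj : Disjoint (edgeBits L e : Finset (Bit V C d)) (vertexBlockers E L e c w) := by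
    refine disjoint_product.2 (Or.inl ?_)
    simp
  rw [survivalBlockers, hw, singleton_biUnion, card_union_of_disjoint hdisj,
    card_vertexBlockers (mem_colourEdges.2 ⟨heE, hwe, hc⟩) (hd w c), edgeBits, card_product,
    card_singleton, one_mul]

theorem snd_eq_of_mem_vertexBlockers {i : Bit V C d} (hi : i ∈ vertexBlockers E L e c u) :
    i.2 = c :=
  mem_singleton.1 (mem_product.1 hi).2

theorem card_filter_mem_edgeBlockers_le (i : Bit V C d) :
    #{c ∈ L e | i ∈ edgeBlockers E L e c} ≤ 1 := by
  refine card_le_one.2 fun c hc c' hc' ↦ ?_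
  obtain ⟨u, -, hi⟩ := mem_biUnion.1 (mem_filter.1 hc).2
  obtain ⟨u', -, hi'⟩ := mem_biUnion.1 (mem_filter.1 hc').2
  exact (snd_eq_of_mem_vertexBlockers hi).symm.trans (snd_eq_of_mem_vertexBlockers hi')

/-- The ends of an edge proper, or the vertex carrying a dummy edge. -/
def bitEnds : Sym2 V ⊕ V × Fin d → Finset V
  | Sum.inl e => e.toFinset
  | Sum.inr (u, _) => {u}

theorem card_bitEnds_le (x : Sym2 V ⊕ V × Fin d) : #(bitEnds x) ≤ 2 := by
  rcases x with e | ⟨u, j⟩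
  · exact card_toFinset_le_two e
  · simp [bitEnds]

theorem mem_bitEnds_of_mem_vertexBlockers {i : Bit V C d} (hi : i ∈ vertexBlockers E L e c u) :
    u ∈ bitEnds i.1 := by
  obtain ⟨f | ⟨w, j⟩, c'⟩ := i
  · have hf : f ∈ colourEdges E L u c := mem_of_mem_erase (inl_mem_disjSum.1 (mem_product.1 hi).1)
    exact Sym2.mem_toFinset.2 (mem_colourEdges.1 hf).2.1
  · have hw := (mem_product.1 (inr_mem_disjSum.1 (mem_product.1 hi).1)).1
    rwa [bitEnds, mem_singleton, eq_comm, ← mem_singleton]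

/-- A bit blocks `e` only through an end `u ≠ v` of `e`, which determines `e` as `s(v, u)`. -/
theorem card_filter_mem_survivalBlockers_le (i : Bit V C d) :
    #{e ∈ colourEdges E L v c | i ∈ survivalBlockers E L v c e} ≤ 2 := by
  refine (card_le_card (t := (bitEnds i.1).image fun u ↦ s(v, u)) fun e he ↦ ?_).trans
    (card_image_le.trans (card_bitEnds_le i.1))
  obtain ⟨he, hi⟩ := mem_filter.1 he
  obtain ⟨heE, hve, -⟩ := mem_colourEdges.1 he
  obtain ⟨u, rfl⟩ := hve
  suffices u ∈ bitEnds i.1 from mem_image_of_mem _ this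
  obtain hi | hi := mem_union.1 hi
  · rw [mem_singleton.1 (mem_product.1 hi).1]
    exact Sym2.mem_toFinset.2 (Sym2.mem_mk_right v u)
  · obtain ⟨w, hw, hi⟩ := mem_biUnion.1 hi
    obtain ⟨hwv, hwe⟩ := mem_erase.1 hw
    obtain rfl : w = u := (Sym2.mem_iff.1 (Sym2.mem_toFinset.1 hwe)).resolve_left hwv
    exact mem_bitEnds_of_mem_vertexBlockers hi

theorem card_incidentBits_le {n l : ℕ} (hn : ∀ v c, #(colourEdges E L v c) ≤ n)
    (hl : ∀ e ∈ E, #(L e) = l) (v : V) (c : C) :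
    #(incidentBits E L v c : Finset (Bit V C d)) ≤ n * l := by
  refine (card_biUnion_le_card_mul _ _ l fun e he ↦ ?_).trans (Nat.mul_le_mul_right l (hn v c))
  rw [edgeBits, card_product, card_singleton, one_mul, hl e (mem_colourEdges.1 he).1]

theorem card_filter_incidentBits_le (v : V) (c c' : C) :
    #{i ∈ (incidentBits E L v c : Finset (Bit V C d)) | i.2 = c'} ≤ #(colourEdges E L v c) := by
  refine (card_le_card (t := (colourEdges E L v c).image fun e ↦ (Sum.inl e, c'))
    fun i hi ↦ ?_).trans card_image_le
  obtain ⟨hi, hc'⟩ := mem_filter.1 hi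
  obtain ⟨e, he, hie⟩ := mem_biUnion.1 hi
  exact mem_image.2 ⟨e, he, Prod.ext (mem_singleton.1 (mem_product.1 hie).1).symm hc'.symm⟩

theorem card_conflictBits_le {n : ℕ} (hn : ∀ v c, #(colourEdges E L v c) ≤ n) (i : Bit V C d) :
    #(conflictBits E L i) ≤ 2 * n := by
  obtain ⟨e | _, c⟩ := i
  · rw [conflictBits, card_product, card_singleton, mul_one]
    exact card_image_le.trans (card_conflictEdges_le hn e c)
  · simp [conflictBits]

theorem snd_eq_of_mem_conflictBits {i j : Bit V C d} (hj : j ∈ conflictBits E L i) :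
    j.2 = i.2 := by
  obtain ⟨e | _, c⟩ := i
  · exact mem_singleton.1 (mem_product.1 hj).2
  · exact absurd hj (notMem_empty j)

theorem notMem_conflictBits (i : Bit V C d) : i ∉ conflictBits E L i := by
  obtain ⟨e | _, c⟩ := i <;> simp [conflictBits, mem_conflictEdges]

end Cardinalities

end Nibble

section Locality

variable {V C : Type*} [Fintype V] [DecidableEq V] {d : ℕ}
  {E : Finset (Sym2 V)} {L : Sym2 V → Finset C} {e : Sym2 V} {c : C} {u v w : V}

/-- The vertex `v` together with its neighbours along the edges in `E`. -/
def closedNeighbours (E : Finset (Sym2 V)) (v : V) : Finset V :=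
  insert v (univ.filter fun w ↦ s(v, w) ∈ E)

theorem mem_closedNeighbours : w ∈ closedNeighbours E v ↔ w = v ∨ s(v, w) ∈ E := by
  simp [closedNeighbours]

theorem mem_closedNeighbours_comm : w ∈ closedNeighbours E v ↔ v ∈ closedNeighbours E w := by
  rw [mem_closedNeighbours, mem_closedNeighbours, eq_comm, Sym2.eq_swap]

theorem mem_closedNeighbours_of_mem_edge (he : e ∈ E) (hv : v ∈ e) (hw : w ∈ e) :
    w ∈ closedNeighbours E v := by
  obtain ⟨x, rfl⟩ := hv
  obtain rfl | rfl := Sym2.mem_iff.1 hw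
  · exact mem_closedNeighbours.2 (Or.inl rfl)
  · exact mem_closedNeighbours.2 (Or.inr he)

theorem card_closedNeighbours_le {D : ℕ} (hD : ∀ v, #{e ∈ E | v ∈ e} ≤ D) (v : V) :
    #(closedNeighbours E v) ≤ D + 1 := by
  have hinj : #{w | s(v, w) ∈ E} ≤ #{e ∈ E | v ∈ e} :=
    card_le_card_of_injOn (fun w ↦ s(v, w)) (fun w hw ↦ by simpa using hw)
      (Set.injOn_of_injective (Sym2.mkEmbedding v).injective)
  exact (card_insert_le _ _).trans (Nat.add_le_add_right (hinj.trans (hD v)) 1)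

theorem mem_closedNeighbours_of_mem_bitEnds {x : Sym2 V ⊕ V × Fin d}
    (hx : x ∈ E.disjSum univ) (hu : u ∈ bitEnds x) (hw : w ∈ bitEnds x) :
    w ∈ closedNeighbours E u := by
  obtain e | ⟨y, j⟩ := x
  · exact mem_closedNeighbours_of_mem_edge (inl_mem_disjSum.1 hx) (Sym2.mem_toFinset.1 hu)
      (Sym2.mem_toFinset.1 hw)
  · rw [mem_singleton.1 hu, mem_singleton.1 hw]
    exact mem_insert_self _ _

/-- The bits of the edges, proper or dummy, within distance one of `v`. -/
def localBits (C : Type*) [Fintype C] (d : ℕ) (E : Finset (Sym2 V)) (v : V) : Finset (Bit V C d) :=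
  {i | i.1 ∈ E.disjSum univ ∧ ∃ u ∈ bitEnds i.1, u ∈ closedNeighbours E v}

variable [Fintype C]

theorem mem_localBits {i : Bit V C d} :
    i ∈ localBits C d E v ↔ i.1 ∈ E.disjSum univ ∧ ∃ u ∈ bitEnds i.1, u ∈ closedNeighbours E v := by
  simp [localBits]

theorem edgeBits_subset_localBits (he : e ∈ E) (hv : v ∈ e) :
    (edgeBits L e : Finset (Bit V C d)) ⊆ localBits C d E v := by
  intro i hi
  obtain hie := mem_singleton.1 (mem_product.1 hi).1
  rw [mem_localBits, hie]
  exact ⟨inl_mem_disjSum.2 he, v, Sym2.mem_toFinset.2 hv, mem_insert_self _ _⟩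

theorem card_not_disjoint_localBits_le [DecidableEq C] {D : ℕ}
    (hD : ∀ v, #{e ∈ E | v ∈ e} ≤ D) (v : V) :
    #{w | ¬ Disjoint (localBits C d E w) (localBits C d E v)} ≤ (D + 1) ^ 3 := by
  have hsub : univ.filter (fun w ↦ ¬ Disjoint (localBits C d E w) (localBits C d E v)) ⊆
      ((closedNeighbours E v).biUnion (closedNeighbours E)).biUnion (closedNeighbours E) := by
    intro w hw
    obtain ⟨i, hiw, hiv⟩ := not_disjoint_iff.1 (mem_filter.1 hw).2
    obtain ⟨hiE, x, hx, hxw⟩ := mem_localBits.1 hiw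
    obtain ⟨-, y, hy, hyv⟩ := mem_localBits.1 hiv
    exact mem_biUnion.2 ⟨x, mem_biUnion.2 ⟨y, hyv, mem_closedNeighbours_of_mem_bitEnds hiE hy hx⟩,
      mem_closedNeighbours_comm.1 hxw⟩
  calc _ ≤ _ := card_le_card hsub
    _ ≤ #((closedNeighbours E v).biUnion (closedNeighbours E)) * (D + 1) :=
        card_biUnion_le_card_mul _ _ _ fun x _ ↦ card_closedNeighbours_le hD x
    _ ≤ #(closedNeighbours E v) * (D + 1) * (D + 1) := Nat.mul_le_mul_right _
        (card_biUnion_le_card_mul _ _ _ fun x _ ↦ card_closedNeighbours_le hD x)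
    _ ≤ (D + 1) * (D + 1) * (D + 1) := by gcongr; exact card_closedNeighbours_le hD v
    _ = (D + 1) ^ 3 := by ring

theorem exists_forall_notMem_of_dependsOn_localBits {D : ℕ} {q : ℝ} (p : Bit V C d → I)
    {A : V → Set (Bit V C d → Bool)} (hD : ∀ v, #{e ∈ E | v ∈ e} ≤ D)
    (hA : ∀ v, DependsOn (· ∈ A v) (localBits C d E v : Set (Bit V C d)))
    (hq : ∀ v, (randomBits p).real (A v) ≤ q) (hqD : 4 * q * (D + 1) ^ 3 ≤ 1) :
    ∃ ω, ∀ v, ω ∉ A v := by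
  classical
  exact exists_forall_notMem_of_dependsOn _ hA hq (card_not_disjoint_localBits_le hD)
    (Nat.one_le_pow _ _ D.succ_pos) (by exact_mod_cast hqD)

variable [DecidableEq C]

theorem vertexBlockers_subset_localBits (hu : u ∈ closedNeighbours E v) :
    (vertexBlockers E L e c u : Finset (Bit V C d)) ⊆ localBits C d E v := by
  refine fun i hi ↦ mem_localBits.2 ⟨?_, u, mem_bitEnds_of_mem_vertexBlockers hi, hu⟩
  refine disjSum_mono ?_ (subset_univ _) (mem_product.1 hi).1
  exact (erase_subset _ _).trans (filter_subset _ _)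

theorem edgeBlockers_subset_localBits (he : e ∈ E) (hv : v ∈ e) :
    (edgeBlockers E L e c : Finset (Bit V C d)) ⊆ localBits C d E v :=
  biUnion_subset.2 fun _ hu ↦ vertexBlockers_subset_localBits
    (mem_closedNeighbours_of_mem_edge he hv (Sym2.mem_toFinset.1 hu))

theorem dependsOn_card_remainingList (he : e ∈ E) (hv : v ∈ e) :
    DependsOn (fun ω : Bit V C d → Bool ↦ #(remainingList E L ω e))
      (localBits C d E v : Set (Bit V C d)) :=
  dependsOn_silentCount.mono (coe_subset.2 (biUnion_subset.2 fun _ _ ↦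
    edgeBlockers_subset_localBits he hv))

theorem dependsOn_silentCount_survivalBlockers :
    DependsOn (silentCount (colourEdges E L v c) (survivalBlockers E L v c))
      (localBits C d E v : Set (Bit V C d)) := by
  refine dependsOn_silentCount.mono (coe_subset.2 (biUnion_subset.2 fun e he ↦ ?_))
  obtain ⟨heE, hve, -⟩ := mem_colourEdges.1 he
  exact union_subset (edgeBits_subset_localBits heE hve)
    ((biUnion_subset_biUnion_of_subset_left _ (erase_subset _ _)).trans
      (edgeBlockers_subset_localBits heE hve))

theorem dependsOn_conflictCount_incidentBits :
    DependsOn (conflictCount (incidentBits E L v c) (conflictBits E L))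
      (localBits C d E v : Set (Bit V C d)) := by
  refine dependsOn_conflictCount.mono ?_
  rw [← coe_union, coe_subset, incidentBits]
  refine union_subset (biUnion_subset.2 fun e he ↦ ?_) (biUnion_subset.2 fun i hi ↦ ?_)
  · exact edgeBits_subset_localBits (mem_colourEdges.1 he).1 (mem_colourEdges.1 he).2.1
  · obtain ⟨e, he, hie⟩ := mem_biUnion.1 hi
    obtain ⟨heE, hve, -⟩ := mem_colourEdges.1 he
    obtain ⟨x, c'⟩ := i
    obtain rfl : x = Sum.inl e := mem_singleton.1 (mem_product.1 hie).1
    exact conflictBits_subset_edgeBlockers.trans (edgeBlockers_subset_localBits heE hve)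

end Locality

section NibbleStep

/-- The parameters of a nibble for lists of size `l` and colour degrees at most `r * l`: each bit is
`true` with probability `p = θ / l`, and the number `d` of dummy edges at a vertex is `r * l`
rounded up. -/
structure NibbleParams (l d : ℕ) (θ r : ℝ) (p : I) : Prop where
  pos : 0 < θ
  le_quarter : θ ≤ 1 / 4
  ratio_nonneg : 0 ≤ r
  ratio_le_one : r ≤ 1
  prob_mul : (p : ℝ) * l = θ
  prob_le_sq : (p : ℝ) ≤ θ ^ 2
  le_dummies : r * l ≤ d
  dummies_le : d ≤ r * l + 1

theorem exists_nibbleParams {l : ℕ} {θ r : ℝ} (hθ0 : 0 < θ) (hθ : θ ≤ 1 / 4) (hr0 : 0 ≤ r)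
    (hr : r ≤ 1) (hl : 1 ≤ θ * l) : ∃ d p, NibbleParams l d θ r p := by
  have hl0 : (0 : ℝ) < l := pos_of_mul_pos_right (one_pos.trans_le hl) hθ0.le
  have hpθ : θ / l ≤ θ ^ 2 := by
    rw [div_le_iff₀ hl0]
    nlinarith
  refine ⟨⌈r * l⌉₊, ⟨θ / l, by positivity, by nlinarith⟩, hθ0, hθ, hr0, hr, ?_, hpθ, Nat.le_ceil _,
    (Nat.ceil_lt_add_one (by positivity)).le⟩
  exact div_mul_cancel₀ θ hl0.ne'

namespace NibbleParams

variable {l d : ℕ} {θ r : ℝ} {p : I}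

theorem list_pos (P : NibbleParams l d θ r p) : (0 : ℝ) < l :=
  pos_of_mul_pos_right (P.prob_mul ▸ P.pos) p.2.1

theorem pred_dummies_mul_prob_le (P : NibbleParams l d θ r p) :
    ((d - 1 : ℕ) : ℝ) * p ≤ θ * r := by
  have hd : ((d - 1 : ℕ) : ℝ) ≤ r * l := by
    have hdummies := P.dummies_le
    have hrl : 0 ≤ r * l := mul_nonneg P.ratio_nonneg l.cast_nonneg
    rcases d with _ | m
    · simpa using hrl
    · simpa using hdummies
  calc _ ≤ r * l * p := mul_le_mul_of_nonneg_right hd p.2.1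
    _ = θ * r := by rw [← P.prob_mul]; ring

theorem le_one_sub_prob_pow (P : NibbleParams l d θ r p) :
    1 - 2 * θ * r ≤ (1 - p : ℝ) ^ (2 * (d - 1)) := by
  have hbernoulli := one_add_mul_le_pow (a := -(p : ℝ)) (by linarith [p.2.2]) (2 * (d - 1))
  have := P.pred_dummies_mul_prob_le
  rw [← sub_eq_add_neg] at hbernoulli
  push_cast at hbernoulli
  linarith

theorem one_sub_prob_pow_le (P : NibbleParams l d θ r p) :
    (1 - p : ℝ) ^ (l + (d - 1)) ≤ 1 - θ - θ * r + 5 * θ ^ 2 := by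
  have hθ := P.pos
  have hθ4 := P.le_quarter
  have hr := P.ratio_le_one
  have hθr : 0 ≤ θ * r := mul_nonneg hθ.le P.ratio_nonneg
  have hp := P.prob_le_sq
  set x : ℝ := θ + θ * r - p
  have hx0 : 0 ≤ x := by simp only [x]; nlinarith
  have hx : x ≤ 2 * θ := by simp only [x]; nlinarith [p.2.1]
  have hxp : x ≤ (l + (d - 1) : ℕ) * p := by
    have hd : (r * l - 1 : ℝ) ≤ (d - 1 : ℕ) :=
      (sub_le_sub_right P.le_dummies 1).trans (sub_le_iff_le_add.2 (by norm_cast; omega))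
    have hp0 := p.2.1
    calc x = p * l + (r * l - 1) * p := by simp only [x]; rw [← P.prob_mul]; ring
      _ ≤ p * l + (d - 1 : ℕ) * p := by gcongr
      _ = (l + (d - 1) : ℕ) * p := by push_cast; ring
  calc (1 - p : ℝ) ^ (l + (d - 1)) ≤ Real.exp (-p) ^ (l + (d - 1)) :=
        pow_le_pow_left₀ (sub_nonneg.2 p.2.2) (Real.one_sub_le_exp_neg p) _
    _ = Real.exp (-((l + (d - 1) : ℕ) * p)) := by rw [← Real.exp_nat_mul, mul_neg]
    _ ≤ Real.exp (-x) := Real.exp_le_exp.2 (neg_le_neg hxp)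
    _ ≤ 1 - x + x ^ 2 := by
        have := (abs_le.1 (Real.abs_exp_sub_one_sub_id_le (x := -x)
          (abs_le.2 ⟨by linarith, by linarith⟩))).2
        linarith [neg_sq x]
    _ ≤ 1 - θ - θ * r + 5 * θ ^ 2 := by
        have := pow_le_pow_left₀ hx0 hx 2
        simp only [x] at *
        nlinarith

theorem mul_ratio_le (P : NibbleParams l d θ r p) : θ * r ≤ θ :=
  mul_le_of_le_one_right P.pos.le P.ratio_le_one

theorem sq_mul_le (P : NibbleParams l d θ r p) : θ ^ 2 * l ≤ 2 * l :=
  mul_le_mul_of_nonneg_right (by nlinarith [P.pos, P.le_quarter]) P.list_pos.le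

section Tails

variable {V C : Type*} [Fintype V] [DecidableEq V] [Fintype C] [DecidableEq C]
  {E : Finset (Sym2 V)} {L : Sym2 V → Finset C} {e : Sym2 V} {v : V} {c : C}

theorem measureReal_card_remainingList_le_le (P : NibbleParams l d θ r p)
    (hl : ∀ e ∈ E, #(L e) = l) (hd : ∀ v c, #(colourEdges E L v c) ≤ d) (he : e ∈ E) :
    (randomBits fun _ : Bit V C d ↦ p).real
      {ω | #(remainingList E L ω e) ≤ l * (1 - 2 * θ * r) - θ ^ 2 * l} ≤
        Real.exp (-(θ ^ 4 * l / 8)) := by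
  have hl0 := P.list_pos
  have hθ := P.pos
  have hp : 0 ≤ (p : ℝ) ∧ (p : ℝ) ≤ 1 := p.2
  have hblockers (c) (hc : c ∈ L e) : #(edgeBlockers E L e c : Finset (Bit V C d)) ≤ 2 * (d - 1) :=
    card_edgeBlockers_le he hc hd
  have hk (i : Bit V C d) : (#{c ∈ L e | i ∈ edgeBlockers E L e c} : ℝ) ≤ 2 := by
    exact_mod_cast (card_filter_mem_edgeBlockers_le i).trans one_le_two
  have hM : ∑ c ∈ L e, ∑ _i ∈ (edgeBlockers E L e c : Finset (Bit V C d)), (p : ℝ) ≤ l := by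
    calc _ ≤ #(L e) • (1 : ℝ) := sum_le_card_nsmul _ _ _ fun c hc ↦ ?_
      _ = l := by rw [hl e he, nsmul_one]
    calc _ = (#(edgeBlockers E L e c : Finset (Bit V C d)) : ℝ) * p := by
          rw [sum_const, nsmul_eq_mul]
      _ ≤ (2 * (d - 1) : ℕ) * p :=
          mul_le_mul_of_nonneg_right (Nat.cast_le.2 (hblockers c hc)) hp.1
      _ ≤ 1 := by
          push_cast
          linarith [P.pred_dummies_mul_prob_le, P.mul_ratio_le, P.le_quarter]
  have hm : l * (1 - 2 * θ * r) ≤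
      ∑ c ∈ L e, ∏ _i ∈ (edgeBlockers E L e c : Finset (Bit V C d)), (1 - p : ℝ) := by
    rw [← nsmul_eq_mul, ← hl e he]
    refine card_nsmul_le_sum _ _ _ fun c hc ↦ P.le_one_sub_prob_pow.trans ?_
    rw [prod_const]
    exact pow_le_pow_of_le_one (sub_nonneg.2 hp.2) (by linarith) (hblockers c hc)
  calc _ ≤ _ := measureReal_silentCount_le_le hk two_pos hM hl0 hm (by positivity) P.sq_mul_le
    _ = Real.exp (-(θ ^ 4 * l / 8)) := by congr 2; field_simp; ring

theorem measureReal_silentCount_survivalBlockers_ge_le (P : NibbleParams l d θ r p)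
    (hE : ∀ e ∈ E, ¬ e.IsDiag) (hl : ∀ e ∈ E, #(L e) = l)
    (hd : ∀ v c, #(colourEdges E L v c) ≤ d) (hr : #(colourEdges E L v c) ≤ r * l) :
    (randomBits fun _ : Bit V C d ↦ p).real
      {ω | r * l * (1 - θ - θ * r + 5 * θ ^ 2) + θ ^ 2 * l ≤
        silentCount (colourEdges E L v c) (survivalBlockers E L v c) ω} ≤
        Real.exp (-(θ ^ 4 * l / 8)) := by
  have hl0 := P.list_pos
  have hθ := P.pos
  have hblockers (e) (he : e ∈ colourEdges E L v c) :
      #(survivalBlockers E L v c e : Finset (Bit V C d)) = l + (d - 1) := by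
    obtain ⟨heE, -, -⟩ := mem_colourEdges.1 he
    rw [card_survivalBlockers (hE e heE) he hd, hl e heE]
  have hk (i : Bit V C d) :
      (#{e ∈ colourEdges E L v c | i ∈ survivalBlockers E L v c e} : ℝ) ≤ 2 := by
    exact_mod_cast card_filter_mem_survivalBlockers_le i
  have hM : ∑ e ∈ colourEdges E L v c,
      ∑ _i ∈ (survivalBlockers E L v c e : Finset (Bit V C d)), (p : ℝ) ≤ l := by
    calc _ ≤ #(colourEdges E L v c) • (1 : ℝ) := sum_le_card_nsmul _ _ _ fun e he ↦ ?_
      _ ≤ r * l := by rwa [nsmul_one]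
      _ ≤ l := mul_le_of_le_one_left hl0.le P.ratio_le_one
    rw [sum_const, hblockers e he, nsmul_eq_mul, Nat.cast_add, add_mul, mul_comm (l : ℝ),
      P.prob_mul]
    linarith [P.pred_dummies_mul_prob_le, P.mul_ratio_le, P.le_quarter]
  have hm : ∑ e ∈ colourEdges E L v c,
      ∏ _i ∈ (survivalBlockers E L v c e : Finset (Bit V C d)), (1 - p : ℝ) ≤
        r * l * (1 - θ - θ * r + 5 * θ ^ 2) := by
    calc _ = ∑ _e ∈ colourEdges E L v c, (1 - p : ℝ) ^ (l + (d - 1)) :=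
          sum_congr rfl fun _ he ↦ by rw [prod_const, hblockers _ he]
      _ ≤ r * l * (1 - θ - θ * r + 5 * θ ^ 2) := by
          rw [sum_const, nsmul_eq_mul]
          exact mul_le_mul hr P.one_sub_prob_pow_le (pow_nonneg (sub_nonneg.2 p.2.2) _)
            ((Nat.cast_nonneg _).trans hr)
  calc _ ≤ _ := measureReal_silentCount_ge_le hk two_pos hM hl0 hm (by positivity) P.sq_mul_le
    _ = Real.exp (-(θ ^ 4 * l / 8)) := by congr 2; field_simp; ring

theorem measureReal_conflictCount_incidentBits_ge_le (P : NibbleParams l d θ r p)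
    (hl : ∀ e ∈ E, #(L e) = l) (hn : ∀ v c, #(colourEdges E L v c) ≤ l) :
    (randomBits fun _ : Bit V C d ↦ p).real
      {ω | 2 * (36 * θ ^ 2 * l) ≤ conflictCount (incidentBits E L v c) (conflictBits E L) ω} ≤
        Real.exp (-(θ ^ 4 * l / 8)) := by
  have hl0 := P.list_pos
  have hp : 0 ≤ (p : ℝ) := p.2.1
  have hX (c') : 4 * (p : ℝ) * #{i ∈ (incidentBits E L v c : Finset (Bit V C d)) | i.2 = c'} ≤ 1 :=
    calc _ ≤ 4 * (p : ℝ) * l := by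
          gcongr
          exact (card_filter_incidentBits_le v c c').trans (hn v c)
      _ ≤ 1 := by rw [mul_assoc, P.prob_mul]; linarith [P.le_quarter]
  have hM : 18 * (p : ℝ) ^ 2 *
      ∑ i ∈ (incidentBits E L v c : Finset (Bit V C d)), (#(conflictBits E L i) : ℝ) ≤
        36 * θ ^ 2 * l :=
    calc _ ≤ 18 * (p : ℝ) ^ 2 *
          (#(incidentBits E L v c : Finset (Bit V C d)) • (2 * l : ℕ) : ℝ) := by
          gcongr
          exact sum_le_card_nsmul _ _ _ fun i _ ↦ Nat.cast_le.2 (card_conflictBits_le hn i)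
      _ ≤ 18 * (p : ℝ) ^ 2 * ((l * l : ℕ) * (2 * l : ℕ)) := by
          rw [nsmul_eq_mul]
          gcongr
          exact card_incidentBits_le hn hl v c
      _ = 36 * θ ^ 2 * l := by rw [← P.prob_mul]; push_cast; ring
  calc _ ≤ Real.exp (-(36 * θ ^ 2 * l)) := measureReal_conflictCount_ge_le
        (fun _ _ _ ↦ snd_eq_of_mem_conflictBits) (fun i _ ↦ notMem_conflictBits i) hX hM
    _ ≤ Real.exp (-(θ ^ 4 * l / 8)) := by
        have hθ : θ ^ 2 ≤ 1 := pow_le_one₀ P.pos.le (P.le_quarter.trans (by norm_num))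
        rw [Real.exp_le_exp, neg_le_neg_iff]
        calc θ ^ 4 * l / 8 = θ ^ 2 * l * θ ^ 2 / 8 := by ring
          _ ≤ θ ^ 2 * l * 1 / 8 := by gcongr
          _ ≤ 36 * θ ^ 2 * l := by linarith [mul_nonneg (sq_nonneg θ) hl0.le]

end Tails

end NibbleParams

section BadOutcomes

variable {V C : Type*} [DecidableEq V] [DecidableEq C] {d : ℕ} {E : Finset (Sym2 V)}
  {L : Sym2 V → Finset C} {v : V} {c : C} {x y z : ℝ}

/-- The colours in the lists of the edges at `v`. -/
def vertexColours (E : Finset (Sym2 V)) (L : Sym2 V → Finset C) (v : V) : Finset C :=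
  {e ∈ E | v ∈ e}.biUnion L

theorem card_vertexColours_le {l D : ℕ} (hl : ∀ e ∈ E, #(L e) = l)
    (hD : #{e ∈ E | v ∈ e} ≤ D) : #(vertexColours E L v) ≤ D * l :=
  (card_biUnion_le_card_mul _ _ l fun e he ↦ (hl e (mem_filter.1 he).1).le).trans
    (Nat.mul_le_mul_right l hD)

theorem colourEdges_eq_empty (hc : c ∉ vertexColours E L v) : colourEdges E L v c = ∅ :=
  eq_empty_of_forall_notMem fun e he ↦ hc <| by
    obtain ⟨heE, hve, hce⟩ := mem_colourEdges.1 he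
    exact mem_biUnion.2 ⟨e, mem_filter.2 ⟨heE, hve⟩, hce⟩

/-- The outcomes of the nibble that are bad at `v`: some edge at `v` retains a list of size at most
`x`, or for some colour one of the counts bounding the remaining colour degree of `v` is at least
`y` or `z`. -/
def badOutcomes (E : Finset (Sym2 V)) (L : Sym2 V → Finset C) (x y z : ℝ) (v : V) :
    Set (Bit V C d → Bool) :=
  (⋃ e ∈ ({e ∈ E | v ∈ e} : Finset (Sym2 V)), {ω | #(remainingList E L ω e) ≤ x}) ∪
    ⋃ c ∈ vertexColours E L v,
      ({ω | y ≤ silentCount (colourEdges E L v c) (survivalBlockers E L v c) ω} ∪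
        {ω | z ≤ conflictCount (incidentBits E L v c) (conflictBits E L) ω})

theorem dependsOn_mem_badOutcomes [Fintype V] [Fintype C] :
    DependsOn (· ∈ badOutcomes E L x y z v) (localBits C d E v : Set (Bit V C d)) := by
  intro ω ω' h
  simp only [badOutcomes, Set.mem_union, Set.mem_iUnion, Set.mem_ofPred_eq, mem_filter]
  refine propext (or_congr (exists₂_congr fun e he ↦ ?_) (exists₂_congr fun c _ ↦ ?_))
  · have hcard : #(remainingList E L ω e) = #(remainingList E L ω' e) :=
      dependsOn_card_remainingList he.1 he.2 h
    rw [hcard]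
  · rw [dependsOn_silentCount_survivalBlockers h, dependsOn_conflictCount_incidentBits h]

theorem measureReal_badOutcomes_le {l D : ℕ} {q : ℝ} (μ : Measure (Bit V C d → Bool))
    [IsFiniteMeasure μ] (hl : ∀ e ∈ E, #(L e) = l) (hD : #{e ∈ E | v ∈ e} ≤ D) (hq : 0 ≤ q)
    (hx : ∀ e ∈ E, μ.real {ω | #(remainingList E L ω e) ≤ x} ≤ q)
    (hy : ∀ c, μ.real {ω | y ≤ silentCount (colourEdges E L v c) (survivalBlockers E L v c) ω} ≤ q)
    (hz : ∀ c, μ.real {ω | z ≤ conflictCount (incidentBits E L v c) (conflictBits E L) ω} ≤ q) :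
    μ.real (badOutcomes E L x y z v) ≤ (D + D * l * 2) * q := by
  have hlists : μ.real (⋃ e ∈ ({e ∈ E | v ∈ e} : Finset (Sym2 V)),
      {ω | #(remainingList E L ω e) ≤ x}) ≤ D * q := by
    calc _ ≤ ∑ e ∈ E with v ∈ e, μ.real {ω | #(remainingList E L ω e) ≤ x} :=
          measureReal_biUnion_finset_le _ _
      _ ≤ #{e ∈ E | v ∈ e} • q := sum_le_card_nsmul _ _ _ fun e he ↦ hx e (mem_filter.1 he).1
      _ ≤ D * q := by rw [nsmul_eq_mul]; gcongr
  have hdegrees : μ.real (⋃ c ∈ vertexColours E L v,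
      ({ω | y ≤ silentCount (colourEdges E L v c) (survivalBlockers E L v c) ω} ∪
        {ω | z ≤ conflictCount (incidentBits E L v c) (conflictBits E L) ω})) ≤
        (D * l : ℕ) * (q + q) := by
    calc _ ≤ _ := measureReal_biUnion_finset_le _ _
      _ ≤ #(vertexColours E L v) • (q + q) := sum_le_card_nsmul _ _ _ fun c _ ↦
          (measureReal_union_le _ _).trans (add_le_add (hy c) (hz c))
      _ ≤ (D * l : ℕ) * (q + q) := by
          rw [nsmul_eq_mul]
          gcongr
          exact card_vertexColours_le hl hD
  calc _ ≤ _ := (measureReal_union_le _ _).trans (add_le_add hlists hdegrees)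
    _ = (D + D * l * 2) * q := by push_cast; ring

theorem lt_card_remainingList_of_notMem {ω : Bit V C d → Bool} {e : Sym2 V} (he : e ∈ E)
    (hv : v ∈ e) (hω : ω ∉ badOutcomes E L x y z v) : x < #(remainingList E L ω e) := by
  by_contra! h
  exact hω (Or.inl (Set.mem_biUnion (mem_coe.2 (mem_filter.2 ⟨he, hv⟩)) h))

theorem card_colourEdges_remaining_le_of_notMem {ω : Bit V C d → Bool} (hy : 0 ≤ y) (hz : 0 ≤ z)
    (hω : ω ∉ badOutcomes E L x y z v) (c : C) :
    #(colourEdges (remainingEdges E L ω) (remainingList E L ω) v c) ≤ y + z := by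
  by_cases hc : c ∈ vertexColours E L v
  · simp only [badOutcomes, Set.mem_union, Set.mem_iUnion, Set.mem_ofPred_eq, not_or, not_exists,
      not_le] at hω
    obtain ⟨hsilent, hconflict⟩ := hω.2 c hc
    calc _ ≤ _ := Nat.cast_le.2 (card_colourEdges_remaining_le ω v c)
      _ ≤ y + z := by rw [Nat.cast_add]; exact add_le_add hsilent.le hconflict.le
  · have hempty : colourEdges (remainingEdges E L ω) (remainingList E L ω) v c = ∅ := by
      rw [← subset_empty, ← colourEdges_eq_empty hc]
      intro e he
      obtain ⟨heE, hve, hce⟩ := mem_colourEdges.1 he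
      exact mem_colourEdges.2 ⟨(mem_filter.1 heE).1, hve, (mem_filter.1 hce).1⟩
    rw [hempty]
    simpa using add_nonneg hy hz

end BadOutcomes

theorem exists_nibble {V C : Type*} [Finite V] [DecidableEq V] [Finite C] [DecidableEq C]
    {E : Finset (Sym2 V)} {L : Sym2 V → Finset C} {l D : ℕ} {θ r : ℝ} (hE : ∀ e ∈ E, ¬ e.IsDiag)
    (hl : ∀ e ∈ E, #(L e) = l) (hr : ∀ v c, #(colourEdges E L v c) ≤ r * l)
    (hD : ∀ v, #{e ∈ E | v ∈ e} ≤ D) (hθ0 : 0 < θ) (hθ : θ ≤ 1 / 4) (hr0 : 0 ≤ r) (hr1 : r ≤ 1)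
    (hθl : 1 ≤ θ * l)
    (hq : 4 * ((D + D * l * 2) * Real.exp (-(θ ^ 4 * l / 8))) * (D + 1) ^ 3 ≤ 1) :
    ∃ E' ⊆ E, ∃ L' : Sym2 V → Finset C, (IsListColourable E' L' → IsListColourable E L) ∧
      (∀ e ∈ E', l * (1 - 2 * θ * r - θ ^ 2) < #(L' e)) ∧
      ∀ v c, #(colourEdges E' L' v c) ≤ l * (r * (1 - θ - θ * r) + 78 * θ ^ 2) := by
  cases nonempty_fintype V
  cases nonempty_fintype C
  obtain ⟨d, p, P⟩ := exists_nibbleParams hθ0 hθ hr0 hr1 hθl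
  have hnd (v c) : #(colourEdges E L v c) ≤ d := Nat.cast_le.1 ((hr v c).trans P.le_dummies)
  have hnl (v c) : #(colourEdges E L v c) ≤ l :=
    Nat.cast_le.1 ((hr v c).trans (mul_le_of_le_one_left l.cast_nonneg hr1))
  have hfactor : 0 ≤ 1 - θ - θ * r := by linarith [P.mul_ratio_le]
  obtain ⟨ω, hω⟩ := exists_forall_notMem_of_dependsOn_localBits (fun _ : Bit V C d ↦ p) hD
    (fun v ↦ dependsOn_mem_badOutcomes)
    (fun v ↦ measureReal_badOutcomes_le _ hl (hD v) (Real.exp_nonneg _)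
      (fun e he ↦ P.measureReal_card_remainingList_le_le hl hnd he)
      (fun c ↦ P.measureReal_silentCount_survivalBlockers_ge_le hE hl hnd (hr v c))
      (fun c ↦ P.measureReal_conflictCount_incidentBits_ge_le hl hnl)) hq
  refine ⟨remainingEdges E L ω, remainingEdges_subset, remainingList E L ω, .of_remaining ω,
    fun e he ↦ ?_, fun v c ↦ ?_⟩
  · have hlarge :=
      lt_card_remainingList_of_notMem (remainingEdges_subset he) e.out_fst_mem (hω e.out.1)
    linarith
  · have hsmall := card_colourEdges_remaining_le_of_notMem (by positivity) (by positivity) (hω v) c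
    have hrθ : r * (θ ^ 2 * l) ≤ θ ^ 2 * l := mul_le_of_le_one_left (by positivity) hr1
    linarith

end NibbleStep

section UniformChoice

variable {ι : Type*} [Fintype ι] {α : ι → Type*} [∀ i, Fintype (α i)] [∀ i, Nonempty (α i)]
  [∀ i, MeasurableSpace (α i)] [∀ i, MeasurableSingletonClass (α i)]

theorem measureReal_pi_uniformOn_eval_eq (i : ι) (a : α i) :
    (Measure.pi fun i ↦ uniformOn (Set.univ : Set (α i))).real {ω | ω i = a} =
      (Fintype.card (α i) : ℝ)⁻¹ := by
  have hmp := measurePreserving_eval (fun i ↦ uniformOn (Set.univ : Set (α i))) i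
  have h := hmp.measureReal_preimage (MeasurableSet.singleton a).nullMeasurableSet
  refine h.trans ?_
  simp [measureReal_def, uniformOn_univ]

theorem measureReal_pi_uniformOn_eval_eq_and_eval_eq {i j : ι} (hij : i ≠ j) (a : α i) (b : α j) :
    (Measure.pi fun i ↦ uniformOn (Set.univ : Set (α i))).real {ω | ω i = a ∧ ω j = b} =
      (Fintype.card (α i) : ℝ)⁻¹ * (Fintype.card (α j) : ℝ)⁻¹ := by
  have hindep : IndepSet {ω | ω i = a} {ω | ω j = b}
      (Measure.pi fun i ↦ uniformOn (Set.univ : Set (α i))) := by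
    refine indepSet_pi_of_dependsOn _ (disjoint_singleton.2 hij) ?_ ?_
    all_goals
      intro ω ω' h
      simp [h _ (mem_coe.2 (mem_singleton_self _))]
  rw [← measureReal_pi_uniformOn_eval_eq i a, ← measureReal_pi_uniformOn_eval_eq j b]
  simp only [measureReal_def, ← ENNReal.toReal_mul]
  exact congrArg _ hindep.measure_inter_eq_mul

end UniformChoice

section Finish

variable {V C : Type*} [DecidableEq V] {E : Finset (Sym2 V)}
  {L : Sym2 V → Finset C} {e f : Sym2 V} {c : C} {n l : ℕ}

/-- The edges of `E` occurring in the triple `t`. -/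
def conflictEnds (E : Finset (Sym2 V)) (t : Sym2 V × C × Sym2 V) : Finset E :=
  {x | x.1 = t.1 ∨ x.1 = t.2.2}

theorem mem_conflictEnds {t : Sym2 V × C × Sym2 V} {x : E} :
    x ∈ conflictEnds E t ↔ x.1 = t.1 ∨ x.1 = t.2.2 := by
  simp [conflictEnds]

/-- The colourings `ω` of `E` from the lists that give both edges of the triple `t` its colour. -/
def monochromaticChoices (t : Sym2 V × C × Sym2 V) : Set (∀ e : E, L e) :=
  {ω | ∀ x ∈ conflictEnds E t, (ω x : C) = t.2.1}

theorem dependsOn_mem_monochromaticChoices (t : Sym2 V × C × Sym2 V) :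
    DependsOn (· ∈ monochromaticChoices (E := E) (L := L) t) (conflictEnds E t : Set E) := by
  intro ω ω' h
  refine propext (forall₂_congr fun x hx ↦ ?_)
  rw [h x (mem_coe.2 hx)]

variable [DecidableEq C]

/-- The triples `(e, c, f)` of adjacent edges `e`, `f` and a colour `c` in both their lists. -/
def conflicts (E : Finset (Sym2 V)) (L : Sym2 V → Finset C) : Finset (Sym2 V × C × Sym2 V) :=
  E.biUnion fun e ↦ (L e).biUnion fun c ↦ {e} ×ˢ {c} ×ˢ conflictEdges E L e c

theorem mem_conflicts :
    (e, c, f) ∈ conflicts E L ↔ e ∈ E ∧ c ∈ L e ∧ f ∈ conflictEdges E L e c := by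
  simp only [conflicts, mem_biUnion, mem_product, mem_singleton]
  grind

theorem mem_conflicts_swap (h : (e, c, f) ∈ conflicts E L) : (f, c, e) ∈ conflicts E L := by
  obtain ⟨he, hc, hf⟩ := mem_conflicts.1 h
  obtain ⟨hne, v, hve, hf⟩ := mem_conflictEdges.1 hf
  obtain ⟨hfE, hvf, hcf⟩ := mem_colourEdges.1 hf
  exact mem_conflicts.2 ⟨hfE, hcf, mem_conflictEdges.2
    ⟨hne.symm, v, hvf, mem_colourEdges.2 ⟨he, hve, hc⟩⟩⟩

theorem card_filter_conflicts_fst_le (hn : ∀ v c, #(colourEdges E L v c) ≤ n)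
    (he : #(L e) ≤ l) : #{t ∈ conflicts E L | t.1 = e} ≤ l * (2 * n) := by
  have hsub : {t ∈ conflicts E L | t.1 = e} ⊆
      (L e).biUnion fun c ↦ {e} ×ˢ {c} ×ˢ conflictEdges E L e c := by
    rintro ⟨e', c, f⟩ ht
    obtain ⟨hconf, rfl⟩ : (e', c, f) ∈ conflicts E L ∧ e' = e := mem_filter.1 ht
    obtain ⟨-, hc, hf⟩ := mem_conflicts.1 hconf
    exact mem_biUnion.2 ⟨c, hc, by simpa using hf⟩
  refine (card_le_card hsub).trans ((card_biUnion_le_card_mul _ _ _ fun c _ ↦ ?_).trans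
    (Nat.mul_le_mul_right (2 * n) he))
  simpa using card_conflictEdges_le hn e c

theorem card_filter_conflicts_le (hn : ∀ v c, #(colourEdges E L v c) ≤ n) (he : #(L e) ≤ l) :
    #{t ∈ conflicts E L | t.1 = e ∨ t.2.2 = e} ≤ 4 * n * l := by
  have hfst := card_filter_conflicts_fst_le hn he
  have hsnd : #{t ∈ conflicts E L | t.2.2 = e} ≤ #{t ∈ conflicts E L | t.1 = e} := by
    refine card_le_card_of_injOn (fun t ↦ (t.2.2, t.2.1, t.1)) (fun t ht ↦ ?_) fun t _ t' _ h ↦ ?_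
    · obtain ⟨ht, hte⟩ := mem_filter.1 (mem_coe.1 ht)
      exact mem_coe.2 (mem_filter.2 ⟨mem_conflicts_swap ht, hte⟩)
    · simp only [Prod.mk.injEq] at h
      exact Prod.ext h.2.2 (Prod.ext h.2.1 h.1)
  calc _ ≤ #{t ∈ conflicts E L | t.1 = e} + #{t ∈ conflicts E L | t.2.2 = e} := by
        rw [filter_or]
        exact card_union_le _ _
    _ ≤ 4 * n * l := by linarith

theorem card_filter_not_disjoint_conflictEnds_le (hn : ∀ v c, #(colourEdges E L v c) ≤ n)
    (hl : ∀ e ∈ E, #(L e) = l) (t : conflicts E L) :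
    #{s : conflicts E L | ¬ Disjoint (conflictEnds E s.1) (conflictEnds E t.1)} ≤ 8 * n * l := by
  obtain ⟨⟨e, c, f⟩, ht⟩ := t
  have he : e ∈ E := (mem_conflicts.1 ht).1
  have hf : f ∈ E := (mem_conflicts.1 (mem_conflicts_swap ht)).1
  have hmaps (s) (hs : s ∈ ({s | ¬ Disjoint (conflictEnds E s.1) (conflictEnds E (e, c, f))} :
      Finset (conflicts E L))) : s.1 ∈ {s ∈ conflicts E L | s.1 = e ∨ s.2.2 = e} ∪
        {s ∈ conflicts E L | s.1 = f ∨ s.2.2 = f} := by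
    obtain ⟨x, hxs, hxt⟩ := not_disjoint_iff.1 (mem_filter.1 hs).2
    rw [← filter_or]
    refine mem_filter.2 ⟨s.2, ?_⟩
    simp only [mem_conflictEnds] at hxs hxt
    grind
  calc _ ≤ _ := card_le_card_of_injOn _ hmaps Subtype.val_injective.injOn
    _ ≤ 4 * n * l + 4 * n * l := (card_union_le _ _).trans (Nat.add_le_add
        (card_filter_conflicts_le hn (hl e he).le) (card_filter_conflicts_le hn (hl f hf).le))
    _ = 8 * n * l := by ring

theorem measureReal_monochromaticChoices_le [∀ e : E, Nonempty (L e)]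
    [∀ e : E, MeasurableSpace (L e)] [∀ e : E, MeasurableSingletonClass (L e)]
    (hl : ∀ e ∈ E, #(L e) = l) {t : Sym2 V × C × Sym2 V} (ht : t ∈ conflicts E L) :
    (Measure.pi fun e : E ↦ uniformOn (Set.univ : Set (L e))).real (monochromaticChoices t) ≤
      ((l : ℝ) ^ 2)⁻¹ := by
  obtain ⟨e, c, f⟩ := t
  obtain ⟨he, hce, hef⟩ := mem_conflicts.1 ht
  obtain ⟨hf, hcf, -⟩ := mem_conflicts.1 (mem_conflicts_swap ht)
  have hne : (⟨e, he⟩ : E) ≠ ⟨f, hf⟩ :=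
    fun h ↦ (mem_conflictEdges.1 hef).1 (Subtype.ext_iff.1 h).symm
  have hsub : monochromaticChoices (e, c, f) ⊆
      {ω : ∀ e : E, L e | ω ⟨e, he⟩ = ⟨c, hce⟩ ∧ ω ⟨f, hf⟩ = ⟨c, hcf⟩} := fun ω hω ↦
    ⟨Subtype.ext (hω _ (mem_conflictEnds.2 (Or.inl rfl))),
      Subtype.ext (hω _ (mem_conflictEnds.2 (Or.inr rfl)))⟩
  refine (measureReal_mono hsub).trans (le_of_eq ?_)
  rw [measureReal_pi_uniformOn_eval_eq_and_eval_eq hne, Fintype.card_coe, Fintype.card_coe,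
    hl e he, hl f hf, sq, mul_inv]

theorem isListColourable_of_forall_notMem_monochromaticChoices [Nonempty C]
    {ω : ∀ e : E, L e} (hω : ∀ t ∈ conflicts E L, ω ∉ monochromaticChoices t) :
    IsListColourable E L := by
  refine ⟨fun e ↦ if he : e ∈ E then ω ⟨e, he⟩ else Classical.arbitrary C,
    fun e he ↦ by simp [he], ?_⟩
  rintro e he f hf hne ⟨v, hve, hvf⟩ heq
  simp only [he, hf, dif_pos] at heq
  have hconf : (e, (ω ⟨e, he⟩ : C), f) ∈ conflicts E L := by
    refine mem_conflicts.2 ⟨he, (ω ⟨e, he⟩).2, mem_conflictEdges.2 ⟨hne.symm, v, hve, ?_⟩⟩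
    exact mem_colourEdges.2 ⟨hf, hvf, heq ▸ (ω ⟨f, hf⟩).2⟩
  refine hω _ hconf fun x hx ↦ ?_
  obtain hx | hx := mem_conflictEnds.1 hx
  · rw [← show (⟨e, he⟩ : E) = x from Subtype.ext hx.symm]
  · rw [heq, ← show (⟨f, hf⟩ : E) = x from Subtype.ext hx.symm]

theorem IsListColourable.of_card_colourEdges_le [Nonempty C] (hl : ∀ e ∈ E, #(L e) = l)
    (hn : ∀ v c, #(colourEdges E L v c) ≤ n) (hnl : 32 * n ≤ l) (hn0 : 0 < n) :
    IsListColourable E L := by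
  have hl0 : (0 : ℝ) < l := by exact_mod_cast (show 0 < l by omega)
  have (e : E) : Nonempty (L e) := (card_pos.1 (by rw [hl e e.2]; omega)).to_subtype
  let (e : E) : MeasurableSpace (L e) := ⊤
  obtain ⟨ω, hω⟩ := exists_forall_notMem_of_dependsOn
    (fun e : E ↦ uniformOn (Set.univ : Set (L e)))
    (fun t : conflicts E L ↦ dependsOn_mem_monochromaticChoices t.1)
    (fun t ↦ measureReal_monochromaticChoices_le hl t.2)
    (card_filter_not_disjoint_conflictEnds_le hn hl) (by nlinarith) (by
      have hnl' : (32 * n : ℝ) ≤ l := by exact_mod_cast hnl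
      have : 4 * ((l : ℝ) ^ 2)⁻¹ * (8 * n * l : ℕ) = 32 * n / l := by
        push_cast
        field_simp
        ring
      rw [this]
      exact (div_le_one hl0).2 hnl')
  exact isListColourable_of_forall_notMem_monochromaticChoices fun t ht ↦ hω ⟨t, ht⟩

end Finish

section Iteration

theorem IsListColourable.mono {V C : Type*} {E : Finset (Sym2 V)} {L L' : Sym2 V → Finset C}
    (hL : ∀ e ∈ E, L' e ⊆ L e) (h : IsListColourable E L') : IsListColourable E L :=
  h.imp fun _ ⟨hγ, hproper⟩ ↦ ⟨fun e he ↦ hL e he (hγ e he), hproper⟩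

theorem exists_forall_subset_card_eq {V C : Type*} {E : Finset (Sym2 V)} {L : Sym2 V → Finset C}
    {l : ℕ} (hl : ∀ e ∈ E, l ≤ #(L e)) :
    ∃ L' : Sym2 V → Finset C, ∀ e ∈ E, L' e ⊆ L e ∧ #(L' e) = l := by
  classical
  choose! L' hL' using fun e he ↦ exists_subset_card_eq (hl e he)
  exact ⟨L', hL'⟩

theorem card_colourEdges_mono {V C : Type*} [DecidableEq V] [DecidableEq C] {E : Finset (Sym2 V)}
    {L L' : Sym2 V → Finset C} (hL : ∀ e ∈ E, L' e ⊆ L e) (v : V) (c : C) :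
    #(colourEdges E L' v c) ≤ #(colourEdges E L v c) :=
  card_le_card fun e he ↦
    have ⟨heE, hve, hc⟩ := mem_colourEdges.1 he
    mem_colourEdges.2 ⟨heE, hve, hL e heE hc⟩

/-- List edge colouring is possible at the ratio `r` of colour degree to list size, provided that
the degrees are at most a constant multiple of the list size `l` and `l` is large in terms of that
constant. -/
def IsColourableRatio (r : ℝ) : Prop :=
  ∀ A : ℕ, ∀ᶠ l : ℕ in atTop, ∀ (V C : Type) [Finite V] [Finite C] [Nonempty C] [DecidableEq V]
    [DecidableEq C] (E : Finset (Sym2 V)) (L : Sym2 V → Finset C), (∀ e ∈ E, ¬ e.IsDiag) →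
    (∀ e ∈ E, l ≤ #(L e)) → (∀ v, #{e ∈ E | v ∈ e} ≤ A * l) →
    (∀ v c, #(colourEdges E L v c) ≤ r * l) → IsListColourable E L

theorem isColourableRatio_of_le {r : ℝ} (hr : r ≤ 1 / 32) : IsColourableRatio r := by
  refine fun _ ↦ (eventually_ge_atTop 32).mono fun l hl V C _ _ _ _ _ E L _ hL _ hrl ↦ ?_
  obtain ⟨L', hL'⟩ := exists_forall_subset_card_eq hL
  refine .mono (fun e he ↦ (hL' e he).1) (.of_card_colourEdges_le (n := l / 32)
    (fun e he ↦ (hL' e he).2) (fun v c ↦ ?_) (by omega) (by omega))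
  refine (card_colourEdges_mono (fun e he ↦ (hL' e he).1) v c).trans
    ((Nat.le_div_iff_mul_le (by norm_num)).2 ?_)
  have : (#(colourEdges E L v c) : ℝ) * 32 ≤ l := by
    linarith [hrl v c, mul_le_mul_of_nonneg_right hr l.cast_nonneg]
  exact_mod_cast this

open Polynomial in
theorem eventually_eval_mul_exp_le (p : ℝ[X]) {κ b : ℝ} (hκ : 0 < κ) (hb : 0 < b) :
    ∀ᶠ l : ℕ in atTop, p.eval (l : ℝ) * Real.exp (-(κ * l)) ≤ b := by
  have h := (p.comp (Polynomial.C κ⁻¹ * X)).tendsto_div_exp_atTop.comp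
    ((tendsto_natCast_atTop_atTop (R := ℝ)).const_mul_atTop hκ)
  filter_upwards [h.eventually_le_const hb] with l hl
  simpa [Real.exp_neg, div_eq_mul_inv, inv_mul_cancel_left₀ hκ.ne'] using hl

open Polynomial in
theorem eventually_nibble_failure_le (A : ℕ) {κ : ℝ} (hκ : 0 < κ) :
    ∀ᶠ l : ℕ in atTop, 4 * (((A * l : ℕ) + (A * l : ℕ) * l * 2) * Real.exp (-(κ * l))) *
      ((A * l : ℕ) + 1) ^ 3 ≤ 1 := by
  let p : ℝ[X] := 4 * ((A : ℝ[X]) * X + (A : ℝ[X]) * X * X * 2) * ((A : ℝ[X]) * X + 1) ^ 3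
  filter_upwards [eventually_eval_mul_exp_le p hκ one_pos] with l hl
  simp only [p, eval_mul, eval_add, eval_pow, eval_natCast, eval_X, eval_ofNat, eval_one] at hl
  push_cast
  linarith

theorem nibble_ratio_le {r δ θ : ℝ} (hθ0 : 0 < θ) (hθ : 5056 * θ ≤ δ) (hr : 1 / 32 ≤ r)
    (hrδ : r ≤ 1 - δ) :
    r * (1 - θ - θ * r) + 78 * θ ^ 2 ≤ (r - θ * δ / 64) * (1 - 2 * θ * r - θ ^ 2) := by
  have hδ : δ / 32 ≤ r * (1 - r) := by nlinarith
  have hgain : θ * (δ / 32) ≤ θ * (r * (1 - r)) := by gcongr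
  have hloss : 79 * θ ^ 2 ≤ θ * δ / 64 := by nlinarith
  have hrθ : r * θ ^ 2 ≤ θ ^ 2 := by nlinarith [sq_nonneg θ]
  have hδθ : 0 ≤ θ * δ / 64 * (2 * θ * r + θ ^ 2) := by
    have : 0 < δ := by linarith
    positivity
  linarith

theorem IsColourableRatio.step {r δ θ : ℝ} (hθ0 : 0 < θ) (hθ : 5056 * θ ≤ δ) (hr : 1 / 32 ≤ r)
    (hrδ : r ≤ 1 - δ) (h : IsColourableRatio (r - θ * δ / 64)) : IsColourableRatio r := by
  intro A
  set a : ℝ := 1 - 2 * θ * r - θ ^ 2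
  have ha : 1 / 2 ≤ a := by
    have : θ * r ≤ θ := by nlinarith
    have : θ ^ 2 ≤ θ := by nlinarith
    linarith
  obtain ⟨l₁, hl₁⟩ := eventually_atTop.1 (h (2 * A))
  have hθl := ((tendsto_natCast_atTop_atTop (R := ℝ)).const_mul_atTop hθ0).eventually_ge_atTop 1
  filter_upwards [eventually_ge_atTop (2 * l₁), hθl,
    eventually_nibble_failure_le A (κ := θ ^ 4 / 8) (by positivity)]
    with l hl hθl hfail V C _ _ _ _ _ E L hE hL hD hrl
  obtain ⟨L', hL'⟩ := exists_forall_subset_card_eq hL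
  refine .mono (fun e he ↦ (hL' e he).1) ?_
  have hrl' (v c) : #(colourEdges E L' v c) ≤ r * l := (hrl v c).trans' <|
    Nat.cast_le.2 (card_colourEdges_mono (fun e he ↦ (hL' e he).1) v c)
  obtain ⟨E', hE'E, L'', hcol, hlist, hdeg⟩ := exists_nibble hE (fun e he ↦ (hL' e he).2) hrl' hD
    hθ0 (by linarith) (by linarith) (by linarith) hθl (by rwa [mul_div_right_comm])
  have hl' : l * a ≤ ⌈l * a⌉₊ := Nat.le_ceil _
  have hhalf : l ≤ 2 * ⌈l * a⌉₊ := by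
    have : (l : ℝ) ≤ 2 * ⌈l * a⌉₊ := by nlinarith
    exact_mod_cast this
  refine hcol (hl₁ ⌈l * a⌉₊ (by omega) V C E' L'' (fun e he ↦ hE e (hE'E he))
    (fun e he ↦ Nat.ceil_le.2 (hlist e he).le) (fun v ↦ ?_) fun v c ↦ ?_)
  · calc _ ≤ #{e ∈ E | v ∈ e} := card_le_card (filter_subset_filter _ hE'E)
      _ ≤ A * l := hD v
      _ ≤ 2 * A * ⌈l * a⌉₊ := by nlinarith
  · calc _ ≤ l * (r * (1 - θ - θ * r) + 78 * θ ^ 2) := hdeg v c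
      _ ≤ l * ((r - θ * δ / 64) * a) := by gcongr; exact nibble_ratio_le hθ0 hθ hr hrδ
      _ = (r - θ * δ / 64) * (l * a) := by ring
      _ ≤ (r - θ * δ / 64) * ⌈l * a⌉₊ := by gcongr; nlinarith

theorem isColourableRatio_of_lt_one {r : ℝ} (hr : r < 1) : IsColourableRatio r := by
  set δ := 1 - r
  have hθ : 0 < δ / 5056 := div_pos (sub_pos.2 hr) (by norm_num)
  set η := δ / 5056 * δ / 64
  have hη : 0 < η := div_pos (mul_pos hθ (sub_pos.2 hr)) (by norm_num)
  have key (n : ℕ) : ∀ s ≤ 1 - δ, s ≤ 1 / 32 + n * η → IsColourableRatio s := by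
    induction n with
    | zero => exact fun s _ hs ↦ isColourableRatio_of_le (by simpa using hs)
    | succ n ih =>
      intro s hsδ hs
      obtain hs32 | hs32 := le_total s (1 / 32)
      · exact isColourableRatio_of_le hs32
      · refine .step hθ (by linarith) hs32 hsδ
          (ih (s - η) (by linarith) ?_)
        push_cast at hs
        linarith
  obtain ⟨n, hn⟩ := exists_nat_ge (r / η)
  refine key n r (by simp [δ]) ?_
  linarith [(div_le_iff₀ hη).1 hn]

end Iteration

section ListChromIndex

variable {V : Type} {G : SimpleGraph V}

theorem listChromIndex_le [Finite V] [Fintype G.edgeSet] {k : ℕ}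
    (h : ∀ N (L : Sym2 V → Finset (Fin (N + 1))), (∀ e ∈ G.edgeFinset, k ≤ #(L e)) →
      IsListColourable G.edgeFinset L) : listChromIndex G ≤ k := by
  refine Nat.sInf_le fun L hL ↦ ?_
  obtain ⟨N, hN⟩ : ∃ N, ∀ e, ∀ c ∈ L e, c < N + 1 := by
    choose bound hbound using fun e ↦ (L e).bddAbove
    obtain ⟨N, hN⟩ := (Set.finite_range bound).bddAbove
    exact ⟨N, fun e c hc ↦ Nat.lt_succ_of_le ((hbound e hc).trans (hN ⟨e, rfl⟩))⟩
  obtain ⟨γ, hγL, hγ⟩ := h N (fun e ↦ (L e).attachFin (hN e)) (by simpa using hL)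
  simp only [SimpleGraph.mem_edgeFinset, mem_attachFin] at hγL hγ
  exact ⟨fun e ↦ γ e, hγL, fun e he f hf hne hv heq ↦ hγ e he f hf hne hv (Fin.ext heq)⟩

theorem eventually_listChromIndex_le {r : ℝ} (hr : r < 1) :
    ∀ᶠ k : ℕ in atTop, ∀ (V : Type) [Fintype V] (G : SimpleGraph V)
      [DecidableRel G.Adj], G.maxDegree ≤ r * k → listChromIndex G ≤ k := by
  filter_upwards [isColourableRatio_of_lt_one hr 1] with k hk V _ G _ hG
  classical
  have hdeg (v : V) : #{e ∈ G.edgeFinset | v ∈ e} ≤ G.maxDegree := by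
    rw [← SimpleGraph.incidenceFinset_eq_filter, G.card_incidenceFinset_eq_degree]
    exact G.degree_le_maxDegree v
  have hΔ : G.maxDegree ≤ k := by
    have : (G.maxDegree : ℝ) ≤ k := hG.trans (mul_le_of_le_one_left k.cast_nonneg hr.le)
    exact_mod_cast this
  refine listChromIndex_le fun N L hL ↦ hk V _ _ L ?_ hL (fun v ↦ ?_) fun v c ↦ hG.trans' ?_
  · exact fun e he ↦ G.not_isDiag_of_mem_edgeSet (SimpleGraph.mem_edgeFinset.1 he)
  · rw [one_mul]
    exact (hdeg v).trans hΔ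
  · exact Nat.cast_le.2 ((card_le_card fun e he ↦ mem_filter.2
      ((mem_colourEdges.1 he).imp_right And.left)).trans (hdeg v))

end ListChromIndex

end ListEdgeColouring

theorem stmt_17 :
    ∀ ε : ℝ, 0 < ε →
    ∃ Δ₀ : ℕ, ∀ (V : Type) [Fintype V] [DecidableEq V]
      (G : SimpleGraph V) [DecidableRel G.Adj],
      Δ₀ ≤ G.maxDegree →
      (listChromIndex G : ℝ) ≤ (1 + ε) * (G.maxDegree : ℝ) := by
  intro ε hε
  have hr : (1 + ε / 2)⁻¹ < 1 := inv_lt_one_of_one_lt₀ (by linarith)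
  have hlin {c : ℝ} (hc : 0 < c) : Tendsto (fun Δ : ℕ ↦ c * Δ) atTop atTop :=
    tendsto_natCast_atTop_atTop.const_mul_atTop hc
  have hfloor : Tendsto (fun Δ : ℕ ↦ ⌊(1 + ε) * (Δ : ℝ)⌋₊) atTop atTop :=
    tendsto_nat_floor_atTop.comp (hlin (by linarith))
  obtain ⟨Δ₀, hΔ₀⟩ := eventually_atTop.1 <|
    (hfloor.eventually (ListEdgeColouring.eventually_listChromIndex_le hr)).and
      ((hlin (half_pos hε)).eventually_ge_atTop 1)
  refine ⟨Δ₀, fun V _ _ G _ hG ↦ ?_⟩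
  obtain ⟨hcol, hΔ⟩ := hΔ₀ G.maxDegree hG
  have hk : listChromIndex G ≤ ⌊(1 + ε) * (G.maxDegree : ℝ)⌋₊ := by
    refine hcol V G ?_
    rw [inv_mul_eq_div, le_div_iff₀ (by linarith)]
    linarith [Nat.lt_floor_add_one ((1 + ε) * (G.maxDegree : ℝ))]
  exact (Nat.cast_le.2 hk).trans (Nat.floor_le (by positivity))
end

section
/- If G is a finite bipartite simple graph and L is a list assignment of E(G) such that |L(e)| ≥ max{deg(u), deg(v)} for every edge e = uv, then there is an L-edge-colouring of G. -/
/-!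
The argument is that of Borodin, Kostochka and Woodall. By Galvin's method it suffices to give
every vertex a linear order on its edges such that each edge `e = uv` is preceded by fewer than
`max (deg u) (deg v)` edges at `u` and `v` together: the edges whose list contains a fixed colour
`c` have a stable matching, which may be given the colour `c` and deleted, since every other edge
whose list contains `c` then loses a predecessor.

The orders are built by peeling off matchings. Let `s e` and `t e` be the two ends of `e`, where by
symmetry there are at most as many `s`-ends as `t`-ends. A weak violation of Hall's condition then
gives a nonempty matching `M` such that, on an edge whose `t`-end is matched and has at most the
degree of its `s`-end, the `s`-end is matched as well. Placing `M` last at the `s`-ends and first at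
the `t`-ends adds at most one predecessor to any other edge `e`, and only if `t e` is matched; in
that case deleting `M` lowers the maximum of the two degrees by one.
-/

open Finset

namespace BipartiteMultigraph

variable {ε α β ι κ C : Type*}

/-- The function `p` is injective on each fibre of `s` in `E`. With `s` sending an edge to one of
its ends, this says both that `p` ranks the edges at every such end without ties and that `p` is a
proper colouring at these ends. -/
def InjOnFibers (p : ε → ι) (s : ε → α) (E : Finset ε) : Prop :=
  ∀ ⦃e⦄, e ∈ E → ∀ ⦃f⦄, f ∈ E → s e = s f → p e = p f → e = f

/-- A matching in the bipartite multigraph whose edge `e` joins `s e` to `t e`. -/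
structure IsMatching (s : ε → α) (t : ε → β) (M : Finset ε) : Prop where
  left : Set.InjOn s M
  right : Set.InjOn t M

/-- A proper edge-colouring from the lists `L` of the bipartite multigraph with edge set `E`, in
which `e` joins `s e` to `t e`. -/
structure IsListColouring (s : ε → α) (t : ε → β) (L : ε → Finset C) (γ : ε → C)
    (E : Finset ε) : Prop where
  mem : ∀ e ∈ E, γ e ∈ L e
  left : InjOnFibers γ s E
  right : InjOnFibers γ t E

section Basic

variable {s : ε → α} {t : ε → β} {p : ε → ι} {L : ε → Finset C} {γ : ε → C} {c : C}
  {E F K M : Finset ε}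

lemma InjOnFibers.mono (hp : InjOnFibers p s F) (h : E ⊆ F) : InjOnFibers p s E :=
  fun _ he _ hf => hp (h he) (h hf)

variable [DecidableEq ε]

lemma InjOnFibers.piecewise_const {b : ι} (hp : InjOnFibers p s (E \ M))
    (hM : Set.InjOn s M) (hb : ∀ e ∈ E \ M, p e ≠ b) :
    InjOnFibers (M.piecewise (fun _ => b) p) s E := by
  intro e he f hf hs hpb
  by_cases heM : e ∈ M <;> by_cases hfM : f ∈ M <;> simp only [heM, hfM, not_false_eq_true,
    piecewise_eq_of_mem, piecewise_eq_of_notMem] at hpb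
  · exact hM heM hfM hs
  · exact absurd hpb.symm (hb f (mem_sdiff.2 ⟨hf, hfM⟩))
  · exact absurd hpb (hb e (mem_sdiff.2 ⟨he, heM⟩))
  · exact hp (mem_sdiff.2 ⟨he, heM⟩) (mem_sdiff.2 ⟨hf, hfM⟩) hs hpb

lemma IsListColouring.piecewise_const [DecidableEq C] (hK : IsMatching s t K)
    (hc : ∀ e ∈ K, c ∈ L e) (hγ : IsListColouring s t (fun e => (L e).erase c) γ (E \ K)) :
    IsListColouring s t L (K.piecewise (fun _ => c) γ) E where
  mem e he := by
    by_cases heK : e ∈ K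
    · simpa [heK] using hc e heK
    · simpa [heK] using mem_of_mem_erase (hγ.mem e (mem_sdiff.2 ⟨he, heK⟩))
  left := hγ.left.piecewise_const hK.left fun e he => ne_of_mem_erase (hγ.mem e he)
  right := hγ.right.piecewise_const hK.right fun e he => ne_of_mem_erase (hγ.mem e he)

end Basic

section Preferred

variable [DecidableEq α]

/-- The edges of `E` with `s`-end `x`; their number is the degree of `x`. -/
def edgesAt (s : ε → α) (E : Finset ε) (x : α) : Finset ε := {f ∈ E | s f = x}

/-- The edges of `E` at the `s`-end of `e` that precede `e` in the order given by `p`: smaller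
values of `p` are preferred. -/
def preferred [LinearOrder ι] (s : ε → α) (p : ε → ι) (E : Finset ε) (e : ε) : Finset ε :=
  {f ∈ E | s f = s e ∧ p f < p e}

variable {s : ε → α} {E F K M : Finset ε} {e f : ε} {x : α}

@[simp]
lemma mem_edgesAt : f ∈ edgesAt s E x ↔ f ∈ E ∧ s f = x := mem_filter

lemma edgesAt_nonempty : (edgesAt s E x).Nonempty ↔ x ∈ E.image s := fiber_nonempty_iff_mem_image

lemma card_edgesAt_le_one (hM : Set.InjOn s M) : #(edgesAt s M x) ≤ 1 := by
  refine card_le_one.2 fun e he f hf => ?_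
  rw [mem_edgesAt] at he hf
  exact hM he.1 hf.1 (he.2.trans hf.2.symm)

lemma card_edgesAt_sdiff_add_card_edgesAt [DecidableEq ε] (hM : M ⊆ E) :
    #(edgesAt s (E \ M) x) + #(edgesAt s M x) = #(edgesAt s E x) := by
  have hsdiff : edgesAt s (E \ M) x = edgesAt s E x \ edgesAt s M x := by
    ext f; simp only [mem_edgesAt, mem_sdiff]; tauto
  rw [hsdiff]
  exact card_sdiff_add_card_eq_card (filter_subset_filter _ hM)

variable [LinearOrder ι] {p : ε → ι}

@[simp]
lemma mem_preferred : f ∈ preferred s p E e ↔ f ∈ E ∧ s f = s e ∧ p f < p e := mem_filter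

lemma preferred_mono (h : E ⊆ F) : preferred s p E e ⊆ preferred s p F e :=
  filter_subset_filter _ h

lemma card_preferred_lt_card_edgesAt (he : e ∈ E) :
    #(preferred s p E e) < #(edgesAt s E (s e)) := by
  refine card_lt_card (ssubset_of_subset_of_ne ?_ ?_)
  · exact fun f hf => mem_edgesAt.2 ⟨(mem_preferred.1 hf).1, (mem_preferred.1 hf).2.1⟩
  · intro h
    have : e ∈ preferred s p E e := h ▸ mem_edgesAt.2 ⟨he, rfl⟩
    exact lt_irrefl _ (mem_preferred.1 this).2.2

variable [DecidableEq ε]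

lemma card_preferred_sdiff_lt (hfK : f ∈ K) (hf : f ∈ preferred s p E e) :
    #(preferred s p (E \ K) e) < #(preferred s p E e) := by
  refine card_lt_card ((ssubset_iff_of_subset (preferred_mono sdiff_subset)).2 ⟨f, hf, ?_⟩)
  simp [hfK]

lemma preferred_piecewise_const_subset {b : ι} (heM : e ∉ M) (hb : p e ≤ b) :
    preferred s (M.piecewise (fun _ => b) p) E e ⊆ preferred s p (E \ M) e := by
  intro f hf
  by_cases hfM : f ∈ M
  · simp [heM, hfM, hb.not_gt] at hf
  · simpa [heM, hfM] using hf

lemma preferred_piecewise_const_subset_union {b : ι} (heM : e ∉ M) :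
    preferred s (M.piecewise (fun _ => b) p) E e ⊆
      preferred s p (E \ M) e ∪ edgesAt s M (s e) := by
  intro f hf
  by_cases hfM : f ∈ M <;> simp_all

lemma preferred_piecewise_const_eq_empty {b : ι} (heM : e ∈ M) (hb : ∀ f ∈ E, b ≤ p f) :
    preferred s (M.piecewise (fun _ => b) p) E e = ∅ := by
  refine filter_eq_empty_iff.2 fun f hf hfe => ?_
  by_cases hfM : f ∈ M
  · simp [heM, hfM] at hfe
  · simp [heM, hfM, (hb f hf).not_gt] at hfe

end Preferred

section StableMatching

variable [DecidableEq α] [DecidableEq β] [LinearOrder ι] [LinearOrder κ]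

/-- A stable matching `K` in the bipartite multigraph `F` whose vertices rank their edges by `p` at
the `s`-ends and by `q` at the `t`-ends. -/
structure IsStableMatching (s : ε → α) (t : ε → β) (p : ε → ι) (q : ε → κ)
    (F K : Finset ε) : Prop extends IsMatching s t K where
  subset : K ⊆ F
  exists_preferred : ∀ e ∈ F, e ∉ K → ∃ f ∈ K, f ∈ preferred s p F e ∨ f ∈ preferred t q F e

/-- The edges of `F` that come first at their `s`-end. -/
def topChoices (s : ε → α) (p : ε → ι) (F : Finset ε) : Finset ε :=
  {e ∈ F | ∀ f ∈ F, s f = s e → p e ≤ p f}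

variable {s : ε → α} {t : ε → β} {p : ε → ι} {q : ε → κ} {E F K : Finset ε} {e e₁ e₂ : ε}

lemma mem_topChoices :
    e ∈ topChoices s p F ↔ e ∈ F ∧ ∀ f ∈ F, s f = s e → p e ≤ p f := mem_filter

lemma injOn_topChoices (hp : InjOnFibers p s F) : Set.InjOn s (topChoices s p F) := by
  intro e he f hf hs
  obtain ⟨heF, hetop⟩ := mem_topChoices.1 he
  obtain ⟨hfF, hftop⟩ := mem_topChoices.1 hf
  exact hp heF hfF hs (le_antisymm (hetop f hfF hs.symm) (hftop e heF hs))

lemma exists_mem_topChoices_mem_preferred (hp : InjOnFibers p s F) (he : e ∈ F)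
    (hetop : e ∉ topChoices s p F) : ∃ f ∈ topChoices s p F, f ∈ preferred s p F e := by
  obtain ⟨f, hf, hmin⟩ := exists_min_image (edgesAt s F (s e)) p ⟨e, mem_edgesAt.2 ⟨he, rfl⟩⟩
  obtain ⟨hfF, hs⟩ := mem_edgesAt.1 hf
  have hftop : f ∈ topChoices s p F := mem_topChoices.2
    ⟨hfF, fun g hg hgf => hmin g (mem_edgesAt.2 ⟨hg, hgf.trans hs⟩)⟩
  have hpne : p f ≠ p e := fun h => hetop (hp hfF he hs h ▸ hftop)
  exact ⟨f, hftop, mem_preferred.2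
    ⟨hfF, hs, (hmin e (mem_edgesAt.2 ⟨he, rfl⟩)).lt_of_ne hpne⟩⟩

lemma isStableMatching_topChoices (hp : InjOnFibers p s F)
    (ht : Set.InjOn t (topChoices s p F)) : IsStableMatching s t p q F (topChoices s p F) where
  left := injOn_topChoices hp
  right := ht
  subset _ he := (mem_topChoices.1 he).1
  exists_preferred _ he hetop :=
    let ⟨f, hf, hfe⟩ := exists_mem_topChoices_mem_preferred hp he hetop
    ⟨f, hf, .inl hfe⟩

/- The Gale–Shapley step: the proposal `e₂` is rejected in favour of `e₁`. If the final matching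
omits `e₁`, then the edge that `t e₁` prefers to `e₁` is also preferred to `e₂`. -/
lemma IsStableMatching.of_erase [DecidableEq ε] (h₁ : e₁ ∈ topChoices s p F)
    (h₂₁ : e₁ ∈ preferred t q F e₂) (hK : IsStableMatching s t p q (F.erase e₂) K) :
    IsStableMatching s t p q F K where
  toIsMatching := hK.toIsMatching
  subset := hK.subset.trans (erase_subset _ _)
  exists_preferred e he heK := by
    obtain ⟨h₁F, ht, hlt⟩ := mem_preferred.1 h₂₁
    have hKF : K ⊆ F := hK.subset.trans (erase_subset _ _)
    by_cases hee : e = e₂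
    · subst hee
      by_cases h₁K : e₁ ∈ K
      · exact ⟨e₁, h₁K, .inr h₂₁⟩
      have hne : e₁ ≠ e := fun h => hlt.ne (congrArg q h)
      obtain ⟨f, hfK, hf | hf⟩ := hK.exists_preferred e₁ (mem_erase.2 ⟨hne, h₁F⟩) h₁K
      · obtain ⟨-, hs, hpf⟩ := mem_preferred.1 hf
        exact absurd hpf ((mem_topChoices.1 h₁).2 f (hKF hfK) hs).not_gt
      · obtain ⟨-, htf, hqf⟩ := mem_preferred.1 hf
        exact ⟨f, hfK, .inr (mem_preferred.2 ⟨hKF hfK, htf.trans ht, hqf.trans hlt⟩)⟩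
    · obtain ⟨f, hfK, hf⟩ := hK.exists_preferred e (mem_erase.2 ⟨hee, he⟩) heK
      exact ⟨f, hfK, hf.imp (preferred_mono (erase_subset _ _) ·)
        (preferred_mono (erase_subset _ _) ·)⟩

theorem exists_isStableMatching (hp : InjOnFibers p s F) (hq : InjOnFibers q t F) :
    ∃ K, IsStableMatching s t p q F K := by
  classical
  induction F using Finset.strongInduction with
  | H F ih =>
    by_cases ht : Set.InjOn t (topChoices s p F)
    · exact ⟨_, isStableMatching_topChoices hp ht⟩
    have reject {e₁ e₂} (h₁ : e₁ ∈ topChoices s p F) (h₂ : e₂ ∈ topChoices s p F)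
        (h : t e₁ = t e₂) (hlt : q e₁ < q e₂) : ∃ K, IsStableMatching s t p q F K := by
      obtain ⟨K, hK⟩ := ih (F.erase e₂) (erase_ssubset (mem_topChoices.1 h₂).1)
        (hp.mono (erase_subset _ _)) (hq.mono (erase_subset _ _))
      exact ⟨K, hK.of_erase h₁ (mem_preferred.2 ⟨(mem_topChoices.1 h₁).1, h, hlt⟩)⟩
    simp only [Set.InjOn, mem_coe, not_forall] at ht
    obtain ⟨e, he, f, hf, htef, hne⟩ := ht
    have hqne : q e ≠ q f := fun h =>
      hne (hq (mem_topChoices.1 he).1 (mem_topChoices.1 hf).1 htef h)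
    exact hqne.lt_or_gt.elim (reject he hf htef) (reject hf he htef.symm)

lemma IsStableMatching.nonempty (hK : IsStableMatching s t p q F K) (hF : F.Nonempty) :
    K.Nonempty := by
  obtain ⟨e, he⟩ := hF
  by_cases heK : e ∈ K
  · exact ⟨e, heK⟩
  · exact (hK.exists_preferred e he heK).imp fun _ hf => hf.1

lemma IsStableMatching.card_preferred_sdiff_add_lt [DecidableEq ε]
    (hK : IsStableMatching s t p q F K) (hFE : F ⊆ E) (he : e ∈ F) (heK : e ∉ K) :
    #(preferred s p (E \ K) e) + #(preferred t q (E \ K) e) <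
      #(preferred s p E e) + #(preferred t q E e) := by
  obtain ⟨f, hfK, hf | hf⟩ := hK.exists_preferred e he heK
  · exact add_lt_add_of_lt_of_le (card_preferred_sdiff_lt hfK (preferred_mono hFE hf))
      (card_le_card (preferred_mono sdiff_subset))
  · exact add_lt_add_of_le_of_lt (card_le_card (preferred_mono sdiff_subset))
      (card_preferred_sdiff_lt hfK (preferred_mono hFE hf))

theorem exists_isListColouring_of_card_preferred_lt [Nonempty C] {L : ε → Finset C}
    (hp : InjOnFibers p s E) (hq : InjOnFibers q t E)
    (hL : ∀ e ∈ E, #(preferred s p E e) + #(preferred t q E e) < #(L e)) :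
    ∃ γ, IsListColouring s t L γ E := by
  classical
  induction E using Finset.strongInduction generalizing L with
  | H E ih =>
    rcases E.eq_empty_or_nonempty with rfl | ⟨e₀, he₀⟩
    · exact ⟨fun _ => Classical.arbitrary C, by simp, by simp [InjOnFibers], by simp [InjOnFibers]⟩
    obtain ⟨c, hc⟩ : (L e₀).Nonempty := card_pos.1 ((Nat.zero_le _).trans_lt (hL e₀ he₀))
    have hFE : {e ∈ E | c ∈ L e} ⊆ E := filter_subset _ _
    obtain ⟨K, hK⟩ := exists_isStableMatching (hp.mono hFE) (hq.mono hFE)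
    have hKne : K.Nonempty := hK.nonempty ⟨e₀, mem_filter.2 ⟨he₀, hc⟩⟩
    have hlists : ∀ e ∈ E \ K,
        #(preferred s p (E \ K) e) + #(preferred t q (E \ K) e) < #((L e).erase c) := by
      intro e he
      obtain ⟨heE, heK⟩ := mem_sdiff.1 he
      have hLe := hL e heE
      by_cases hce : c ∈ L e
      · have := hK.card_preferred_sdiff_add_lt hFE (mem_filter.2 ⟨heE, hce⟩) heK
        rw [card_erase_of_mem hce]
        omega
      · rw [erase_eq_of_notMem hce]
        exact (add_le_add (card_le_card (preferred_mono sdiff_subset))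
          (card_le_card (preferred_mono sdiff_subset))).trans_lt hLe
    obtain ⟨γ, hγ⟩ := ih (E \ K) (sdiff_ssubset (hK.subset.trans hFE) hKne)
      (hp.mono sdiff_subset) (hq.mono sdiff_subset) hlists
    exact ⟨_, hγ.piecewise_const hK.toIsMatching fun e he => (mem_filter.1 (hK.subset he)).2⟩

end StableMatching

section Hall

variable [DecidableEq α] [DecidableEq β]

/-- The vertices joined by an edge of `H` to a vertex of `S`, a set of `t`-ends. -/
def neighbours (s : ε → α) (t : ε → β) (H : Finset ε) (S : Finset β) : Finset α :=
  image s {f ∈ H | t f ∈ S}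

variable {s : ε → α} {t : ε → β} {E H : Finset ε} {Y : Finset β}

lemma neighbours_mono {S T : Finset β} (h : S ⊆ T) : neighbours s t H S ⊆ neighbours s t H T :=
  image_subset_image (monotone_filter_right _ fun _ _ hf => h hf)

lemma exists_isMatching_of_hall (hall : ∀ S ⊆ Y, #S ≤ #(neighbours s t H S)) :
    ∃ M ⊆ H, IsMatching s t M ∧ M.image t = Y := by
  classical
  have hall' (S : Finset Y) : #S ≤ #(S.biUnion fun y => neighbours s t H {y.1}) := by
    have hS : S.biUnion (fun y => neighbours s t H {y.1}) =
        neighbours s t H (S.map (.subtype _)) := by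
      ext x; simp only [neighbours, mem_biUnion, mem_image, mem_filter, mem_singleton, mem_map,
        Function.Embedding.subtype_apply]; grind
    rw [hS, ← card_map (.subtype (· ∈ Y))]
    exact hall _ (map_subtype_subset S)
  obtain ⟨φ, hφ, hmem⟩ := (all_card_le_biUnion_card_iff_exists_injective _).1 hall'
  have hedge (y : Y) : ∃ f ∈ H, t f = y ∧ s f = φ y := by
    simpa [neighbours, and_assoc] using hmem y
  choose m hmH hmt hms using hedge
  refine ⟨univ.image m, by simpa [image_subset_iff] using hmH, ⟨?_, ?_⟩, ?_⟩
  · rw [coe_image]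
    rintro _ ⟨y, -, rfl⟩ _ ⟨z, -, rfl⟩ h
    rw [hφ ((hms y).symm.trans (h.trans (hms z)))]
  · rw [coe_image]
    rintro _ ⟨y, -, rfl⟩ _ ⟨z, -, rfl⟩ h
    rw [Subtype.ext ((hmt y).symm.trans (h.trans (hmt z)))]
  · ext y
    simp [hmt]

/- If Hall's condition fails for some `S ⊆ Y`, then `S` minus a point is a smaller instance. -/
lemma exists_isMatching_neighbours_subset (hY : Y.Nonempty) (hYH : Y ⊆ H.image t)
    (hcard : #(neighbours s t H Y) ≤ #Y) :
    ∃ M ⊆ H, M.Nonempty ∧ IsMatching s t M ∧ neighbours s t H (M.image t) ⊆ M.image s := by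
  induction Y using Finset.strongInduction with
  | H Y ih =>
    by_cases hall : ∀ S ⊆ Y, #S ≤ #(neighbours s t H S)
    · obtain ⟨M, hMH, hM, rfl⟩ := exists_isMatching_of_hall hall
      have hsub : M.image s ⊆ neighbours s t H (M.image t) :=
        image_subset_image fun e he => mem_filter.2 ⟨hMH he, mem_image_of_mem t he⟩
      rw [card_image_of_injOn hM.right, ← card_image_of_injOn hM.left] at hcard
      exact ⟨M, hMH, hY.of_image, hM, (eq_of_subset_of_card_le hsub hcard).ge⟩
    · push Not at hall
      obtain ⟨S, hSY, hS⟩ := hall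
      obtain ⟨y, hy⟩ : S.Nonempty := card_pos.1 ((Nat.zero_le _).trans_lt hS)
      obtain ⟨e, he, hey⟩ := mem_image.1 (hYH (hSY hy))
      have hpos : 0 < #(neighbours s t H S) :=
        card_pos.2 ⟨s e, mem_image_of_mem s (mem_filter.2 ⟨he, hey ▸ hy⟩)⟩
      have hmono := card_le_card (neighbours_mono (s := s) (t := t) (H := H) (erase_subset y S))
      have herase := card_erase_add_one hy
      refine ih (S.erase y) ((erase_ssubset hy).trans_subset hSY) (card_pos.1 ?_)
        (((erase_subset y S).trans hSY).trans hYH) ?_ <;> omega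

lemma exists_isMatching_neighbours_subset_of_card_image_le (hE : E.Nonempty) (hHE : H ⊆ E)
    (hcard : #(E.image s) ≤ #(E.image t)) :
    ∃ M ⊆ E, M.Nonempty ∧ IsMatching s t M ∧ neighbours s t H (M.image t) ⊆ M.image s := by
  by_cases hEH : E.image t ⊆ H.image t
  · have hnbr : neighbours s t H (E.image t) ⊆ E.image s :=
      image_subset_image ((filter_subset _ _).trans hHE)
    obtain ⟨M, hMH, hM⟩ := exists_isMatching_neighbours_subset (hE.image t) hEH
      ((card_le_card hnbr).trans hcard)
    exact ⟨M, hMH.trans hHE, hM⟩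
  · obtain ⟨_, hy, heH⟩ := not_subset.1 hEH
    obtain ⟨e, he, rfl⟩ := mem_image.1 hy
    have hempty : neighbours s t H (image t {e}) = ∅ := by
      simp only [neighbours, image_singleton, mem_singleton, image_eq_empty, filter_eq_empty_iff]
      exact fun f hf hfe => heH (mem_image.2 ⟨f, hf, hfe⟩)
    exact ⟨{e}, singleton_subset_iff.2 he, singleton_nonempty e, ⟨by simp, by simp⟩,
      hempty ▸ empty_subset _⟩

end Hall

section Admissible

variable [DecidableEq α] [DecidableEq β]

/-- Rankings `p` at the `s`-ends and `q` at the `t`-ends such that each edge is preceded by fewer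
edges than the larger degree of its ends. Values in `ℤ` leave room for new first and last
choices. -/
structure Admissible (s : ε → α) (t : ε → β) (p q : ε → ℤ) (E : Finset ε) : Prop where
  left : InjOnFibers p s E
  right : InjOnFibers q t E
  card_lt : ∀ e ∈ E, #(preferred s p E e) + #(preferred t q E e) <
    max #(edgesAt s E (s e)) #(edgesAt t E (t e))

/-- The edges whose `t`-end has at most the degree of their `s`-end. -/
def leftHeavy (s : ε → α) (t : ε → β) (E : Finset ε) : Finset ε :=
  {e ∈ E | #(edgesAt t E (t e)) ≤ #(edgesAt s E (s e))}

variable {s : ε → α} {t : ε → β} {p q : ε → ℤ} {E M : Finset ε} {e : ε}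

lemma Admissible.symm (h : Admissible s t p q E) : Admissible t s q p E where
  left := h.right
  right := h.left
  card_lt e he := by rw [add_comm, max_comm]; exact h.card_lt e he

/- If `t e` is matched, then deleting `M` lowers its degree by one. If moreover `s e` has at least
the degree of `t e`, then `s e` is matched too, so the maximum drops in either case. -/
lemma max_card_edgesAt_sdiff_add_le [DecidableEq ε] (hME : M ⊆ E) (hM : IsMatching s t M)
    (hclosed : neighbours s t (leftHeavy s t E) (M.image t) ⊆ M.image s) (he : e ∈ E) :
    max #(edgesAt s (E \ M) (s e)) #(edgesAt t (E \ M) (t e)) + #(edgesAt t M (t e)) ≤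
      max #(edgesAt s E (s e)) #(edgesAt t E (t e)) := by
  have hs := card_edgesAt_sdiff_add_card_edgesAt (s := s) (x := s e) hME
  have ht := card_edgesAt_sdiff_add_card_edgesAt (s := t) (x := t e) hME
  have ht₁ : #(edgesAt t M (t e)) ≤ 1 := card_edgesAt_le_one hM.right
  have hmatched : 0 < #(edgesAt t M (t e)) → #(edgesAt t E (t e)) ≤ #(edgesAt s E (s e)) →
      0 < #(edgesAt s M (s e)) := by
    simp only [card_pos, edgesAt_nonempty]
    exact fun hte hle =>
      hclosed (mem_image_of_mem s (mem_filter.2 ⟨mem_filter.2 ⟨he, hle⟩, hte⟩))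
  omega

lemma Admissible.piecewise_const [DecidableEq ε] {a b : ℤ}
    (h : Admissible s t p q (E \ M)) (hME : M ⊆ E) (hM : IsMatching s t M)
    (hclosed : neighbours s t (leftHeavy s t E) (M.image t) ⊆ M.image s)
    (ha : ∀ e ∈ E, p e < a) (hb : ∀ e ∈ E, b < q e) :
    Admissible s t (M.piecewise (fun _ => a) p) (M.piecewise (fun _ => b) q) E where
  left := h.left.piecewise_const hM.left fun e he => (ha e (mem_sdiff.1 he).1).ne
  right := h.right.piecewise_const hM.right fun e he => (hb e (mem_sdiff.1 he).1).ne'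
  card_lt e he := by
    by_cases heM : e ∈ M
    · rw [preferred_piecewise_const_eq_empty heM fun f hf => (hb f hf).le, card_empty, add_zero]
      exact (card_preferred_lt_card_edgesAt he).trans_le (le_max_left _ _)
    · calc
        _ ≤ #(preferred s p (E \ M) e) +
              (#(preferred t q (E \ M) e) + #(edgesAt t M (t e))) :=
          add_le_add (card_le_card (preferred_piecewise_const_subset heM (ha e he).le))
            ((card_le_card (preferred_piecewise_const_subset_union heM)).trans
              (card_union_le _ _))
        _ < max #(edgesAt s (E \ M) (s e)) #(edgesAt t (E \ M) (t e)) +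
              #(edgesAt t M (t e)) := by
          rw [← add_assoc]
          exact add_lt_add_left (h.card_lt e (mem_sdiff.2 ⟨he, heM⟩)) _
        _ ≤ _ := max_card_edgesAt_sdiff_add_le hME hM hclosed he

lemma exists_admissible_of_card_image_le (hcard : #(E.image s) ≤ #(E.image t))
    (ih : ∀ D ⊂ E, ∃ p q, Admissible s t p q D) : ∃ p q, Admissible s t p q E := by
  classical
  rcases E.eq_empty_or_nonempty with rfl | hE
  · exact ⟨0, 0, by simp [InjOnFibers], by simp [InjOnFibers], by simp⟩
  obtain ⟨M, hME, hMne, hM, hclosed⟩ := exists_isMatching_neighbours_subset_of_card_image_le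
    (H := leftHeavy s t E) hE (filter_subset _ _) hcard
  obtain ⟨p, q, hpq⟩ := ih (E \ M) (sdiff_ssubset hME hMne)
  obtain ⟨a, ha⟩ := (E.image p).bddAbove
  obtain ⟨b, hb⟩ := (E.image q).bddBelow
  exact ⟨_, _, hpq.piecewise_const (a := a + 1) (b := b - 1) hME hM hclosed
    (fun e he => Int.lt_add_one_of_le (ha (mem_image_of_mem p he)))
    (fun e he => Int.sub_one_lt_of_le (hb (mem_image_of_mem q he)))⟩

theorem exists_admissible (s : ε → α) (t : ε → β) (E : Finset ε) :
    ∃ p q, Admissible s t p q E := by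
  induction E using Finset.strongInduction with
  | H E ih =>
    rcases le_total #(E.image s) #(E.image t) with h | h
    · exact exists_admissible_of_card_image_le h ih
    · have ih' : ∀ D ⊂ E, ∃ q p, Admissible t s q p D := fun D hD =>
        let ⟨p, q, hpq⟩ := ih D hD
        ⟨q, p, hpq.symm⟩
      obtain ⟨q, p, hqp⟩ := exists_admissible_of_card_image_le h ih'
      exact ⟨p, q, hqp.symm⟩

theorem exists_isListColouring [Nonempty C] (s : ε → α) (t : ε → β) {L : ε → Finset C}
    (hL : ∀ e ∈ E, max #(edgesAt s E (s e)) #(edgesAt t E (t e)) ≤ #(L e)) :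
    ∃ γ, IsListColouring s t L γ E := by
  obtain ⟨p, q, hpq⟩ := exists_admissible s t E
  exact exists_isListColouring_of_card_preferred_lt hpq.left hpq.right fun e he =>
    (hpq.card_lt e he).trans_le (hL e he)

end Admissible

lemma exists_ends_of_colorable_two {V : Type*} {G : SimpleGraph V} (hG : G.Colorable 2) :
    ∃ x y : Sym2 V → V, (∀ e, x e ∈ e) ∧ (∀ e, y e ∈ e) ∧
      ∀ e ∈ G.edgeSet, ∀ f ∈ G.edgeSet, ∀ v, v ∈ e → v ∈ f → x e = x f ∨ y e = y f := by
  obtain ⟨c⟩ := hG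
  have hends (e : Sym2 V) : ∃ u v, e = s(u, v) ∧ (e ∈ G.edgeSet → c u = 0 ∧ c v = 1) := by
    induction e with
    | _ u v =>
      have hne (h : s(u, v) ∈ G.edgeSet) : c u ≠ c v := c.valid h
      by_cases hu : c u = 0
      · exact ⟨u, v, rfl, fun h => ⟨hu, by grind⟩⟩
      · exact ⟨v, u, Sym2.eq_swap, fun h => by grind⟩
  choose x y hxy hc using hends
  refine ⟨x, y, fun e => ⟨y e, hxy e⟩, fun e => ⟨x e, (hxy e).trans Sym2.eq_swap⟩,
    fun e he f hf v hve hvf => ?_⟩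
  rw [hxy e, Sym2.mem_iff] at hve
  rw [hxy f, Sym2.mem_iff] at hvf
  obtain ⟨hxe, hye⟩ := hc e he
  obtain ⟨hxf, hyf⟩ := hc f hf
  rcases hve with rfl | rfl <;> rcases hvf with h | h
  · exact .inl h
  · simp [h, hyf] at hxe
  · simp [h, hxf] at hye
  · exact .inr h

end BipartiteMultigraph

open BipartiteMultigraph in
/-- The theorem for multigraphs: `E` is a finite set of edges, and `ends` assigns to each of them an
edge of the bipartite graph `G`; edges with the same value of `ends` are parallel. -/
theorem stmt_18_general {V ε C : Type*} [DecidableEq V] [Nonempty C] {G : SimpleGraph V}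
    (hG : G.Colorable 2) {E : Finset ε} {ends : ε → Sym2 V} (hends : ∀ e ∈ E, ends e ∈ G.edgeSet)
    {L : ε → Finset C} (hL : ∀ e ∈ E, ∀ v ∈ ends e, #{f ∈ E | v ∈ ends f} ≤ #(L e)) :
    ∃ γ : ε → C, (∀ e ∈ E, γ e ∈ L e) ∧
      ∀ e ∈ E, ∀ f ∈ E, e ≠ f → (∃ v, v ∈ ends e ∧ v ∈ ends f) → γ e ≠ γ f := by
  classical
  obtain ⟨x, y, hx, hy, hshare⟩ := exists_ends_of_colorable_two hG
  have hdeg {z : Sym2 V → V} (hz : ∀ e, z e ∈ e) (e) (he : e ∈ E) :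
      #(edgesAt (z ∘ ends) E (z (ends e))) ≤ #(L e) :=
    (card_le_card (monotone_filter_right _ fun f _ hf => hf ▸ hz (ends f))).trans (hL e he _ (hz _))
  obtain ⟨γ, hγ⟩ := exists_isListColouring (x ∘ ends) (y ∘ ends)
    fun e he => max_le (hdeg hx e he) (hdeg hy e he)
  refine ⟨γ, hγ.mem, fun e he f hf hne ⟨v, hve, hvf⟩ h => hne ?_⟩
  exact (hshare _ (hends e he) _ (hends f hf) v hve hvf).elim
    (hγ.left he hf · h) (hγ.right he hf · h)

theorem stmt_18 :
    ∀ (V : Type) [Fintype V] [DecidableEq V]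
      (G : SimpleGraph V) [DecidableRel G.Adj] (L : Sym2 V → Finset ℕ),
      -- G is bipartite
      G.Colorable 2 →
      (∀ u v : V, G.Adj u v →
        max (G.degree u) (G.degree v) ≤ (L s(u, v)).card) →
      ∃ γ : Sym2 V → ℕ, IsLEdgeColouring G L γ := by
  intro V _ _ G _ L hG hL
  have hdeg : ∀ e ∈ G.edgeFinset, ∀ v ∈ e, #{f ∈ G.edgeFinset | v ∈ f} ≤ #(L e) := by
    rintro _ he v ⟨w, rfl⟩
    rw [← G.incidenceFinset_eq_filter, G.card_incidenceFinset_eq_degree]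
    exact le_of_max_le_left (hL v w (G.mem_edgeFinset.1 he))
  simpa [IsLEdgeColouring] using
    stmt_18_general hG (ends := id) (fun e he => G.mem_edgeFinset.1 he) hdeg
end

section
/- If G is a finite simple graph and L is a list assignment of E(G) such that |L(e)| ≥ max{deg(u), deg(v)} + ⌊min{deg(u), deg(v)}/2⌋ for every edge e = uv, then G is L-edge-colourable. -/
/-!
Choose a cut with as few monochromatic edges as possible. Moving one vertex to the other side does
not help, so at every vertex at most half of the edges are monochromatic, and the monochromatic
edges can be coloured greedily. An edge `uv` of the cut then retains at least as many colours as
the larger of the degrees of `u` and `v` in the cut, which is a bipartite multigraph, and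
Borodin, Kostochka and Woodall proved that this is enough.

For a bipartite multigraph, rank the edges and orient its line graph towards the higher rank on
one side and the lower rank on the other. Every induced subdigraph has a kernel (a stable
matching), so lists longer than the out-degrees suffice. A ranking whose out-degrees are small
enough is built by peeling off matchings: Hall's theorem, applied to the edges joining two vertices
of maximum degree, yields one that can be put at the bottom of the ranking, or at its top.
-/

section DegreeOn

open Finset

variable {ι κ κ₁ κ₂ : Type*} {r : κ → ι → Prop} {r₁ : κ₁ → ι → Prop} {r₂ : κ₂ → ι → Prop}
  {S T T₁ T₂ : Finset ι} {k : κ} {k₁ : κ₁} {k₂ : κ₂}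

open scoped Classical in
/-- The number of elements of `S` related to `k`. This covers out-degrees in induced subdigraphs
(`κ = ι`) and degrees of vertices in multigraphs (`r` the incidence relation). -/
noncomputable def degreeOn (r : κ → ι → Prop) (S : Finset ι) (k : κ) : ℕ :=
  #{x ∈ S | r k x}

theorem degreeOn_pos_iff : 0 < degreeOn r S k ↔ ∃ x ∈ S, r k x := by
  simp only [degreeOn, card_pos, Finset.Nonempty, mem_filter]

theorem degreeOn_le_add (h : ∀ x ∈ S, r k x → (x ∈ T₁ ∧ r₁ k₁ x) ∨ (x ∈ T₂ ∧ r₂ k₂ x)) :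
    degreeOn r S k ≤ degreeOn r₁ T₁ k₁ + degreeOn r₂ T₂ k₂ := by
  classical
  refine (card_le_card fun x hx ↦ ?_).trans (card_union_le _ _)
  simpa only [mem_union, mem_filter] using h x (mem_filter.mp hx).1 (mem_filter.mp hx).2

theorem degreeOn_le_degreeOn (h : ∀ x ∈ S, r k x → x ∈ T ∧ r₁ k₁ x) :
    degreeOn r S k ≤ degreeOn r₁ T k₁ := by
  classical
  exact card_le_card fun x hx ↦ mem_filter.mpr (h x (mem_filter.mp hx).1 (mem_filter.mp hx).2)

theorem degreeOn_mono (hST : S ⊆ T) : degreeOn r S k ≤ degreeOn r T k :=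
  degreeOn_le_degreeOn fun _ hx hkx ↦ ⟨hST hx, hkx⟩

theorem degreeOn_lt_degreeOn (h : ∀ x ∈ S, r k x → x ∈ T ∧ r₁ k₁ x)
    (hlt : ∃ x ∈ T, r₁ k₁ x ∧ (x ∈ S → ¬r k x)) : degreeOn r S k < degreeOn r₁ T k₁ := by
  classical
  obtain ⟨x, hxT, hx, hxS⟩ := hlt
  refine card_lt_card ((ssubset_iff_of_subset fun y hy ↦ ?_).mpr ⟨x, ?_, ?_⟩)
  · exact mem_filter.mpr (h y (mem_filter.mp hy).1 (mem_filter.mp hy).2)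
  · exact mem_filter.mpr ⟨hxT, hx⟩
  · exact fun hx ↦ hxS (mem_filter.mp hx).1 (mem_filter.mp hx).2

theorem degreeOn_sdiff_add_degreeOn [DecidableEq ι] (hST : S ⊆ T) :
    degreeOn r (T \ S) k + degreeOn r S k = degreeOn r T k := by
  classical
  rw [degreeOn, degreeOn, ← card_union_of_disjoint (disjoint_filter_filter sdiff_disjoint),
    ← filter_union, sdiff_union_of_subset hST, degreeOn]

end DegreeOn

section ListColouring

open Finset

variable {ι C : Type*} {H : SimpleGraph ι} {S T : Finset ι} {L : ι → Finset C} {γ δ : ι → C}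

/-- `γ` colours the vertices of `H` lying in `S` properly and from the lists `L`. -/
structure IsListColouring (H : SimpleGraph ι) (S : Finset ι) (L : ι → Finset C) (γ : ι → C) :
    Prop where
  mem_list : ∀ e ∈ S, γ e ∈ L e
  ne_of_adj : ∀ e ∈ S, ∀ f ∈ S, H.Adj e f → γ e ≠ γ f

theorem IsListColouring.piecewise [DecidableEq ι] (hγ : IsListColouring H S L γ)
    (hδ : IsListColouring H T L δ) (hne : ∀ e ∈ S, ∀ f ∈ T, H.Adj e f → γ e ≠ δ f) :
    IsListColouring H (S ∪ T) L (S.piecewise γ δ) := by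
  have hT {e : ι} (he : e ∈ S ∪ T) (heS : e ∉ S) : e ∈ T := (mem_union.mp he).resolve_left heS
  refine ⟨fun e he ↦ ?_, fun e he f hf hef ↦ ?_⟩
  · by_cases heS : e ∈ S
    · simpa only [piecewise_eq_of_mem _ _ _ heS] using hγ.mem_list e heS
    · simpa only [piecewise_eq_of_notMem _ _ _ heS] using hδ.mem_list e (hT he heS)
  · by_cases heS : e ∈ S <;> by_cases hfS : f ∈ S <;>
      simp only [Finset.piecewise, heS, hfS, if_true, if_false]
    · exact hγ.ne_of_adj e heS f hfS hef
    · exact hne e heS f (hT hf hfS) hef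
    · exact (hne f hfS e (hT he heS) hef.symm).symm
    · exact hδ.ne_of_adj e (hT he heS) f (hT hf hfS) hef

open scoped Classical in
/-- The colours of `L e` still available at `e` once `S` has been coloured by `γ`. -/
noncomputable def residualList (H : SimpleGraph ι) (S : Finset ι) (γ : ι → C) (L : ι → Finset C)
    (e : ι) : Finset C :=
  L e \ image γ {f ∈ S | H.Adj e f}

theorem card_list_le_card_residualList_add_degreeOn (e : ι) :
    #(L e) ≤ #(residualList H S γ L e) + degreeOn H.Adj S e := by
  classical
  have hsdiff := le_card_sdiff (image γ {f ∈ S | H.Adj e f}) (L e)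
  have himage := card_image_le (s := {f ∈ S | H.Adj e f}) (f := γ)
  unfold residualList degreeOn
  omega

theorem IsListColouring.exists_union [DecidableEq ι] (hγ : IsListColouring H S L γ)
    (hδ : IsListColouring H T (residualList H S γ L) δ) :
    ∃ γ', IsListColouring H (S ∪ T) L γ' := by
  classical
  have hδL (e : ι) (he : e ∈ T) : δ e ∈ L e ∧ δ e ∉ image γ {f ∈ S | H.Adj e f} := by
    simpa only [residualList, mem_sdiff] using hδ.mem_list e he
  refine ⟨_, hγ.piecewise ⟨fun e he ↦ (hδL e he).1, hδ.ne_of_adj⟩ fun e he f hf hef heq ↦ ?_⟩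
  exact (hδL f hf).2 (mem_image.mpr ⟨e, mem_filter.mpr ⟨he, hef.symm⟩, heq⟩)

theorem exists_isListColouring_of_degreeOn_lt [Nonempty C]
    (hL : ∀ e ∈ S, degreeOn H.Adj S e < #(L e)) : ∃ γ, IsListColouring H S L γ := by
  classical
  induction S using Finset.induction_on with
  | empty => exact ⟨fun _ ↦ Classical.arbitrary C, by simp, by simp⟩
  | insert a S _ ih =>
    obtain ⟨γ, hγ⟩ := ih fun e he ↦
      (degreeOn_mono (subset_insert a S)).trans_lt (hL e (mem_insert_of_mem he))
    have hcard : 0 < #(residualList H S γ L a) := by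
      have h₁ := card_list_le_card_residualList_add_degreeOn (H := H) (S := S) (L := L) (γ := γ) a
      have h₂ := hL a (mem_insert_self a S)
      have h₃ : degreeOn H.Adj S a ≤ degreeOn H.Adj (insert a S) a :=
        degreeOn_mono (subset_insert a S)
      omega
    obtain ⟨k, hk⟩ := card_pos.mp hcard
    have hka : IsListColouring H {a} (residualList H S γ L) fun _ ↦ k :=
      ⟨by simpa using hk, by simp⟩
    rw [insert_eq, union_comm]
    exact hγ.exists_union hka

end ListColouring

section Kernel

open Finset

variable {ι C : Type*} {H : SimpleGraph ι} {D : ι → ι → Prop} {S K : Finset ι}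

/-- A kernel of the digraph `D` induced on `S`: an independent set `K` such that every element of
`S` outside `K` has an out-neighbour in `K`. -/
structure IsDigraphKernel (D : ι → ι → Prop) (S K : Finset ι) : Prop where
  subset : K ⊆ S
  independent : ∀ e ∈ K, ∀ f ∈ K, ¬D e f
  absorbing : ∀ e ∈ S, e ∉ K → ∃ f ∈ K, D e f

theorem IsDigraphKernel.nonempty (hK : IsDigraphKernel D S K) (hS : S.Nonempty) :
    K.Nonempty := by
  obtain ⟨e, he⟩ := hS
  by_cases heK : e ∈ K
  · exact ⟨e, heK⟩
  · obtain ⟨f, hf, -⟩ := hK.absorbing e he heK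
    exact ⟨f, hf⟩

theorem IsDigraphKernel.degreeOn_sdiff_lt_card_erase [DecidableEq ι] [DecidableEq C]
    {L : ι → Finset C} {k : C} (hK : IsDigraphKernel D {e ∈ S | k ∈ L e} K)
    (hL : ∀ e ∈ S, degreeOn D S e < #(L e)) {e : ι} (he : e ∈ S \ K) :
    degreeOn D (S \ K) e < #((L e).erase k) := by
  obtain ⟨heS, heK⟩ := mem_sdiff.mp he
  by_cases hke : k ∈ L e
  · obtain ⟨f, hfK, hef⟩ := hK.absorbing e (mem_filter.mpr ⟨heS, hke⟩) heK
    have hlt : degreeOn D (S \ K) e < degreeOn D S e :=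
      degreeOn_lt_degreeOn (fun x hx hxe ↦ ⟨(mem_sdiff.mp hx).1, hxe⟩)
        ⟨f, (mem_filter.mp (hK.subset hfK)).1, hef, fun h _ ↦ (mem_sdiff.mp h).2 hfK⟩
    rw [card_erase_of_mem hke]
    have := hL e heS
    omega
  · rw [erase_eq_of_notMem hke]
    exact (degreeOn_mono sdiff_subset).trans_lt (hL e heS)

-- A kernel of the vertices whose list contains a given colour can receive that colour: every
-- other vertex whose list shrinks also loses an out-neighbour.
theorem exists_isListColouring_of_kernels [Nonempty C] {L : ι → Finset C}
    (hHD : ∀ e ∈ S, ∀ f ∈ S, H.Adj e f → D e f ∨ D f e)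
    (hD : ∀ T ⊆ S, ∃ K, IsDigraphKernel D T K)
    (hL : ∀ e ∈ S, degreeOn D S e < #(L e)) : ∃ γ, IsListColouring H S L γ := by
  classical
  induction S using Finset.strongInduction generalizing L with
  | H S ih =>
    rcases S.eq_empty_or_nonempty with rfl | ⟨e₀, he₀⟩
    · exact ⟨fun _ ↦ Classical.arbitrary C, by simp, by simp⟩
    obtain ⟨k, hk⟩ := card_pos.mp ((Nat.zero_le _).trans_lt (hL e₀ he₀))
    obtain ⟨K, hK⟩ := hD {e ∈ S | k ∈ L e} (filter_subset _ _)
    have hKS : K ⊆ S := hK.subset.trans (filter_subset _ _)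
    have hKne : K.Nonempty := hK.nonempty ⟨e₀, mem_filter.mpr ⟨he₀, hk⟩⟩
    obtain ⟨γ, hγ⟩ := ih (S \ K) (sdiff_ssubset hKS hKne)
      (fun e he f hf ↦ hHD e (mem_sdiff.mp he).1 f (mem_sdiff.mp hf).1)
      (fun T hT ↦ hD T (hT.trans sdiff_subset))
      (fun e he ↦ hK.degreeOn_sdiff_lt_card_erase hL he)
    have hKk : IsListColouring H K L fun _ ↦ k :=
      ⟨fun e he ↦ (mem_filter.mp (hK.subset he)).2, fun e he f hf hef ↦
        ((hHD e (hKS he) f (hKS hf) hef).elim (hK.independent e he f hf)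
          (hK.independent f hf e he)).elim⟩
    have hγL : IsListColouring H (S \ K) L γ :=
      ⟨fun e he ↦ mem_of_mem_erase (hγ.mem_list e he), hγ.ne_of_adj⟩
    rw [← union_sdiff_of_subset hKS]
    exact ⟨_, hKk.piecewise hγL fun e _ f hf _ ↦ (ne_of_mem_erase (hγ.mem_list f hf)).symm⟩

end Kernel

section Hall

open Finset

variable {α β : Type*} [Nonempty β] [DecidableEq β] {X : Finset α} {t : α → Finset β}

theorem exists_injOn_of_card_le_card_biUnion (h : ∀ S ⊆ X, #S ≤ #(S.biUnion t)) :
    ∃ f : α → β, Set.InjOn f X ∧ ∀ a ∈ X, f a ∈ t a := by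
  classical
  obtain ⟨f, hf, hft⟩ := (all_card_le_biUnion_card_iff_exists_injective fun a : X ↦ t a).mp
    fun S ↦ by
      simpa only [map_eq_image, image_biUnion, Function.Embedding.subtype_apply,
        Function.Embedding.coe_subtype, card_image_of_injective _ Subtype.val_injective] using
        h (S.map (.subtype _)) fun a ha ↦ property_of_mem_map_subtype S ha
  have hext (a : X) : Function.extend Subtype.val f (fun _ ↦ Classical.arbitrary β) a = f a :=
    Subtype.val_injective.extend_apply _ _ a
  refine ⟨Function.extend Subtype.val f fun _ ↦ Classical.arbitrary β, ?_, fun a ha ↦ ?_⟩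
  · rw [Set.injOn_iff_injective]
    exact fun a b hab ↦ hf (by simpa only [Set.domRestrict_apply, ← hext] using hab)
  · exact (hext ⟨a, ha⟩).symm ▸ hft ⟨a, ha⟩

-- Removing one element from a minimal violator of Hall's condition leaves the set `Y`.
theorem exists_injOn_or_subset_image (ht : ∀ a ∈ X, (t a).Nonempty) :
    (∃ f : α → β, Set.InjOn f X ∧ ∀ a ∈ X, f a ∈ t a) ∨
      ∃ Y ⊆ X, Y.Nonempty ∧
        ∃ f : α → β, Set.InjOn f Y ∧ (∀ a ∈ Y, f a ∈ t a) ∧ ∀ a ∈ Y, t a ⊆ Y.image f := by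
  classical
  refine or_iff_not_imp_left.mpr fun hX ↦ ?_
  have hviolated : ∃ A ⊆ X, #(A.biUnion t) < #A := by
    by_contra! h
    exact hX (exists_injOn_of_card_le_card_biUnion h)
  obtain ⟨A, ⟨hAX, hA⟩, hmin⟩ := exists_minimal_of_wellFoundedLT _ hviolated
  obtain ⟨a, ha⟩ := card_pos.mp ((Nat.zero_le _).trans_lt hA)
  have hcard : #(A.erase a) + 1 = #A := card_erase_add_one ha
  obtain ⟨f, hf, hft⟩ := exists_injOn_of_card_le_card_biUnion (X := A.erase a) (t := t)
    fun S hS ↦ by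
      by_contra! hlt
      exact notMem_erase a A (hS (hmin ⟨hS.trans ((erase_subset a A).trans hAX), hlt⟩
        (hS.trans (erase_subset a A)) ha))
  have himage : (A.erase a).image f = A.biUnion t := by
    refine eq_of_subset_of_card_le (image_subset_iff.mpr fun b hb ↦ ?_) ?_
    · exact mem_biUnion.mpr ⟨b, mem_of_mem_erase hb, hft b hb⟩
    · rw [card_image_of_injOn hf]
      omega
  have hsub (b : α) (hb : b ∈ A) : t b ⊆ (A.erase a).image f :=
    himage ▸ subset_biUnion_of_mem t hb
  exact ⟨A.erase a, (erase_subset a A).trans hAX,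
    image_nonempty.mp ((ht a (hAX ha)).mono (hsub a ha)), f, hf, hft,
    fun b hb ↦ hsub b (mem_of_mem_erase hb)⟩

end Hall

section Bipartite

open Finset

variable {ι α β : Type*} {p : ι → α} {q : ι → β} {E M : Finset ι} {e : ι}

/-- The line graph of the bipartite multigraph whose edge `e : ι` joins `p e : α` to `q e : β`. -/
def bipartiteLineGraph (p : ι → α) (q : ι → β) : SimpleGraph ι where
  Adj e f := e ≠ f ∧ (p e = p f ∨ q e = q f)
  symm := ⟨fun _ _ h ↦ ⟨h.1.symm, h.2.imp Eq.symm Eq.symm⟩⟩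
  loopless := ⟨fun _ h ↦ h.1 rfl⟩

/-- The number of edges of `E` whose end under `p` is `u`: the degree of `u` in `E`, when `p` sends
each edge of a bipartite multigraph to its end on a fixed side. -/
noncomputable def endDegree (p : ι → α) (E : Finset ι) (u : α) : ℕ :=
  degreeOn (fun v e ↦ p e = v) E u

/-- `f` dominates `e` with respect to the ranking `c`: the two share their `p`-end and `f` is ranked
higher, or they share their `q`-end and `f` is ranked lower. Thus the two sides have opposite
preferences, as in the stable matching problem. -/
def DominatedBy {R : Type*} [LT R] (p : ι → α) (q : ι → β) (c : ι → R) (e f : ι) : Prop :=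
  (p e = p f ∧ c e < c f) ∨ (q e = q f ∧ c f < c e)

-- If the edges ranked highest at their `p`-ends are not independent, one of them is dominated at
-- its `q`-end by another. Anything dominating the latter dominates the former, so the former may
-- be deleted.
theorem exists_isDigraphKernel_dominatedBy {R : Type*} [LinearOrder R] (p : ι → α) (q : ι → β)
    (c : ι → R) (E : Finset ι) : ∃ K, IsDigraphKernel (DominatedBy p q c) E K := by
  classical
  induction E using Finset.strongInduction with
  | H E ih =>
    set F : Finset ι := {e ∈ E | ∀ f ∈ E, p f = p e → c f ≤ c e}
    have hFmax {e f : ι} (he : e ∈ F) (hf : f ∈ E) (hpf : p f = p e) : c f ≤ c e :=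
      (mem_filter.mp he).2 f hf hpf
    have hFE : F ⊆ E := filter_subset _ _
    by_cases hind : ∀ e ∈ F, ∀ f ∈ F, ¬DominatedBy p q c e f
    · refine ⟨F, hFE, hind, fun e he heF ↦ ?_⟩
      obtain ⟨f, hf, hfmax⟩ :=
        exists_max_image {f ∈ E | p f = p e} c ⟨e, mem_filter.mpr ⟨he, rfl⟩⟩
      obtain ⟨hfE, hpf⟩ := mem_filter.mp hf
      have hfF : f ∈ F := mem_filter.mpr
        ⟨hfE, fun g hg hpg ↦ hfmax g (mem_filter.mpr ⟨hg, hpg.trans hpf⟩)⟩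
      have hlt : c e < c f := by
        by_contra! hfe
        exact heF (mem_filter.mpr
          ⟨he, fun g hg hpg ↦ (hfmax g (mem_filter.mpr ⟨hg, hpg⟩)).trans hfe⟩)
      exact ⟨f, hfF, .inl ⟨hpf.symm, hlt⟩⟩
    · push Not at hind
      obtain ⟨e, he, f, hf, hef⟩ := hind
      obtain ⟨hq, hfe⟩ : q e = q f ∧ c f < c e :=
        hef.resolve_left fun h ↦ (hFmax he (hFE hf) h.1.symm).not_gt h.2
      obtain ⟨K, hK⟩ := ih (E.erase e) (erase_ssubset (hFE he))
      refine ⟨K, hK.subset.trans (erase_subset _ _), hK.independent, fun g hg hgK ↦ ?_⟩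
      rcases eq_or_ne g e with rfl | hge
      · by_cases hfK : f ∈ K
        · exact ⟨f, hfK, hef⟩
        obtain ⟨x, hxK, hx⟩ := hK.absorbing f
          (mem_erase.mpr ⟨fun h ↦ hfe.ne (congrArg c h), hFE hf⟩) hfK
        obtain ⟨hqx, hxf⟩ : q f = q x ∧ c x < c f := hx.resolve_left fun h ↦
          (hFmax hf (mem_of_mem_erase (hK.subset hxK)) h.1.symm).not_gt h.2
        exact ⟨x, hxK, .inr ⟨hq.trans hqx, hxf.trans hfe⟩⟩
      · exact hK.absorbing g (mem_erase.mpr ⟨hge, hg⟩) hgK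

/-- A ranking witnessing, through the kernel method, that the bipartite multigraph `E` can be
edge-coloured from lists as long as the maximum degree of the ends of each edge. -/
structure IsGalvinRanking (p : ι → α) (q : ι → β) (E : Finset ι) (c : ι → ℤ) : Prop where
  ne_of_adj : ∀ e ∈ E, ∀ f ∈ E, (bipartiteLineGraph p q).Adj e f → c e ≠ c f
  degreeOn_lt : ∀ e ∈ E, degreeOn (DominatedBy p q c) E e <
    max (endDegree p E (p e)) (endDegree q E (q e))

theorem IsGalvinRanking.neg_swap {c : ι → ℤ} (hc : IsGalvinRanking p q E c) :
    IsGalvinRanking q p E (-c) where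
  ne_of_adj e he f hf hef := by
    simpa using hc.ne_of_adj e he f hf ⟨hef.1, hef.2.symm⟩
  degreeOn_lt e he := by
    have hdom : DominatedBy q p (-c) = DominatedBy p q c := by
      funext e f
      simp only [DominatedBy, Pi.neg_apply, neg_lt_neg_iff, or_comm]
    rw [hdom, max_comm]
    exact hc.degreeOn_lt e he

theorem endDegree_pos_iff {u : α} : 0 < endDegree p E u ↔ ∃ e ∈ E, p e = u :=
  degreeOn_pos_iff

theorem endDegree_le_one (hp : Set.InjOn p M) (u : α) : endDegree p M u ≤ 1 := by
  classical
  refine card_le_one.mpr fun e he f hf ↦ ?_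
  rw [mem_filter] at he hf
  exact hp he.1 hf.1 (he.2.trans hf.2.symm)

/-- A nonempty matching of `E` such that every edge of `E` meeting it at the `q`-end only has its
`q`-end of larger degree. Such a matching can be placed at the bottom of a Galvin ranking. -/
structure IsBottomMatching (p : ι → α) (q : ι → β) (E M : Finset ι) : Prop where
  subset : M ⊆ E
  nonempty : M.Nonempty
  injOn_fst : Set.InjOn p M
  injOn_snd : Set.InjOn q M
  endDegree_lt : ∀ e ∈ E, (∃ m ∈ M, q m = q e) → (¬∃ m ∈ M, p m = p e) →
    endDegree p E (p e) < endDegree q E (q e)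

theorem degreeOn_dominatedBy_lt_endDegree {R : Type*} [Preorder R] {c : ι → R} (he : e ∈ E)
    (hmin : ∀ f ∈ E, c e ≤ c f) :
    degreeOn (DominatedBy p q c) E e < endDegree p E (p e) :=
  degreeOn_lt_degreeOn
    (fun f hf hef ↦ ⟨hf, (hef.resolve_right fun h ↦ (hmin f hf).not_gt h.2).1.symm⟩)
    ⟨e, he, rfl, fun _ h ↦ h.elim (fun h ↦ lt_irrefl _ h.2) fun h ↦ lt_irrefl _ h.2⟩

theorem degreeOn_dominatedBy_piecewise_le [DecidableEq ι] {R : Type*} [Preorder R]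
    {c : ι → R} {b : R} (hb : ∀ f ∈ E, b < c f) (he : e ∈ E \ M) :
    degreeOn (DominatedBy p q (M.piecewise (fun _ ↦ b) c)) E e ≤
      degreeOn (DominatedBy p q c) (E \ M) e + endDegree q M (q e) := by
  obtain ⟨heE, heM⟩ := mem_sdiff.mp he
  refine degreeOn_le_add fun f hf hef ↦ ?_
  by_cases hfM : f ∈ M
  · simp only [DominatedBy, Finset.piecewise, heM, hfM, if_true, if_false] at hef
    exact .inr ⟨hfM, (hef.resolve_left fun h ↦ (hb e heE).not_gt h.2).1.symm⟩
  · simp only [DominatedBy, Finset.piecewise, heM, hfM, if_false] at hef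
    exact .inl ⟨mem_sdiff.mpr ⟨hf, hfM⟩, hef⟩

theorem IsBottomMatching.degreeOn_add_lt [DecidableEq ι] {n : ℕ} (hM : IsBottomMatching p q E M)
    (he : e ∈ E) (hn : n < max (endDegree p (E \ M) (p e)) (endDegree q (E \ M) (q e))) :
    n + endDegree q M (q e) < max (endDegree p E (p e)) (endDegree q E (q e)) := by
  have hp : endDegree p (E \ M) (p e) + endDegree p M (p e) = endDegree p E (p e) :=
    degreeOn_sdiff_add_degreeOn hM.subset
  have hq : endDegree q (E \ M) (q e) + endDegree q M (q e) = endDegree q E (q e) :=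
    degreeOn_sdiff_add_degreeOn hM.subset
  have hone : endDegree q M (q e) ≤ 1 := endDegree_le_one hM.injOn_snd _
  have hlt := hM.endDegree_lt e he
  rw [← endDegree_pos_iff, ← endDegree_pos_iff] at hlt
  omega

theorem IsBottomMatching.exists_isGalvinRanking [DecidableEq ι] {c : ι → ℤ}
    (hM : IsBottomMatching p q E M) (hc : IsGalvinRanking p q (E \ M) c) :
    ∃ c', IsGalvinRanking p q E c' := by
  obtain ⟨b, hb⟩ : ∃ b, ∀ e ∈ E, b < c e := by
    obtain ⟨b, hb⟩ := (E.image c).bddBelow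
    exact ⟨b - 1, fun e he ↦ (sub_one_lt b).trans_le (hb (mem_image_of_mem c he))⟩
  have hcM {e : ι} (he : e ∈ M) : M.piecewise (fun _ ↦ b) c e = b := piecewise_eq_of_mem _ _ _ he
  have hcE {e : ι} (he : e ∉ M) : M.piecewise (fun _ ↦ b) c e = c e :=
    piecewise_eq_of_notMem _ _ _ he
  refine ⟨M.piecewise (fun _ ↦ b) c, fun e he f hf hef ↦ ?_, fun e he ↦ ?_⟩
  · by_cases heM : e ∈ M <;> by_cases hfM : f ∈ M
    · exact (hef.2.elim (hef.1 <| hM.injOn_fst heM hfM ·) (hef.1 <| hM.injOn_snd heM hfM ·)).elim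
    · rw [hcM heM, hcE hfM]
      exact (hb f hf).ne
    · rw [hcE heM, hcM hfM]
      exact (hb e he).ne'
    · rw [hcE heM, hcE hfM]
      exact hc.ne_of_adj e (mem_sdiff.mpr ⟨he, heM⟩) f (mem_sdiff.mpr ⟨hf, hfM⟩) hef
  · by_cases heM : e ∈ M
    · refine (degreeOn_dominatedBy_lt_endDegree he fun f hf ↦ ?_).trans_le (le_max_left _ _)
      rw [hcM heM]
      by_cases hfM : f ∈ M
      · rw [hcM hfM]
      · rw [hcE hfM]
        exact (hb f hf).le
    · have heEM : e ∈ E \ M := mem_sdiff.mpr ⟨he, heM⟩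
      exact (degreeOn_dominatedBy_piecewise_le hb heEM).trans_lt
        (hM.degreeOn_add_lt he (hc.degreeOn_lt e heEM))

theorem exists_matching_of_injOn [DecidableEq α] {A : Finset α} {f : α → β} (hf : Set.InjOn f A)
    (hE : ∀ u ∈ A, ∃ e ∈ E, p e = u ∧ q e = f u) :
    ∃ M ⊆ E, Set.InjOn p M ∧ Set.InjOn q M ∧ M.image p = A ∧ ∀ e ∈ M, q e = f (p e) := by
  classical
  rcases A.eq_empty_or_nonempty with rfl | ⟨u₀, hu₀⟩
  · exact ⟨∅, by simp⟩
  have : Nonempty ι := (hE u₀ hu₀).nonempty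
  choose! g hgE hgp hgq using hE
  have hM {e : ι} (he : e ∈ A.image g) : p e ∈ A ∧ g (p e) = e := by
    obtain ⟨u, hu, rfl⟩ := mem_image.mp he
    rw [hgp u hu]
    exact ⟨hu, rfl⟩
  have hq {e : ι} (he : e ∈ A.image g) : q e = f (p e) := by
    rw [← hgq (p e) (hM he).1, (hM he).2]
  have hp : Set.InjOn p (A.image g) := fun e he e' he' h ↦ by
    rw [← (hM he).2, ← (hM he').2, h]
  refine ⟨A.image g, image_subset_iff.mpr hgE, hp, fun e he e' he' h ↦ hp he he' ?_, ?_,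
    fun e he ↦ hq he⟩
  · exact hf (hM he).1 (hM he').1 (by rw [← hq he, ← hq he', h])
  · rw [image_image]
    exact (image_congr hgp).trans image_id

theorem exists_matching_covering (hE : E.Nonempty) :
    ∃ M ⊆ E, M.Nonempty ∧ Set.InjOn p M ∧ Set.InjOn q M ∧
      ((∀ e ∈ E, ∃ m ∈ M, p m = p e) ∨
        ∀ e ∈ E, (∃ m ∈ M, p m = p e) → ∃ m ∈ M, q m = q e) := by
  classical
  let t (u : α) : Finset β := image q {e ∈ E | p e = u}
  have hmem_t {e : ι} (he : e ∈ E) : q e ∈ t (p e) := mem_image_of_mem q (mem_filter.mpr ⟨he, rfl⟩)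
  have hedge {u : α} {w : β} (hw : w ∈ t u) : ∃ e ∈ E, p e = u ∧ q e = w := by
    simpa only [t, mem_image, mem_filter, and_assoc] using hw
  have ht : ∀ u ∈ E.image p, (t u).Nonempty :=
    forall_mem_image.mpr fun e he ↦ ⟨q e, hmem_t he⟩
  have : Nonempty β := hE.nonempty.map q
  rcases exists_injOn_or_subset_image ht with ⟨f, hf, hft⟩ | ⟨Y, -, hY, f, hf, hft, htY⟩
  · obtain ⟨M, hME, hMp, hMq, hMX, -⟩ := exists_matching_of_injOn hf fun u hu ↦ hedge (hft u hu)
    refine ⟨M, hME, image_nonempty.mp (hMX ▸ hE.image p), hMp, hMq, .inl fun e he ↦ ?_⟩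
    exact mem_image.mp (hMX ▸ mem_image_of_mem p he)
  · obtain ⟨M, hME, hMp, hMq, hMY, hMf⟩ := exists_matching_of_injOn hf fun u hu ↦ hedge (hft u hu)
    refine ⟨M, hME, image_nonempty.mp (hMY ▸ hY), hMp, hMq, .inr ?_⟩
    rintro e he ⟨m, hm, hpm⟩
    have hpY : p e ∈ Y := hpm ▸ hMY ▸ mem_image_of_mem p hm
    obtain ⟨u, hu, hfu⟩ := mem_image.mp (htY _ hpY (hmem_t he))
    obtain ⟨n, hn, rfl⟩ := mem_image.mp (hMY ▸ hu)
    exact ⟨n, hn, (hMf n hn).trans hfu⟩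

-- The matching is taken among the edges both of whose ends have the maximum degree `D`. If there
-- are none, any single edge with one end of degree `D` will do.
theorem exists_isBottomMatching_of_forall_endDegree_le {D : ℕ}
    (hp : ∀ e ∈ E, endDegree p E (p e) ≤ D) (hq : ∀ e ∈ E, endDegree q E (q e) ≤ D)
    (hD : ∃ e ∈ E, endDegree p E (p e) = D) :
    ∃ M, IsBottomMatching p q E M ∨ IsBottomMatching q p E M := by
  classical
  set F : Finset ι := {e ∈ E | endDegree p E (p e) = D ∧ endDegree q E (q e) = D}
  have hmemF {e : ι} : e ∈ F ↔ e ∈ E ∧ endDegree p E (p e) = D ∧ endDegree q E (q e) = D :=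
    mem_filter
  have hFE : F ⊆ E := filter_subset _ _
  rcases F.eq_empty_or_nonempty with hF | hF
  · obtain ⟨e, he, heD⟩ := hD
    refine ⟨{e}, .inr ⟨by simpa using he, by simp, by simp, by simp, fun f hf hpf _ ↦ ?_⟩⟩
    have hpfD : endDegree p E (p f) = D := by
      obtain hpf : p e = p f := by simpa using hpf
      exact hpf ▸ heD
    have hqf : endDegree q E (q f) ≠ D := fun h ↦
      (eq_empty_iff_forall_notMem.mp hF) f (hmemF.mpr ⟨hf, hpfD, h⟩)
    exact hpfD ▸ (hq f hf).lt_of_ne hqf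
  obtain ⟨M, hMF, hM, hMp, hMq, hcov | hcov⟩ := exists_matching_covering (p := p) (q := q) hF
  · refine ⟨M, .inl ⟨hMF.trans hFE, hM, hMp, hMq, ?_⟩⟩
    rintro e he ⟨m, hm, hqm⟩ hpe
    have hqD : endDegree q E (q e) = D := hqm ▸ (hmemF.mp (hMF hm)).2.2
    exact hqD ▸ (hp e he).lt_of_ne fun hpD ↦ hpe (hcov e (hmemF.mpr ⟨he, hpD, hqD⟩))
  · refine ⟨M, .inr ⟨hMF.trans hFE, hM, hMq, hMp, ?_⟩⟩
    rintro e he ⟨m, hm, hpm⟩ hqe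
    have hpD : endDegree p E (p e) = D := hpm ▸ (hmemF.mp (hMF hm)).2.1
    exact hpD ▸ (hq e he).lt_of_ne fun hqD ↦
      hqe (hcov e (hmemF.mpr ⟨he, hpD, hqD⟩) ⟨m, hm, hpm⟩)

theorem exists_isBottomMatching (hE : E.Nonempty) :
    ∃ M, IsBottomMatching p q E M ∨ IsBottomMatching q p E M := by
  obtain ⟨e, he, hpmax⟩ := exists_max_image E (fun e ↦ endDegree p E (p e)) hE
  obtain ⟨f, hf, hqmax⟩ := exists_max_image E (fun e ↦ endDegree q E (q e)) hE
  rcases le_total (endDegree q E (q f)) (endDegree p E (p e)) with h | h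
  · exact exists_isBottomMatching_of_forall_endDegree_le hpmax
      (fun g hg ↦ (hqmax g hg).trans h) ⟨e, he, rfl⟩
  · obtain ⟨M, hM⟩ := exists_isBottomMatching_of_forall_endDegree_le hqmax
      (fun g hg ↦ (hpmax g hg).trans h) ⟨f, hf, rfl⟩
    exact ⟨M, hM.symm⟩

theorem exists_isGalvinRanking (p : ι → α) (q : ι → β) (E : Finset ι) :
    ∃ c, IsGalvinRanking p q E c := by
  classical
  induction E using Finset.strongInduction with
  | H E ih =>
    rcases E.eq_empty_or_nonempty with rfl | hE
    · exact ⟨0, by simp, by simp⟩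
    obtain ⟨M, hM | hM⟩ := exists_isBottomMatching (p := p) (q := q) hE <;>
      obtain ⟨c, hc⟩ := ih (E \ M) (sdiff_ssubset hM.subset hM.nonempty)
    · exact hM.exists_isGalvinRanking hc
    · obtain ⟨c', hc'⟩ := hM.exists_isGalvinRanking hc.neg_swap
      exact ⟨-c', hc'.neg_swap⟩

/-- The Borodin–Kostochka–Woodall strengthening of Galvin's theorem. -/
theorem exists_isListColouring_bipartiteLineGraph {C : Type*} [Nonempty C] {L : ι → Finset C}
    (hL : ∀ e ∈ E, max (endDegree p E (p e)) (endDegree q E (q e)) ≤ #(L e)) :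
    ∃ γ, IsListColouring (bipartiteLineGraph p q) E L γ := by
  obtain ⟨c, hc⟩ := exists_isGalvinRanking p q E
  refine exists_isListColouring_of_kernels (D := DominatedBy p q c) (fun e he f hf hef ↦ ?_)
    (fun T _ ↦ exists_isDigraphKernel_dominatedBy p q c T)
    (fun e he ↦ (hc.degreeOn_lt e he).trans_le (hL e he))
  rcases (hc.ne_of_adj e he f hf hef).lt_or_gt with hlt | hlt <;> rcases hef.2 with h | h
  · exact .inl (.inl ⟨h, hlt⟩)
  · exact .inr (.inr ⟨h.symm, hlt⟩)
  · exact .inr (.inl ⟨h.symm, hlt⟩)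
  · exact .inl (.inr ⟨h, hlt⟩)

end Bipartite

section Multigraph

open Finset

variable {ι V : Type*} {ends : ι → Sym2 V} {E B R : Finset ι} {e : ι} {u v : V}

/-- The line graph of the multigraph on `V` whose edge `e : ι` has the ends `ends e`. -/
def multigraphLineGraph (ends : ι → Sym2 V) : SimpleGraph ι where
  Adj e f := e ≠ f ∧ ∃ v, v ∈ ends e ∧ v ∈ ends f
  symm := ⟨fun _ _ ⟨hne, v, he, hf⟩ ↦ ⟨hne.symm, v, hf, he⟩⟩
  loopless := ⟨fun _ h ↦ h.1 rfl⟩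

/-- The degree of the vertex `v` in the multigraph with edge set `E`; a loop at `v` counts once. -/
noncomputable def vertexDegree (ends : ι → Sym2 V) (E : Finset ι) (v : V) : ℕ :=
  degreeOn (fun v e ↦ v ∈ ends e) E v

theorem degreeOn_multigraphLineGraph_le (he : ends e = s(u, v)) :
    degreeOn (multigraphLineGraph ends).Adj E e ≤
      vertexDegree ends E u + vertexDegree ends E v := by
  refine degreeOn_le_add fun f hf ⟨_, w, hwe, hwf⟩ ↦ ?_
  rcases Sym2.mem_iff.mp (he ▸ hwe) with rfl | rfl
  · exact .inl ⟨hf, hwf⟩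
  · exact .inr ⟨hf, hwf⟩

theorem exists_ends_of_not_isDiag_map {s : V → Bool} {x : Sym2 V} (hx : ¬(x.map s).IsDiag) :
    ∃ u v, x = s(u, v) ∧ s u = true ∧ s v = false := by
  induction x with | _ u v
  rw [Sym2.map_mk, Sym2.mk_isDiag_iff] at hx
  cases hu : s u
  · exact ⟨v, u, Sym2.eq_swap, by simpa [hu] using hx, hu⟩
  · exact ⟨u, v, rfl, hu, by simpa [hu] using hx⟩

theorem sym2Map_update_of_notMem [DecidableEq V] {s : V → Bool} {b : Bool} {x : Sym2 V}
    (hv : v ∉ x) : x.map (Function.update s v b) = x.map s :=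
  Sym2.map_congr fun _ hw ↦ Function.update_of_ne (ne_of_mem_of_not_mem hw hv) b s

theorem isDiag_map_update_not_iff [DecidableEq V] {s : V → Bool} {x : Sym2 V} (hx : ¬x.IsDiag)
    (hv : v ∈ x) : (x.map (Function.update s v !s v)).IsDiag ↔ ¬(x.map s).IsDiag := by
  obtain ⟨w, rfl⟩ := hv
  rw [Sym2.mk_isDiag_iff] at hx
  simp only [Sym2.map_mk, Sym2.mk_isDiag_iff, Function.update_self,
    Function.update_of_ne (Ne.symm hx)]
  exact Bool.not_eq

open scoped Classical in
/-- The edges of `E` with both ends on the same side of the cut `s`. -/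
noncomputable def monochromaticEdges (ends : ι → Sym2 V) (E : Finset ι) (s : V → Bool) :
    Finset ι :=
  {e ∈ E | ((ends e).map s).IsDiag}

theorem vertexDegree_monochromaticEdges_add_update [DecidableEq V]
    (hE : ∀ e ∈ E, ¬(ends e).IsDiag) (s : V → Bool) (v : V) :
    vertexDegree ends (monochromaticEdges ends E s) v +
      vertexDegree ends (monochromaticEdges ends E (Function.update s v !s v)) v =
        vertexDegree ends E v := by
  classical
  have htoggle : {e ∈ E | ((ends e).map (Function.update s v !s v)).IsDiag ∧ v ∈ ends e} =
      {e ∈ E | ¬((ends e).map s).IsDiag ∧ v ∈ ends e} :=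
    filter_congr fun e he ↦ and_congr_left (isDiag_map_update_not_iff (hE e he))
  simp only [vertexDegree, degreeOn, monochromaticEdges, filter_filter, htoggle]
  simp only [and_comm (b := v ∈ ends _), ← filter_filter]
  exact card_filter_add_card_filter_not _

theorem card_monochromaticEdges_add_vertexDegree_update [DecidableEq V] (s : V → Bool) (v : V) :
    #(monochromaticEdges ends E s) +
        vertexDegree ends (monochromaticEdges ends E (Function.update s v !s v)) v =
      #(monochromaticEdges ends E (Function.update s v !s v)) +
        vertexDegree ends (monochromaticEdges ends E s) v := by
  classical
  have havoid : {e ∈ monochromaticEdges ends E (Function.update s v !s v) | v ∉ ends e} =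
      {e ∈ monochromaticEdges ends E s | v ∉ ends e} := by
    simp only [monochromaticEdges, filter_filter]
    exact filter_congr fun e _ ↦ and_congr_left fun hv ↦ by rw [sym2Map_update_of_notMem hv]
  have h₁ := card_filter_add_card_filter_not (s := monochromaticEdges ends E s) (v ∈ ends ·)
  have h₂ := card_filter_add_card_filter_not
    (s := monochromaticEdges ends E (Function.update s v !s v)) (v ∈ ends ·)
  rw [havoid] at h₂
  simp only [vertexDegree, degreeOn]
  omega

theorem exists_two_mul_vertexDegree_monochromaticEdges_le (hE : ∀ e ∈ E, ¬(ends e).IsDiag) :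
    ∃ s : V → Bool, ∀ v,
      2 * vertexDegree ends (monochromaticEdges ends E s) v ≤ vertexDegree ends E v := by
  classical
  let s := Function.argmin fun s : V → Bool ↦ #(monochromaticEdges ends E s)
  refine ⟨s, fun v ↦ ?_⟩
  have hmin : #(monochromaticEdges ends E s) ≤
      #(monochromaticEdges ends E (Function.update s v !s v)) :=
    Function.argmin_le (fun s ↦ #(monochromaticEdges ends E s)) _
  have hadd := vertexDegree_monochromaticEdges_add_update hE s v
  have hcard := card_monochromaticEdges_add_vertexDegree_update (ends := ends) (E := E) s v
  omega

theorem exists_isListColouring_of_cut {C : Type*} [Nonempty C] {L : ι → Finset C} (s : V → Bool)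
    (hs : ∀ e ∈ E, ¬((ends e).map s).IsDiag)
    (hL : ∀ e ∈ E, ∀ u v, ends e = s(u, v) →
      max (vertexDegree ends E u) (vertexDegree ends E v) ≤ #(L e)) :
    ∃ γ, IsListColouring (multigraphLineGraph ends) E L γ := by
  rcases E.eq_empty_or_nonempty with rfl | ⟨e₀, he₀⟩
  · exact ⟨fun _ ↦ Classical.arbitrary C, by simp, by simp⟩
  obtain ⟨v₀, -⟩ := exists_ends_of_not_isDiag_map (hs e₀ he₀)
  have : Nonempty V := ⟨v₀⟩
  choose! p q hends hp hq using fun e he ↦ exists_ends_of_not_isDiag_map (hs e he)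
  obtain ⟨γ, hγ⟩ := exists_isListColouring_bipartiteLineGraph (p := p) (q := q) (E := E) (L := L)
    fun e he ↦ (max_le_max
      (degreeOn_le_degreeOn fun f hf hpf ↦ ⟨hf, hends f hf ▸ hpf ▸ Sym2.mem_mk_left _ _⟩)
      (degreeOn_le_degreeOn fun f hf hqf ↦ ⟨hf, hends f hf ▸ hqf ▸ Sym2.mem_mk_right _ _⟩)).trans
      (hL e he _ _ (hends e he))
  refine ⟨γ, hγ.mem_list, fun e he f hf ⟨hne, v, hve, hvf⟩ ↦ hγ.ne_of_adj e he f hf ⟨hne, ?_⟩⟩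
  rw [hends e he, Sym2.mem_iff] at hve
  rw [hends f hf, Sym2.mem_iff] at hvf
  rcases hve with rfl | rfl <;> rcases hvf with h | h
  · exact .inl h
  · simpa [hp e he, hq f hf] using congrArg s h
  · simpa [hp f hf, hq e he] using congrArg s h
  · exact .inr h

end Multigraph

open Finset in
theorem stmt_19_general {ι V C : Type*} [Nonempty C] (ends : ι → Sym2 V) (E : Finset ι)
    (hE : ∀ e ∈ E, ¬(ends e).IsDiag) (L : ι → Finset C)
    (hL : ∀ e ∈ E, ∀ u v, ends e = s(u, v) →
      max (vertexDegree ends E u) (vertexDegree ends E v) +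
        min (vertexDegree ends E u) (vertexDegree ends E v) / 2 ≤ #(L e)) :
    ∃ γ, IsListColouring (multigraphLineGraph ends) E L γ := by
  classical
  obtain ⟨s, hs⟩ := exists_two_mul_vertexDegree_monochromaticEdges_le hE
  set R := monochromaticEdges ends E s
  have hRE : R ⊆ E := filter_subset _ _
  obtain ⟨γ, hγ⟩ : ∃ γ, IsListColouring (multigraphLineGraph ends) R L γ := by
    refine exists_isListColouring_of_degreeOn_lt fun e he ↦ ?_
    induction hends : ends e with | _ u v
    have hpos : 0 < vertexDegree ends E u :=
      degreeOn_pos_iff.mpr ⟨e, hRE he, hends ▸ Sym2.mem_mk_left u v⟩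
    have hdeg := degreeOn_multigraphLineGraph_le (E := R) hends
    have hcard := hL e (hRE he) u v hends
    have hu := hs u
    have hv := hs v
    omega
  obtain ⟨δ, hδ⟩ : ∃ δ, IsListColouring (multigraphLineGraph ends) (E \ R)
      (residualList (multigraphLineGraph ends) R γ L) δ := by
    refine exists_isListColouring_of_cut s (fun e he hmono ↦ ?_) fun e he u v hends ↦ ?_
    · exact (mem_sdiff.mp he).2 (mem_filter.mpr ⟨(mem_sdiff.mp he).1, hmono⟩)
    have hsplit (w : V) : vertexDegree ends (E \ R) w + vertexDegree ends R w =
        vertexDegree ends E w := degreeOn_sdiff_add_degreeOn hRE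
    have hdeg := degreeOn_multigraphLineGraph_le (E := R) hends
    have hcard := hL e (mem_sdiff.mp he).1 u v hends
    have hres := card_list_le_card_residualList_add_degreeOn
      (H := multigraphLineGraph ends) (S := R) (L := L) (γ := γ) e
    have hu := hs u
    have hv := hs v
    have hu' := hsplit u
    have hv' := hsplit v
    omega
  rw [← union_sdiff_of_subset hRE]
  exact hγ.exists_union hδ

theorem vertexDegree_edgeFinset {V : Type*} (G : SimpleGraph V) [Fintype G.edgeSet] (v : V)
    [Fintype (G.neighborSet v)] : vertexDegree id G.edgeFinset v = G.degree v := by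
  classical
  rw [← G.card_incidenceFinset_eq_degree, G.incidenceFinset_eq_filter, vertexDegree, degreeOn]
  congr

theorem IsListColouring.isLEdgeColouring {V : Type} {G : SimpleGraph V} [Fintype G.edgeSet]
    {L : Sym2 V → Finset ℕ} {γ : Sym2 V → ℕ}
    (hγ : IsListColouring (multigraphLineGraph id) G.edgeFinset L γ) : IsLEdgeColouring G L γ := by
  obtain ⟨hmem, hne⟩ := hγ
  simp only [SimpleGraph.mem_edgeFinset] at hmem hne
  exact ⟨hmem, fun e he f hf hef hv ↦ hne e he f hf ⟨hef, hv⟩⟩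

theorem stmt_19 :
    ∀ (V : Type) [Fintype V] [DecidableEq V]
      (G : SimpleGraph V) [DecidableRel G.Adj] (L : Sym2 V → Finset ℕ),
      (∀ u v : V, G.Adj u v →
        max (G.degree u) (G.degree v) + (min (G.degree u) (G.degree v)) / 2 ≤
          (L s(u, v)).card) →
      ∃ γ : Sym2 V → ℕ, IsLEdgeColouring G L γ := by
  intro V _ _ G _ L hL
  obtain ⟨γ, hγ⟩ := stmt_19_general id G.edgeFinset
    (fun _ he ↦ G.not_isDiag_of_mem_edgeFinset he) L fun e he u v huv ↦ by
      obtain rfl : e = s(u, v) := huv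
      simpa only [vertexDegree_edgeFinset] using hL u v (SimpleGraph.mem_edgeFinset.mp he)
  exact ⟨γ, hγ.isLEdgeColouring⟩
end
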